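/- arXiv:2209.14588 — 3 statements merged into one kernel-verified Lean document; each statement's English description precedes it below -/
import Mathlib

section
/- (Main theorem for even cycle lengths, sufficiency.) Let (m, n) be one of the pairs (4,6), (4,8), (4,12), (4,16), (6,12), (8,16), and let v be a positive integer with lcm(m, n) ∣ v. Then for all nonnegative integers r, s with r + s = v − 1, there exists a solution to HWP*(v; m^r, n^s). -/
/-- A solution to the directed Hamilton–Waterloo problem HWP*(v; m^r, n^s):
a family of `r + s` permutations of `Fin v`, the first `r` of which are
fixed-point-free with all cycles of length `m` (i.e. every point has minimal
period `m`), the last `s` fixed-point-free with all cycles of length `n`,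
such that for every ordered pair of distinct vertices `(x, y)` there is exactly
one index `i` with `σ i x = y`. -/
def HWPStarSolution (v m n r s : ℕ) : Prop :=
  ∃ σ : Fin (r + s) → Equiv.Perm (Fin v),
    (∀ i : Fin (r + s), (i : ℕ) < r → ∀ x : Fin v, Function.minimalPeriod ⇑(σ i) x = m) ∧
    (∀ i : Fin (r + s), r ≤ (i : ℕ) → ∀ x : Fin v, Function.minimalPeriod ⇑(σ i) x = n) ∧
    (∀ x y : Fin v, x ≠ y → ∃! i : Fin (r + s), σ i x = y)

section HW

open Function

theorem hw_period_conj {α β : Type*} {f : α → α} {g : β → β} (e : α → β) (he : Injective e)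
    (h : ∀ x, e (f x) = g (e x)) (x : α) : minimalPeriod g (e x) = minimalPeriod f x := by
  rw [minimalPeriod_eq_minimalPeriod_iff]
  intro n
  have hs : Semiconj e f g := h
  have := (hs.iterate_right n) x
  unfold IsPeriodicPt IsFixedPt
  rw [← this]
  exact he.eq_iff

theorem hw_inj {V : Type*} {f : V → V} {m : ℕ} (hm : 0 < m) (h : ∀ x, minimalPeriod f x = m) :
    Injective f := by
  intro x y hxy
  have hx : f^[m] x = x := by rw [← h x]; exact iterate_minimalPeriod
  have hy : f^[m] y = y := by rw [← h y]; exact iterate_minimalPeriod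
  obtain ⟨k, rfl⟩ := Nat.exists_eq_succ_of_ne_zero hm.ne'
  rw [iterate_succ_apply] at hx hy
  rw [← hx, ← hy, hxy]

theorem hw_mk {V ι : Type*} [Fintype V] [Fintype ι] {v m n r s : ℕ} (hm : 0 < m) (hn : 0 < n)
    (F : ι → V → V) (P : ι → Prop) [DecidablePred P] (hv : Fintype.card V = v)
    (h1 : ∀ i, P i → ∀ x, minimalPeriod (F i) x = m)
    (h2 : ∀ i, ¬ P i → ∀ x, minimalPeriod (F i) x = n)
    (h3 : ∀ x y, x ≠ y → ∃! i, F i x = y)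
    (hr : Fintype.card {i // P i} = r) (hs : Fintype.card {i // ¬ P i} = s) :
    HWPStarSolution v m n r s := by
  have hinj : ∀ i, Injective (F i) := fun i => by
    by_cases hP : P i
    · exact hw_inj hm (h1 i hP)
    · exact hw_inj hn (h2 i hP)
  let e : V ≃ Fin v := Fintype.equivFinOfCardEq hv
  let E : Fin (r + s) ≃ ι :=
    finSumFinEquiv.symm.trans ((Equiv.sumCongr (Fintype.equivFinOfCardEq hr).symm
      (Fintype.equivFinOfCardEq hs).symm).trans (Equiv.sumCompl P))
  have hE1 : ∀ i : Fin (r + s), (i : ℕ) < r → P (E i) := by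
    intro i
    obtain ⟨j, rfl⟩ := finSumFinEquiv.surjective i
    rcases j with j | j
    · intro _
      simp only [E, Equiv.trans_apply, Equiv.symm_apply_apply, Equiv.sumCongr_apply, Sum.map_inl,
        Equiv.sumCompl_apply_inl]
      exact Subtype.prop _
    · simp
  have hE2 : ∀ i : Fin (r + s), r ≤ (i : ℕ) → ¬ P (E i) := by
    intro i
    obtain ⟨j, rfl⟩ := finSumFinEquiv.surjective i
    rcases j with j | j
    · intro h
      have := j.2
      simp at h
      omega
    · intro _
      simp only [E, Equiv.trans_apply, Equiv.symm_apply_apply, Equiv.sumCongr_apply, Sum.map_inr,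
        Equiv.sumCompl_apply_inr]
      exact ((Fintype.equivFinOfCardEq hs).symm j).2
  let σ : ι → Equiv.Perm V := fun i =>
    Equiv.ofBijective (F i) (Finite.injective_iff_bijective.1 (hinj i))
  have key : ∀ i (x : Fin v),
      minimalPeriod ⇑((e.symm.trans (σ i)).trans e) x = minimalPeriod (F i) (e.symm x) := by
    intro i x
    have := hw_period_conj (f := F i) (g := ⇑((e.symm.trans (σ i)).trans e)) e e.injective
      (fun y => by simp [σ]) (e.symm x)
    rwa [Equiv.apply_symm_apply] at this
  refine ⟨fun i => (e.symm.trans (σ (E i))).trans e, ?_, ?_, ?_⟩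
  · intro i hi x
    rw [key]; exact h1 _ (hE1 i hi) _
  · intro i hi x
    rw [key]; exact h2 _ (hE2 i hi) _
  · intro x y hxy
    obtain ⟨i, hi, hu⟩ := h3 (e.symm x) (e.symm y) (fun h => hxy (e.symm.injective h))
    refine ⟨E.symm i, ?_, ?_⟩
    · simp [σ, hi]
    · intro j hj
      rw [Equiv.eq_symm_apply]
      apply hu
      rw [← hj]
      simp [σ]

theorem hw_onefac (k : ℕ) (hk : 0 < k) :
    ∃ (τ : ZMod (2 * k - 1) → Option (ZMod (2 * k - 1)) → Option (ZMod (2 * k - 1)))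
      (s : ZMod (2 * k - 1) → Option (ZMod (2 * k - 1)) → Bool),
      (∀ j a, τ j (τ j a) = a) ∧ (∀ j a, s j (τ j a) = !s j a) ∧ (∀ j a, τ j a ≠ a) ∧
      ∀ a b, a ≠ b → ∃! j, τ j a = b := by
  have : NeZero (2 * k - 1) := ⟨by omega⟩
  obtain ⟨w, hw⟩ : ∃ w : ZMod (2 * k - 1), 2 * w = 1 := by
    refine ⟨(k : ℕ), ?_⟩
    have h : ((2 * k - 1 : ℕ) : ZMod (2 * k - 1)) = 0 := ZMod.natCast_self _
    have h2 : 2 * k = (2 * k - 1) + 1 := by omega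
    have h3 : ((2 * k : ℕ) : ZMod (2 * k - 1)) = ((2 * k - 1 + 1 : ℕ) : ZMod (2 * k - 1)) :=
      congrArg _ h2
    rw [Nat.cast_succ, h, zero_add] at h3
    rw [← h3]; push_cast; rfl
  have hc : ∀ x y : ZMod (2 * k - 1), 2 * x = 2 * y → x = y := by
    intro x y h
    linear_combination w * h + (y - x) * hw
  let τ : ZMod (2 * k - 1) → Option (ZMod (2 * k - 1)) → Option (ZMod (2 * k - 1)) := fun j a =>
    match a with
    | none => some j
    | some x => if x = j then none else some (2 * j - x)
  have t0 : ∀ j, τ j none = some j := fun j => rfl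
  have t1 : ∀ j, τ j (some j) = none := fun j => if_pos rfl
  have t2 : ∀ j x, x ≠ j → τ j (some x) = some (2 * j - x) := fun j x h => if_neg h
  have hinv : ∀ j a, τ j (τ j a) = a := by
    intro j a
    rcases a with _ | x
    · rw [t0, t1]
    · by_cases h : x = j
      · subst h; rw [t1, t0]
      · rw [t2 _ _ h, t2 _ _ (fun h' => h (by linear_combination -h'))]
        congr 1; ring
  have hfree : ∀ j a, τ j a ≠ a := by
    intro j a
    rcases a with _ | x
    · rw [t0]; simp
    · by_cases h : x = j
      · subst h; rw [t1]; simp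
      · rw [t2 _ _ h]
        intro h'
        have h' := Option.some.inj h'
        exact h (hc _ _ (by linear_combination -h'))
  let e := Fintype.equivFin (Option (ZMod (2 * k - 1)))
  refine ⟨τ, fun j a => decide (e a < e (τ j a)), hinv, ?_, hfree, ?_⟩
  · intro j a
    have hne : e (τ j a) ≠ e a := fun h => hfree j a (e.injective h)
    show decide (e (τ j a) < e (τ j (τ j a))) = !decide (e a < e (τ j a))
    rw [hinv]
    rcases lt_or_gt_of_ne hne with h | h
    · simp [h, h.le]
    · simp [h, h.le]
  · intro a b hab
    rcases a with _ | x
    · rcases b with _ | y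
      · exact absurd rfl hab
      · exact ⟨y, t0 y, fun j hj => by dsimp only at hj; rw [t0] at hj; exact Option.some.inj hj⟩
    · rcases b with _ | y
      · refine ⟨x, t1 x, fun j hj => ?_⟩
        by_contra h
        dsimp only at hj
        rw [t2 _ _ (Ne.symm h)] at hj
        simp at hj
      · have hxy : x ≠ y := fun h => hab (by rw [h])
        refine ⟨w * (x + y), ?_, ?_⟩
        · show τ (w * (x + y)) (some x) = some y
          rw [t2]
          · congr 1; linear_combination (x + y) * hw
          · intro h
            apply hxy
            linear_combination 2 * h + (x + y) * hw
        · intro j hj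
          by_cases h : x = j
          · subst h; rw [t1] at hj; simp at hj
          · rw [t2 _ _ h] at hj
            have := Option.some.inj hj
            apply hc
            linear_combination this - (x + y) * hw

theorem hw_bip {P H : Type*} [AddCommGroup H] (τ : P → P) (s : P → Bool)
    (hinv : ∀ a, τ (τ a) = a) (hs : ∀ a, s (τ a) = !s a) (hf : ∀ a, τ a ≠ a) (c i : H) (p : P × H) :
    minimalPeriod (fun p : P × H => (τ p.1, if s p.1 then p.2 + i else p.2 + c - i)) p
      = 2 * addOrderOf c := by
  set F : P × H → P × H := fun p => (τ p.1, if s p.1 then p.2 + i else p.2 + c - i) with hF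
  have h2 : ∀ a x, F (F (a, x)) = (a, x + c) := by
    intro a x
    simp only [hF, hinv, hs]
    cases s a
    · simp
    · simp; abel
  have h3 : ∀ t a x, F^[2 * t] (a, x) = (a, x + t • c) := by
    intro t
    induction t with
    | zero => intro a x; simp
    | succ t ih =>
      intro a x
      rw [show 2 * (t + 1) = 2 * t + 1 + 1 by ring, iterate_succ_apply, iterate_succ_apply, h2, ih,
        succ_nsmul', add_assoc]
  have h4 : ∀ n, IsPeriodicPt F n p ↔ 2 * addOrderOf c ∣ n := by
    intro n
    obtain ⟨a, x⟩ := p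
    unfold IsPeriodicPt IsFixedPt
    rcases Nat.even_or_odd' n with ⟨t, rfl | rfl⟩
    · rw [h3, Nat.mul_dvd_mul_iff_left (by norm_num), addOrderOf_dvd_iff_nsmul_eq_zero]
      simp
    · constructor
      · intro h
        rw [iterate_succ_apply'] at h
        rw [h3] at h
        exact absurd (congrArg Prod.fst h) (hf a)
      · intro h
        have := (Dvd.intro _ rfl : 2 ∣ 2 * addOrderOf c).trans h
        omega
  apply Nat.dvd_antisymm
  · rw [← isPeriodicPt_iff_minimalPeriod_dvd, h4]
  · rw [← h4]; exact isPeriodicPt_minimalPeriod _ _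

theorem hw_fill {P H : Type*} (τ : P → P) (s : P → Bool)
    (hinv : ∀ a, τ (τ a) = a) (hs : ∀ a, s (τ a) = !s a) (hf : ∀ a, τ a ≠ a)
    (R : Bool × H → Bool × H) (p : P × H) :
    minimalPeriod (fun p : P × H =>
      ((if (R (s p.1, p.2)).1 = s p.1 then p.1 else τ p.1, (R (s p.1, p.2)).2) : P × H)) p
      = minimalPeriod R (s p.1, p.2) := by
  obtain ⟨a, x⟩ := p
  set G : P × H → P × H := fun p =>
      (if (R (s p.1, p.2)).1 = s p.1 then p.1 else τ p.1, (R (s p.1, p.2)).2) with hG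
  let g : Bool × H → P × H := fun z => (if z.1 = s a then a else τ a, z.2)
  have hg : Injective g := by
    rintro ⟨b, x⟩ ⟨b', x'⟩ hbb
    simp only [g, Prod.mk.injEq] at hbb
    obtain ⟨h1, h2⟩ := hbb
    have h3 := hf a
    have h4 := h3.symm
    rw [Prod.mk.injEq]
    refine ⟨?_, h2⟩
    clear h2
    revert h1
    generalize s a = c
    cases b <;> cases b' <;> cases c <;> simp [h3, h4]
  have hsemi : ∀ z, g (R z) = G (g z) := by
    rintro ⟨b, x⟩
    have hsa := hs a
    by_cases hb : b = s a
    · subst hb; simp [g, hG]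
    · have hb' : s (τ a) = b := by
        rw [hsa]
        revert hb
        generalize s a = c
        cases b <;> cases c <;> simp
      have hgb : g (b, x) = (τ a, x) := by simp [g, hb]
      rw [hgb]
      simp only [hG, hb', hinv, g, Prod.mk.injEq, and_true]
      revert hb
      generalize (R (b, x)).1 = d
      generalize s a = c
      cases b <;> cases c <;> cases d <;> simp
  have := hw_period_conj (f := R) (g := G) g hg hsemi (s a, x)
  have hp : g (s a, x) = (a, x) := by simp [g]
  rwa [hp] at this

theorem hw_step (h m n k r₀ a : ℕ) (hh : 0 < h) (hk : 0 < k) (hm : 0 < m) (hn : 0 < n)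
    (cm cn : ZMod h) (hcm : 2 * addOrderOf cm = m) (hcn : 2 * addOrderOf cn = n)
    (hr₀ : r₀ ≤ 2 * h - 1) (ha : a ≤ 2 * k - 2)
    (ρ : Fin (2 * h - 1) → Fin (2 * h) → Fin (2 * h))
    (hρm : ∀ i : Fin (2 * h - 1), (i : ℕ) < r₀ → ∀ x, minimalPeriod (ρ i) x = m)
    (hρn : ∀ i : Fin (2 * h - 1), ¬ (i : ℕ) < r₀ → ∀ x, minimalPeriod (ρ i) x = n)
    (hρ : ∀ x y, x ≠ y → ∃! i, ρ i x = y) (r s : ℕ) (hr : r = a * h + r₀)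
    (hrs : r + s = 2 * h * k - 1) : HWPStarSolution (2 * h * k) m n r s := by
  classical
  have : NeZero (2 * k - 1) := ⟨by omega⟩
  have : NeZero h := ⟨by omega⟩
  obtain ⟨τ, sg, hinv, hsg, hfree, huniq⟩ := hw_onefac k hk
  have hcB : Fintype.card (Bool × ZMod h) = 2 * h := by simp [ZMod.card]
  let e : Bool × ZMod h ≃ Fin (2 * h) := Fintype.equivFinOfCardEq hcB
  let R : Fin (2 * h - 1) → Bool × ZMod h → Bool × ZMod h := fun i z => e.symm (ρ i (e z))
  have hR : ∀ i z, minimalPeriod (R i) z = minimalPeriod (ρ i) (e z) := by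
    intro i z
    exact (hw_period_conj (f := R i) (g := ρ i) e e.injective (fun y => by simp [R]) z).symm
  have hRu : ∀ x y, x ≠ y → ∃! i, R i x = y := by
    intro x y hxy
    obtain ⟨i, hi, hu⟩ := hρ (e x) (e y) (fun h => hxy (e.injective h))
    refine ⟨i, by simp [R, hi], fun j hj => hu j ?_⟩
    rw [← hj]; simp [R]
  have hcJ : Fintype.card {j : ZMod (2 * k - 1) // j ≠ 0} = 2 * k - 2 := by
    rw [Fintype.card_subtype_compl]; simp [ZMod.card]; omega
  let eJ : {j : ZMod (2 * k - 1) // j ≠ 0} ≃ Fin (2 * k - 2) := Fintype.equivFinOfCardEq hcJ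
  let col : (Fin (2 * h - 1) ⊕ ({j : ZMod (2 * k - 1) // j ≠ 0} × ZMod h)) → Prop := fun i => Sum.elim (fun i : Fin (2 * h - 1) => (i : ℕ) < r₀) (fun q : {j : ZMod (2 * k - 1) // j ≠ 0} × ZMod h => (eJ q.1 : ℕ) < a) i
  let cc : {j : ZMod (2 * k - 1) // j ≠ 0} → ZMod h := fun j => if (eJ j : ℕ) < a then cm else cn
  let G : Fin (2 * h - 1) → (Option (ZMod (2 * k - 1)) × ZMod h) → (Option (ZMod (2 * k - 1)) × ZMod h) := fun i p =>
    (if (R i (sg 0 p.1, p.2)).1 = sg 0 p.1 then p.1 else τ 0 p.1, (R i (sg 0 p.1, p.2)).2)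
  let B : {j : ZMod (2 * k - 1) // j ≠ 0} × ZMod h → (Option (ZMod (2 * k - 1)) × ZMod h) → (Option (ZMod (2 * k - 1)) × ZMod h) := fun q p =>
    (τ q.1 p.1, if sg q.1 p.1 then p.2 + q.2 else p.2 + cc q.1 - q.2)
  have hG : ∀ i p, minimalPeriod (G i) p = minimalPeriod (R i) (sg 0 p.1, p.2) := by
    intro i p
    exact hw_fill (τ 0) (sg 0) (hinv _) (hsg _) (hfree _) (R i) p
  have hB : ∀ q p, minimalPeriod (B q) p = 2 * addOrderOf (cc q.1) := by
    intro q p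
    exact hw_bip (τ q.1) (sg q.1) (hinv _) (hsg _) (hfree _) (cc q.1) q.2 p
  have hcardm : Fintype.card {i : (Fin (2 * h - 1) ⊕ ({j : ZMod (2 * k - 1) // j ≠ 0} × ZMod h)) // col i} = r := by
    rw [Fintype.card_congr (Equiv.subtypeSum)]
    rw [Fintype.card_sum]
    have h1 : Fintype.card {i : Fin (2 * h - 1) // col (Sum.inl i)} = r₀ := by
      have : Fintype.card {i : Fin (2 * h - 1) // (i : ℕ) < r₀} = r₀ := by
        rw [Fintype.card_congr (Fin.castLEquiv hr₀).symm, Fintype.card_fin]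
      have e1 : {i : Fin (2 * h - 1) // col (Sum.inl i)} ≃ {i : Fin (2 * h - 1) // (i : ℕ) < r₀} :=
        Equiv.refl _
      rw [Fintype.card_congr e1, this]
    have h2 : Fintype.card {q : {j : ZMod (2 * k - 1) // j ≠ 0} × ZMod h // col (Sum.inr q)}
        = a * h := by
      have h3 : Fintype.card {i : Fin (2 * k - 2) // (i : ℕ) < a} = a := by
        rw [Fintype.card_congr (Fin.castLEquiv ha).symm, Fintype.card_fin]
      have e2 : {q : {j : ZMod (2 * k - 1) // j ≠ 0} × ZMod h // col (Sum.inr q)} ≃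
          {i : Fin (2 * k - 2) // (i : ℕ) < a} × ZMod h :=
        (Equiv.prodSubtypeFstEquivSubtypeProd
          (p := fun j : {j : ZMod (2 * k - 1) // j ≠ 0} => (eJ j : ℕ) < a)).trans
          (Equiv.prodCongr (eJ.subtypeEquiv (fun _ => Iff.rfl)) (Equiv.refl _))
      rw [Fintype.card_congr e2, Fintype.card_prod, h3, ZMod.card]
    rw [h1, h2, hr, add_comm]
  have hcardI : Fintype.card (Fin (2 * h - 1) ⊕ ({j : ZMod (2 * k - 1) // j ≠ 0} × ZMod h)) = r + s := by
    simp only [Fintype.card_sum, Fintype.card_fin, Fintype.card_prod, hcJ, ZMod.card]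
    rw [hrs]
    obtain ⟨k, rfl⟩ := Nat.exists_eq_succ_of_ne_zero hk.ne'
    have : 2 * (k + 1) - 2 = 2 * k := by omega
    rw [Nat.succ_eq_add_one, this, mul_add]
    have : 2 * h * k = 2 * k * h := by ring
    omega
  refine hw_mk (V := (Option (ZMod (2 * k - 1)) × ZMod h))
    (ι := (Fin (2 * h - 1) ⊕ ({j : ZMod (2 * k - 1) // j ≠ 0} × ZMod h))) hm hn (fun i => Sum.elim G B i) col ?_ ?_ ?_ ?_ hcardm ?_
  · simp only [Fintype.card_prod, Fintype.card_option, ZMod.card]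
    rw [show 2 * k - 1 + 1 = 2 * k by omega]; ring
  · rintro (i | q) hi x
    · exact (hG i x).trans ((hR _ _).trans (hρm i hi _))
    · refine (hB q x).trans ?_
      have : cc q.1 = cm := if_pos hi
      rw [this, hcm]
  · rintro (i | q) hi x
    · exact (hG i x).trans ((hR _ _).trans (hρn i hi _))
    · refine (hB q x).trans ?_
      have : cc q.1 = cn := if_neg hi
      rw [this, hcn]
  · rintro ⟨b, x⟩ ⟨c, y⟩ hne
    by_cases hbc : c = b ∨ c = τ 0 b
    · have hz : ∀ i, G i (b, x) = (c, y) ↔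
          R i (sg 0 b, x) = (if c = b then sg 0 b else !sg 0 b, y) := by
        intro i
        simp only [G, Prod.mk.injEq]
        rw [Prod.ext_iff]
        refine and_congr ?_ Iff.rfl
        have hf := hfree 0 b
        have hf' := hf.symm
        dsimp only
        generalize (R i (sg 0 b, x)).1 = d
        generalize sg 0 b = t
        rcases hbc with rfl | rfl
        · cases d <;> cases t <;> simp [hf]
        · cases d <;> cases t <;> simp [hf, hf']
      obtain ⟨i, hi, hu⟩ := hRu (sg 0 b, x) (if c = b then sg 0 b else !sg 0 b, y) (by
        intro hEq
        rw [Prod.mk.injEq] at hEq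
        obtain ⟨h1, rfl⟩ := hEq
        by_cases hcb : c = b
        · exact hne (by rw [hcb])
        · rw [if_neg hcb] at h1
          cases hq : sg 0 b <;> simp [hq] at h1)
      refine ⟨Sum.inl i, (hz i).2 hi, ?_⟩
      rintro (j | q) hj
      · rw [hu j ((hz j).1 hj)]
      · exfalso
        have h1 : τ q.1 b = c := congrArg Prod.fst hj
        rcases hbc with rfl | rfl
        · exact hfree _ _ h1
        · exact q.1.2 ((huniq b (τ 0 b) (hfree 0 b).symm).unique h1 rfl)
    · push Not at hbc
      obtain ⟨j, hj, hu⟩ := huniq b c hbc.1.symm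
      have hj0 : j ≠ 0 := by
        rintro rfl
        exact hbc.2 hj.symm
      refine ⟨Sum.inr (⟨j, hj0⟩, if sg j b then y - x else x + cc ⟨j, hj0⟩ - y), ?_, ?_⟩
      · show B _ (b, x) = (c, y)
        simp only [B, hj, Prod.mk.injEq, true_and]
        split_ifs <;> abel
      · rintro (i | ⟨⟨j', hj'⟩, i⟩) hi
        · exfalso
          have h1 : (if (R i (sg 0 b, x)).1 = sg 0 b then b else τ 0 b) = c :=
            congrArg Prod.fst hi
          split_ifs at h1
          · exact hbc.1 h1.symm
          · exact hbc.2 h1.symm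
        · have h1 : τ j' b = c := congrArg Prod.fst hi
          obtain rfl := hu j' h1
          have h2 : (if sg j' b then x + i else x + cc ⟨j', hj'⟩ - i) = y := congrArg Prod.snd hi
          congr 2
          rw [← h2]
          split_ifs <;> abel
  · rw [Fintype.card_subtype_compl, hcardm, hcardI]; omega

/-- Value at `x` of the self-map of `{0, …, b - 1}` whose base-`b` code is `N`. -/
def hwEv (b N x : ℕ) : ℕ := N / b ^ x % b

/-- Tests that the orbit of `y` first meets `x` after exactly `k` steps. -/
def hwPer (b N x : ℕ) : ℕ → ℕ → Bool
  | 0, y => Nat.beq y x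
  | k + 1, y => !(Nat.beq y x) && hwPer b N x k (hwEv b N y)

/-- Tests that a list of codes gives a decomposition on `b` points. -/
def hwChk (b m n r : ℕ) (L : List ℕ) : Bool :=
  ((List.range (b - 1)).all fun i => (List.range b).all fun x =>
    hwPer b (L.getD i 0) x ((if i < r then m else n) - 1) (hwEv b (L.getD i 0) x)) &&
  ((List.range b).all fun x => (List.range b).all fun y =>
    Nat.beq x y || (List.range (b - 1)).any fun i => Nat.beq (hwEv b (L.getD i 0) x) y)

/-- Tests a whole table, one decomposition for each `r`. -/
def hwAll (b m n : ℕ) (D : List (List ℕ)) : Bool :=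
  (List.range b).all fun r => hwChk b m n r (D.getD r [])

theorem hwPer_spec (b N x : ℕ) : ∀ k y, hwPer b N x k y = true →
    (∀ j < k, (hwEv b N)^[j] y ≠ x) ∧ (hwEv b N)^[k] y = x := by
  intro k
  induction k with
  | zero => intro y h; exact ⟨fun j hj => absurd hj (by omega), Nat.eq_of_beq_eq_true h⟩
  | succ k ih =>
    intro y h
    simp only [hwPer, Bool.and_eq_true, Bool.not_eq_true'] at h
    obtain ⟨h1, h2⟩ := ih _ h.2
    refine ⟨?_, by rw [iterate_succ_apply]; exact h2⟩
    intro j hj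
    rcases j with _ | j
    · exact Nat.ne_of_beq_eq_false h.1
    · rw [iterate_succ_apply]; exact h1 j (by omega)

theorem hwPer_period (b N x t : ℕ) (ht : 0 < t) (h : hwPer b N x (t - 1) (hwEv b N x) = true) :
    minimalPeriod (hwEv b N) x = t := by
  obtain ⟨h1, h2⟩ := hwPer_spec _ _ _ _ _ h
  rw [← iterate_succ_apply, Nat.succ_eq_add_one, Nat.sub_add_cancel ht] at h2
  have hp : IsPeriodicPt (hwEv b N) t x := h2
  have hle := hp.minimalPeriod_le ht
  have hpos := hp.minimalPeriod_pos ht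
  by_contra hne
  refine h1 (minimalPeriod (hwEv b N) x - 1) (by omega) ?_
  rw [← iterate_succ_apply, Nat.succ_eq_add_one, Nat.sub_add_cancel hpos]
  exact iterate_minimalPeriod

theorem hw_base (b m n r : ℕ) (hm : 1 < m) (hn : 1 < n) (L : List ℕ)
    (h : hwChk b m n r L = true) :
    ∃ ρ : Fin (b - 1) → Fin b → Fin b,
      (∀ i : Fin (b - 1), (i : ℕ) < r → ∀ x, minimalPeriod (ρ i) x = m) ∧
      (∀ i : Fin (b - 1), ¬ (i : ℕ) < r → ∀ x, minimalPeriod (ρ i) x = n) ∧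
      (∀ x y, x ≠ y → ∃! i, ρ i x = y) := by
  simp only [hwChk, Bool.and_eq_true, List.all_eq_true, List.mem_range, Bool.or_eq_true,
    List.any_eq_true] at h
  obtain ⟨h1, h2⟩ := h
  let ρ : Fin (b - 1) → Fin b → Fin b := fun i x =>
    ⟨hwEv b (L.getD i 0) x, Nat.mod_lt _ (by have := x.2; omega)⟩
  have hp : ∀ (i : Fin (b - 1)) x, minimalPeriod (ρ i) x = if (i : ℕ) < r then m else n := by
    intro i x
    rw [← hwPer_period _ _ _ _ (by split_ifs <;> omega) (h1 i i.2 x x.2)]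
    exact (hw_period_conj (f := ρ i) (g := hwEv b (L.getD i 0)) Fin.val Fin.val_injective
      (fun _ => rfl) x).symm
  have hne : ∀ i x, ρ i x ≠ x := by
    intro i x hx
    have h3 := hp i x
    rw [minimalPeriod_eq_one_iff_isFixedPt.2 hx] at h3
    split_ifs at h3 <;> omega
  refine ⟨ρ, fun i hi x => by rw [hp, if_pos hi], fun i hi x => by rw [hp, if_neg hi], ?_⟩
  intro x y hxy
  let φ : Fin (b - 1) → {y : Fin b // y ≠ x} := fun i => ⟨ρ i x, hne i x⟩
  have hφ : Surjective φ := by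
    rintro ⟨z, hz⟩
    rcases h2 x x.2 z z.2 with h3 | ⟨i, hi, h3⟩
    · exact absurd (Fin.ext (Nat.eq_of_beq_eq_true h3)).symm hz
    · exact ⟨⟨i, hi⟩, Subtype.ext (Fin.ext (Nat.eq_of_beq_eq_true h3))⟩
  have hb : Bijective φ := by
    rw [Fintype.bijective_iff_surjective_and_card]
    refine ⟨hφ, ?_⟩
    rw [Fintype.card_subtype_compl]; simp
  obtain ⟨i, hi, hu⟩ := hb.existsUnique ⟨y, hxy.symm⟩
  exact ⟨i, congrArg Subtype.val hi, fun j hj => hu j (Subtype.ext hj)⟩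

theorem hw_pair (h m n : ℕ) (hh : 0 < h) (hm : 1 < m) (hn : 1 < n)
    (cm cn : ℕ) (hcm : 2 * (h / h.gcd cm) = m) (hcn : 2 * (h / h.gcd cn) = n)
    (D : List (List ℕ)) (hD : hwAll (2 * h) m n D = true) (v : ℕ) (hv : 0 < v)
    (hdvd : 2 * h ∣ v) (r s : ℕ) (hrs : r + s = v - 1) : HWPStarSolution v m n r s := by
  obtain ⟨k, rfl⟩ := hdvd
  have hk : 0 < k := Nat.pos_of_mul_pos_left hv
  obtain ⟨a, r₀, ha, hr₀, hr⟩ : ∃ a r₀, a ≤ 2 * k - 2 ∧ r₀ ≤ 2 * h - 1 ∧ r = a * h + r₀ := by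
    by_cases hc : r / h ≤ 2 * k - 2
    · refine ⟨r / h, r % h, hc, ?_, ?_⟩
      · have := Nat.mod_lt r hh; omega
      · rw [mul_comm]; exact (Nat.div_add_mod r h).symm
    · have h1 : (2 * k - 2) * h ≤ r := (Nat.le_div_iff_mul_le hh).1 (by omega)
      refine ⟨2 * k - 2, r - (2 * k - 2) * h, le_rfl, ?_, by omega⟩
      obtain ⟨k, rfl⟩ := Nat.exists_eq_succ_of_ne_zero hk.ne'
      have h2 : 2 * (k + 1) - 2 = 2 * k := by omega
      rw [Nat.succ_eq_add_one] at *
      rw [h2] at *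
      have h3 : 2 * h * (k + 1) = 2 * k * h + 2 * h := by ring
      omega
  simp only [hwAll, List.all_eq_true, List.mem_range] at hD
  obtain ⟨ρ, h1, h2, h3⟩ := hw_base (2 * h) m n r₀ hm hn _ (hD r₀ (by omega))
  exact hw_step h m n k r₀ a hh hk (by omega) (by omega) (cm : ZMod h) (cn : ZMod h)
    (by rw [ZMod.addOrderOf_coe _ hh.ne', hcm]) (by rw [ZMod.addOrderOf_coe _ hh.ne', hcn])
    hr₀ ha ρ h1 h2 h3 r s hr hrs

/-- Decompositions on 12 points with cycle lengths 4 and 6. -/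
def hwTab_4_6 : List (List ℕ) := [
    [4451769272599, 7713739104225, 2083923231599, 4580101582760, 7198747631922, 2235402855004,
   6132068726773, 393490729973, 3446916365354, 5352520037326, 1065509484303],
    [6100359825175, 4421165236521, 7965424385171, 568380892376, 3214608523698, 799451592412,
   7061148185509, 5454973999277, 2582619304694, 1936957173382, 4549099903623],
    [6680707836055, 7811646499041, 2083923231599, 4825636054184, 6893929299378, 1254250191964,
   2999442532405, 167812712045, 2325091428110, 5450920655290, 4160828581767],
    [6680707836055, 7811646499041, 1340985135215, 4825636054184, 6977737015986, 2725125195100,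
   2985139897861, 5342308053401, 3921503897498, 90848367478, 1952551070019],
    [6680707836055, 7811646499041, 1340985135215, 343981668008, 6792382784946, 2781560251228,
   1697904383989, 5222692537733, 3423696195722, 3840385661134, 4718246068767],
    [6680707836055, 7811646499041, 1340985135215, 343981668008, 3483639544242, 2394526046044,
   1695169223077, 5212887257633, 4707927314618, 6775771164910, 4206947332995],
    [4687174026139, 5236885046217, 7085966992115, 3848513295836, 1851476447238, 1437323981104,
   617210002981, 2684166477509, 3051605953550, 6192261281602, 7961605517547],
    [6202477874527, 7811646499041, 1324017281279, 94353817052, 3485357231598, 5513595363892,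
   1978204172461, 7408704594533, 3942525551954, 2382746707726, 4510559927775],
    [6680707836055, 7811646499041, 1340985135215, 343981668008, 3483639544242, 5428453675612,
   6838215144277, 4532034917333, 2252446957706, 3963683907502, 1978393736847],
    [7612257202759, 6325206987957, 1710102413459, 320562705452, 3038205679674, 799460338204,
   7152329703145, 2829674417273, 4417116257906, 5466972847798, 4982300468211],
    [6680707836055, 7811646499041, 1340985135215, 343981668008, 3483639544242, 5428453675612,
   2503571345077, 1544557867589, 3800306849438, 4583368025566, 7132970575995],
    [2346571161319, 2987302638309, 995109659687, 332912791244, 4164404767050, 2086256629732,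
   7216570431829, 5332070365325, 7674791229578, 5166123506698, 6352075841067]]

theorem hwTab_4_6_ok : hwAll (2 * 6) 4 6 hwTab_4_6 = true := by
  decide +kernel

/-- Decompositions on 8 points with cycle lengths 4 and 8. -/
def hwTab_4_8 : List (List ℕ) := [
    [8344644, 14037527, 11071774, 4688803, 9187185, 1121533, 2222570],
    [2895732, 7013167, 1357286, 12459027, 13717753, 4585861, 8645210],
    [8333892, 3532823, 11071774, 4480931, 13501817, 8467445, 1285354],
    [8333892, 3532823, 4706590, 12645731, 9244585, 668661, 11541754],
    [8333892, 3532823, 4706590, 8949619, 12727785, 881573, 11541754],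
    [8333892, 3532823, 10842398, 8949619, 1291689, 4332797, 13390818],
    [8333892, 3532823, 11046686, 8623531, 5140849, 343525, 13652730],
    [8333892, 3267607, 8664558, 13337443, 1404697, 4258037, 11407802]]

theorem hwTab_4_8_ok : hwAll (2 * 4) 4 8 hwTab_4_8 = true := by
  decide +kernel

/-- Decompositions on 12 points with cycle lengths 4 and 12. -/
def hwTab_4_12 : List (List ℕ) := [
    [5194911514903, 7985417863137, 6536782322543, 7099792330664, 227815449906, 1549647741532,
   3297206615989, 2683950472181, 3970560629222, 5352457086262, 755646995499],
    [6680707836055, 7985421056481, 7104358161263, 5794367901608, 207176449458, 1563729704284,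
   2551048032181, 1027689988853, 3433944512570, 3840216450598, 4465528928487],
    [6680707836055, 7811646499041, 7166305385327, 4827771032744, 3545623263666, 507019785052,
   1694883309493, 5327593148405, 781053684026, 2317049983270, 3994535094759],
    [6680707836055, 7811646499041, 1340985135215, 4827771032744, 7204767351474, 2332578593884,
   2998829676469, 1936853045237, 3903423768398, 5461201451662, 155424631659],
    [6680707836055, 7811646499041, 1340985135215, 343981668008, 6976844932530, 2039432579932,
   3184769886133, 5327593148405, 3732300044330, 2313952630990, 4901974661199],
    [6680707836055, 7811646499041, 1340985135215, 343981668008, 3483639544242, 6730010584924,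
   2409824674741, 5449806985205, 3800287881038, 1699344594574, 4903953618795],
    [6680707836055, 7811646499041, 1340985135215, 343981668008, 3483639544242, 5428453675612,
   3772794987445, 4603819906037, 6963160343018, 2675143103182, 1549856323983],
    [6680707836055, 7811646499041, 1340985135215, 343981668008, 3483639544242, 5428453675612,
   1791939944245, 2683951688693, 6715502891834, 4584164289958, 3789215848935],
    [6680707836055, 7811646499041, 1340985135215, 343981668008, 3483639544242, 5428453675612,
   1791939944245, 4541577067973, 2689970706698, 6813287688526, 3727999256223],
    [6680707836055, 7811646499041, 1340985135215, 343981668008, 3483639544242, 5428453675612,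
   2503570662373, 1571180917097, 7121970190610, 3897482525398, 4470570368187],
    [6562465112599, 4158486072609, 1153166783087, 343981668008, 3483639544242, 6924718272604,
   5151369040213, 1572659872553, 5475822016874, 2355497697850, 7472382941199],
    [2346571161319, 2987302638309, 995109659687, 332912791244, 4164404767050, 2086256629732,
   7216570431829, 5332070365325, 7674791229578, 5166123506698, 6352075841067]]

theorem hwTab_4_12_ok : hwAll (2 * 6) 4 12 hwTab_4_12 = true := by
  decide +kernel

/-- Decompositions on 16 points with cycle lengths 4 and 16. -/
def hwTab_4_16 : List (List ℕ) := [
    [17134975606245761295, 12675905027793293355, 15041627368414770225, 14379420466438755150,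
   13400722111455118935, 5449583007123015030, 6647079872208869220, 3622318100511943305,
   2619459948903824280, 1546496106976360620, 8657151294306101685, 437840140450852290,
   7679045644988648685, 10621480375336886010, 9296088974029148115],
    [3165405643979178255, 17076200112671363115, 15044808349472715825, 14818971113183269710,
   12650221867194459735, 11150645351108740470, 3556715799171864420, 235631861537663625,
   7288003912627026840, 6275276863276955820, 8374551331442895285, 1770097469778816450,
   12858648180369067245, 9899286029854891770, 5044730159514439635],
    [3165405643979178255, 16126855259933069355, 13860639870985696305, 12464231725911774030,
   17118071973231011415, 4230283980572886390, 9307636327115298660, 6012357169944160905,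
   316728763501804440, 8437004687434692780, 7509651293044861365, 1698807401556127170,
   5305668561694756605, 12846524762173725930, 10809326624104304595],
    [3165405643979178255, 16126855259933069355, 16906474017075455025, 14842079552604341070,
   4867034316790568535, 13594379167218083190, 5887329294369785700, 1527296412625566345,
   7216227922315357080, 3991405402186815660, 11704932612073966005, 9229955112453995970,
   8743316619528945645, 10953163682183376090, 453339029844844275],
    [3165405643979178255, 16126855259933069355, 16906474017075455025, 14049697807155462990,
   4840130307194623575, 11365113775893063030, 6675441912269408100, 3897057254289668745,
   8445943588119686040, 7445631192922953900, 11633469918240360885, 13348846687197527490,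
   603892691944259325, 9514236234612862170, 1190997754355769315],
    [3165405643979178255, 16126855259933069355, 16906474017075455025, 14049697807155462990,
   5594292914084648535, 12229804329359451510, 11266616339394103140, 5864567341497154185,
   8520869807994481560, 7436923060830967980, 1402493327574550965, 3856366638710308290,
   585844483751083245, 9513681751391203290, 12689301322452229875],
    [3165405643979178255, 16126855259933069355, 16906474017075455025, 14049697807155462990,
   5594292914084648535, 9274317074007663990, 11256096212153173860, 5856404567171496585,
   8526161757634079640, 3828418669763729580, 11779271753646143925, 1839530260806221250,
   7210324931340004605, 534683799540785130, 13261259376892235475],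
    [3165405643979178255, 16126855259933069355, 16906474017075455025, 14049697807155462990,
   5594292914084648535, 9274317074007663990, 11264525068038997860, 7153176277313878665,
   8441488367179049880, 6068426839984806060, 11995411344302983605, 3569391282015944130,
   656246084278484205, 13186918097375321850, 1756567968458403795],
    [3165405643979178255, 16126855259933069355, 16906474017075455025, 14049697807155462990,
   5594292914084648535, 9274317074007663990, 11264525068038997860, 12767756983261362825,
   6081883636971121560, 1546427847696816300, 11754786938636782005, 510481560243256770,
   8541430760500555005, 4038416238237048810, 7586442295361928915],
    [3165405643979178255, 16126855259933069355, 16906474017075455025, 14049697807155462990,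
   5594292914084648535, 9274317074007663990, 11264525068038997860, 12767756983261362825,
   3757539214534421400, 1547884661951142060, 603838535592430005, 7428974900107853250,
   11981987840650898685, 6018889516087631850, 8720754608723132115],
    [3165405643979178255, 16126855259933069355, 16906474017075455025, 14049697807155462990,
   5594292914084648535, 9274317074007663990, 11264525068038997860, 12767756983261362825,
   3757539214534421400, 7284296349829142700, 12060995975932070325, 6014715730353700290,
   686291265552837885, 8649555799821770730, 1606474941623566035],
    [3165405643979178255, 16126855259933069355, 16906474017075455025, 14049697807155462990,
   5594292914084648535, 9274317074007663990, 11264525068038997860, 12767756983261362825,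
   3757539214534421400, 7284296349829142700, 1406884985337530805, 466285245688888770,
   6443296752306552045, 8647304000065625850, 12054262729885347795],
    [3165405643979178255, 16126855259933069355, 16906474017075455025, 14049697807155462990,
   5594292914084648535, 9274317074007663990, 11264525068038997860, 12767756983261362825,
   3757539214534421400, 7284296349829142700, 1406884985337530805, 6362340625165770690,
   8748295349642984685, 464250034012667610, 12036262719124991475],
    [3162485341269868815, 9024960122554437675, 11510545949909255265, 11860049035991061390,
   5522118703183861335, 9292296551748715830, 15639568091438868420, 13071749857685699145,
   3541454405691354840, 16363439261493660540, 1714520022565052325, 757015915089750450,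
   6217504248472271085, 7084431421892443290, 14447055116197047795],
    [3162485341269868815, 11510545949909255265, 11860049035991061390, 9292296551748715830,
   15639568091438868420, 3541454405691354840, 16363439261493660540, 1714520022565052325,
   7507858103127093495, 6676609502612067885, 8822305470830930355, 14001965939527219275,
   5008692986904247785, 454458107907234450, 13652945274166717530],
    [13829104802042368260, 11294439279171035175, 14522894792494622550, 16931456295954814275,
   10209375276881048625, 12150654538974970725, 15837346770414798450, 3607513408948976280,
   2379982268940536745, 1186228128150641850, 532905942771035595, 8526495041950645980,
   7296712138635710445, 6066929750716881150, 4837155609135262095]]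

theorem hwTab_4_16_ok : hwAll (2 * 8) 4 16 hwTab_4_16 = true := by
  decide +kernel

/-- Decompositions on 12 points with cycle lengths 6 and 12. -/
def hwTab_6_12 : List (List ℕ) := [
    [5194911514903, 7985417863137, 6536782322543, 7099792330664, 227815449906, 1549647741532,
   3297206615989, 2683950472181, 3970560629222, 5352457086262, 755646995499],
    [4451769272599, 7985417863137, 5793875475311, 7099792330664, 227815449906, 1549647741532,
   3297206615989, 4479596087285, 2484615551594, 894490469686, 6389962164135],
    [4451769272599, 7713739104225, 6541971962735, 7072300375976, 1296747209010, 1502349754972,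
   3323868472309, 2683163312885, 4646010156458, 131766410446, 5290502990223],
    [4451769272599, 7713739104225, 2083923231599, 7072300375976, 6187359019314, 78680359516,
   3138618024949, 2683163312885, 5703720086438, 1055289705382, 4485626528955],
    [4451769272599, 7713739104225, 2083923231599, 4580101582760, 6914959712562, 5950623888220,
   2560436463541, 5327593148405, 1194087183674, 507561450022, 3369393984231],
    [4451769272599, 7713739104225, 2083923231599, 4580101582760, 7198747631922, 192129835612,
   2559352551349, 5327593148405, 1219608137066, 3370630164022, 5956594362279],
    [4451769272599, 7713739104225, 2083923231599, 4580101582760, 7198747631922, 2235402855004,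
   3183685973941, 147182632949, 1219608137066, 5522259101326, 6317769498447],
    [4451769272599, 7713739104225, 2083923231599, 4580101582760, 7198747631922, 2235402855004,
   3160036980661, 147182632949, 5600118393914, 1095175978534, 6387991357671],
    [4451769272599, 7713739104225, 2083923231599, 4580101582760, 7198747631922, 2235402855004,
   3160036980661, 393490729973, 6405115229414, 1065507498550, 5366354905131],
    [4451769272599, 7713739104225, 2083923231599, 4580101582760, 7198747631922, 2235402855004,
   3160036980661, 1126573897493, 5553250575950, 152333370574, 6398310519051],
    [4451769272599, 7713739104225, 2083923231599, 4580101582760, 7198747631922, 2235402855004,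
   3160036980661, 6091157449421, 1094002970654, 445222605454, 5600085337539],
    [4451769272599, 7713739104225, 2083923231599, 4580101582760, 7198747631922, 2235402855004,
   6132068726773, 393490729973, 3446916365354, 5352520037326, 1065509484303]]

theorem hwTab_6_12_ok : hwAll (2 * 6) 6 12 hwTab_6_12 = true := by
  decide +kernel

/-- Decompositions on 16 points with cycle lengths 8 and 16. -/
def hwTab_8_16 : List (List ℕ) := [
    [17134975606245761295, 12675905027793293355, 15041627368414770225, 14379420466438755150,
   13400722111455118935, 5449583007123015030, 6647079872208869220, 3622318100511943305,
   2619459948903824280, 1546496106976360620, 8657151294306101685, 437840140450852290,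
   7679045644988648685, 10621480375336886010, 9296088974029148115],
    [7816801899264549135, 12677010109456781355, 15037104074358649905, 10230942958238061390,
   11011280965438883415, 14629010858455500150, 16336231285427705700, 6062143013704657545,
   5355396851122863000, 532345193189193900, 2751831403592133045, 8472981992842522050,
   4114128723337744365, 1407699584355323610, 12774285132398779635],
    [7816801899264549135, 14460335988179013675, 15032549529323303985, 11371456818712695630,
   10370045715668878935, 16912156653431981430, 13112480784968226660, 5981611660181990025,
   2617469957086935960, 5144553548441827500, 181957371020290485, 1815133560803159490,
   3898782952727302125, 8881443046793546970, 11612414558579646195],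
    [7816801899264549135, 14460335988179013675, 15031024021286614065, 11383841786407441230,
   10362393114739557975, 13467100850586551670, 16942351775135471460, 3828328092627593865,
   6066945796457790360, 2829955128136153260, 8539284777382832565, 101112580867599810,
   11696822966954953965, 4830428867557383930, 1852466399599841235],
    [7816801899264549135, 14460335988179013675, 15031024021286614065, 10878319326647046990,
   17131579332364420695, 13467100850586551670, 6615492277532399460, 4562713903078271625,
   2685023943226194840, 5117818923212454060, 11709718996932487605, 245817244614897090,
   9876449320968638445, 1456203671694741210, 8154794345595067635],
    [7816801899264549135, 14460335988179013675, 15031024021286614065, 10878319326647046990,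
   17134499671218144855, 13467100850586551670, 6898972762378377060, 2683868429508110985,
   1316527798884137880, 5117818923212454060, 11854443310155164085, 3556601739743309250,
   243855753746305005, 9881257481047117530, 8867766089326451955],
    [7816801899264549135, 14460335988179013675, 15031024021286614065, 10878319326647046990,
   17134499671218144855, 12676230919935395190, 12924995773059864420, 4976234728726686345,
   5928479903428803480, 1685562530930997420, 9525799727779391925, 654048290294984130,
   4229240150249181165, 2414094684763705050, 8873526429418970355],
    [7816801899264549135, 14460335988179013675, 15031024021286614065, 10878319326647046990,
   17134499671218144855, 12676230919935395190, 12911485180336183140, 4976234728726686345,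
   5928479903428803480, 3990546752843921580, 9525799727779391925, 1825266761994071490,
   8796535594351857645, 2427536089826709210, 830097479364959475],
    [7816801899264549135, 14460335988179013675, 15031024021286614065, 10878319326647046990,
   17134499671218144855, 12676230919935395190, 12911485180336183140, 6057098639295605385,
   3627158086028524440, 5143978430846056620, 109272158241139125, 1887141715764833730,
   2960456181703642365, 8881470662903844570, 9633921163532754915],
    [7816801899264549135, 14460335988179013675, 15031024021286614065, 10878319326647046990,
   17134499671218144855, 12676230919935395190, 12911485180336183140, 6057098639295605385,
   3625756208703110040, 5143978430846056620, 8179716024699824565, 1893299043962711490,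
   10022094899827903725, 374528026258362330, 3004025764722826995],
    [7816801899264549135, 14460335988179013675, 15031024021286614065, 10878319326647046990,
   17134499671218144855, 12676230919935395190, 12911485180336183140, 6057098639295605385,
   3625756208703110040, 2829972716027230380, 8179716024699824565, 5000026314258509250,
   9949180842367258605, 1959156566565310170, 699589726399552755],
    [7816801899264549135, 14460335988179013675, 15031024021286614065, 10878319326647046990,
   17134499671218144855, 12676230919935395190, 12911485180336183140, 6057098639295605385,
   3625756208703110040, 2829972716027230380, 109267777374497205, 5347313590241848770,
   9634203742316137725, 1972672445857910490, 8724211918500061155],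
    [7816801899264549135, 14460335988179013675, 15031024021286614065, 10878319326647046990,
   17134499671218144855, 12676230919935395190, 12911485180336183140, 6057098639295605385,
   3625756208703110040, 2829972716027230380, 109267777374497205, 8804626900664970690,
   1829489777088139245, 5410363718727818490, 9633921300435029715],
    [7816801899264549135, 14460335988179013675, 15031024021286614065, 10878319326647046990,
   17134499671218144855, 12676230919935395190, 12911485180336183140, 6057098639295605385,
   3625756208703110040, 2829972716027230380, 109267777374497205, 8796463026828733890,
   1973305902279430125, 9597303989833027290, 5311328777974766835],
    [7816801899264549135, 14460335988179013675, 15031024021286614065, 10878319326647046990,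
   17134499671218144855, 12676230919935395190, 12911485180336183140, 6057098639295605385,
   3625756208703110040, 2829972716027230380, 109267777374497205, 8746167787024543170,
   5346431919362658045, 1563726958666058970, 10022075031862697955],
    [2341251137795238255, 15897802305961468395, 4060556298771326145, 6239611023277366350,
   16487511891084677895, 12676230919935395190, 7004553214951096020, 14069772375103467705,
   10893667979544431160, 195405128996047020, 13688765430739945365, 8868608864720707410,
   5010978145829710845, 9900162383059377450, 1874316945413092995]]

theorem hwTab_8_16_ok : hwAll (2 * 8) 8 16 hwTab_8_16 = true := by
  decide +kernel

end HW

/-- Main theorem for even cycle lengths (sufficiency): for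
(m, n) ∈ {(4,6), (4,8), (4,12), (4,16), (6,12), (8,16)} and lcm(m, n) ∣ v,
HWP*(v; m^r, n^s) has a solution whenever r + s = v - 1. -/
theorem hwpStar_even_main (m n v : ℕ)
    (hmn : (m, n) = (4, 6) ∨ (m, n) = (4, 8) ∨ (m, n) = (4, 12) ∨
      (m, n) = (4, 16) ∨ (m, n) = (6, 12) ∨ (m, n) = (8, 16))
    (hv : 0 < v) (hdvd : Nat.lcm m n ∣ v) :
    ∀ r s : ℕ, r + s = v - 1 → HWPStarSolution v m n r s := by
  intro r s hrs
  simp only [Prod.mk.injEq] at hmn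
  rcases hmn with ⟨rfl, rfl⟩ | ⟨rfl, rfl⟩ | ⟨rfl, rfl⟩ | ⟨rfl, rfl⟩ | ⟨rfl, rfl⟩ | ⟨rfl, rfl⟩
  · exact hw_pair 6 4 6 (by norm_num) (by norm_num) (by norm_num) 3 2
      (by norm_num) (by norm_num) _ hwTab_4_6_ok v hv hdvd r s hrs
  · exact hw_pair 4 4 8 (by norm_num) (by norm_num) (by norm_num) 2 1
      (by norm_num) (by norm_num) _ hwTab_4_8_ok v hv hdvd r s hrs
  · exact hw_pair 6 4 12 (by norm_num) (by norm_num) (by norm_num) 3 1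
      (by norm_num) (by norm_num) _ hwTab_4_12_ok v hv hdvd r s hrs
  · exact hw_pair 8 4 16 (by norm_num) (by norm_num) (by norm_num) 4 1
      (by norm_num) (by norm_num) _ hwTab_4_16_ok v hv hdvd r s hrs
  · exact hw_pair 6 6 12 (by norm_num) (by norm_num) (by norm_num) 2 1
      (by norm_num) (by norm_num) _ hwTab_6_12_ok v hv hdvd r s hrs
  · exact hw_pair 8 8 16 (by norm_num) (by norm_num) (by norm_num) 2 1
      (by norm_num) (by norm_num) _ hwTab_8_16_ok v hv hdvd r s hrs
end

section
/- (Lemma 4.1, main odd construction.) Let m ≥ 3 and n ≥ 3 be odd integers, let h = lcm(m, n), and suppose 3 ∣ h. Suppose that for all nonnegative integers r′, s′ with r′ + s′ = h − 1 there is a solution to HWP*(h; m^{r′}, n^{s′}). Then for every odd positive integer x and all nonnegative integers r, s with r + s = h·x − 1, there is a solution to HWP*(h·x; m^r, n^s). -/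
def KTS (u : ℕ) : Prop :=
  ∃ c : Fin (3 * u + 1) → Fin (6 * u + 3) → Fin (6 * u + 3),
    (∀ a p, c a (c a (c a p)) = p) ∧ ∀ p q, p ≠ q → ∃ a, c a p = q ∨ c a q = p

theorem KTS.of {ι V : Type*} [Fintype ι] [Fintype V] (u : ℕ) (hι : Fintype.card ι = 3 * u + 1)
    (hV : Fintype.card V = 6 * u + 3) (c : ι → V → V) (h1 : ∀ a p, c a (c a (c a p)) = p)
    (h2 : ∀ p q, p ≠ q → ∃ a, c a p = q ∨ c a q = p) : KTS u := by
  let e := Fintype.equivFinOfCardEq hι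
  let f := Fintype.equivFinOfCardEq hV
  refine ⟨fun a p => f (c (e.symm a) (f.symm p)), ?_, ?_⟩
  · intro a p
    simp [h1]
  · intro p q hpq
    obtain ⟨a, ha⟩ := h2 (f.symm p) (f.symm q) (by simpa using hpq)
    refine ⟨e a, ?_⟩
    rcases ha with ha | ha
    · left; simp [ha]
    · right; simp [ha]

def kmask (c : ℕ → ℕ → ℕ) (p : ℕ) : ℕ → ℕ
  | 0 => 0
  | n + 1 => (kmask c p n) ||| ((2 ^ (c n p)) ||| (2 ^ (c n (c n p))))

theorem kmask_spec (c : ℕ → ℕ → ℕ) (p q n : ℕ) (h : (kmask c p n).testBit q = true) :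
    ∃ a < n, c a p = q ∨ c a (c a p) = q := by
  induction n with
  | zero => simp [kmask] at h
  | succ n ih =>
    simp only [kmask, Nat.testBit_or, Nat.testBit_two_pow, Bool.or_eq_true, decide_eq_true_eq] at h
    rcases h with h | h | h
    · obtain ⟨a, ha, h⟩ := ih h
      exact ⟨a, by omega, h⟩
    · exact ⟨n, by omega, Or.inl h⟩
    · exact ⟨n, by omega, Or.inr h⟩

def allB (f : ℕ → Bool) : ℕ → Bool
  | 0 => true
  | n + 1 => f n && allB f n

theorem allB_spec (f : ℕ → Bool) (n : ℕ) (h : allB f n = true) : ∀ i < n, f i = true := by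
  induction n with
  | zero => intro i hi; omega
  | succ n ih =>
    simp only [allB, Bool.and_eq_true] at h
    intro i hi
    rcases Nat.lt_succ_iff_lt_or_eq.1 hi with h' | h'
    · exact ih h.2 i h'
    · rw [h']; exact h.1

def kchk (u : ℕ) (c : ℕ → ℕ → ℕ) : Bool :=
  allB (fun p => allB (fun a => Nat.blt (c a p) (6 * u + 3) && Nat.beq (c a (c a (c a p))) p)
      (3 * u + 1) &&
    Nat.beq (kmask c p (3 * u + 1) ||| 2 ^ p) (2 ^ (6 * u + 3) - 1)) (6 * u + 3)

theorem KTS.of_chk (u : ℕ) (c : ℕ → ℕ → ℕ) (h : kchk u c = true) : KTS u := by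
  have h' := allB_spec _ _ h
  simp only [Bool.and_eq_true] at h'
  have hA : ∀ p < 6 * u + 3, ∀ a < 3 * u + 1, c a p < 6 * u + 3 ∧ c a (c a (c a p)) = p := by
    intro p hp a ha
    have := allB_spec _ _ (h' p hp).1 a ha
    simp only [Bool.and_eq_true, Nat.blt_eq] at this
    exact ⟨this.1, Nat.eq_of_beq_eq_true this.2⟩
  have hB : ∀ p < 6 * u + 3, kmask c p (3 * u + 1) ||| 2 ^ p = 2 ^ (6 * u + 3) - 1 :=
    fun p hp => Nat.eq_of_beq_eq_true (h' p hp).2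
  refine ⟨fun a p => ⟨c a p, (hA p p.2 a a.2).1⟩, ?_, ?_⟩
  · intro a p
    ext
    exact (hA p p.2 a a.2).2
  · intro p q hpq
    have h1 : ((kmask c p (3 * u + 1)) ||| 2 ^ (p : ℕ)).testBit q = true := by
      rw [hB p p.2, Nat.testBit_two_pow_sub_one]
      simp
    rw [Nat.testBit_or, Nat.testBit_two_pow] at h1
    have hne : ¬ ((p : ℕ) = q) := fun h => hpq (Fin.ext h)
    simp only [hne, decide_false, Bool.or_false] at h1
    obtain ⟨a, ha, h2⟩ := kmask_spec _ _ _ _ h1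
    refine ⟨⟨a, ha⟩, ?_⟩
    rcases h2 with h2 | h2
    · left; ext; exact h2
    · right; ext
      change c a q = p
      rw [← h2]; exact (hA p p.2 a ha).2

def shA (r a p : ℕ) : ℕ := bif Nat.beq p (2 * r) then p else p / r * r + (p % r + a) % r

def cA (r D a p : ℕ) : ℕ := shA r a (D / 2 ^ (8 * shA r (r - a) p) % 256)

def shB (x a p : ℕ) : ℕ := p / x * x + (p % x + a) % x

def byt (E k : ℕ) : ℕ := E / 2 ^ (8 * k) % 256

def cB (x D E a p : ℕ) : ℕ :=
  bif Nat.blt a x then shB x a (byt D (shB x (x - a) p))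
  else (p / x + 1) % 3 * x +
    (p % x + (x - byt E (3 * (a - x) + p / x)) + byt E (3 * (a - x) + (p / x + 1) % 3)) % x


theorem kts_1 : KTS 1 :=
  KTS.of_chk 1 (cB 3
    18809008965873566211
    131584)
    (by decide +kernel)

theorem kts_2 : KTS 2 :=
  KTS.of_chk 2 (cA 7
    101651602770953306061110962815495)
    (by decide +kernel)

theorem kts_3 : KTS 3 :=
  KTS.of_chk 3 (cB 7
    19045194867306356324660133366435098901485707265295
    92666069231310341120)
    (by decide +kernel)

theorem kts_4 : KTS 4 :=
  KTS.of_chk 4 (cB 9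
    7409691902925102822542639968038688148026389233611662166418001156
    314320805333523975446595584)
    (by decide +kernel)

theorem kts_5 : KTS 5 :=
  KTS.of_chk 5 (cB 11
    815979660837022535056335315032203558446491993078220382042717707518821287527178
    26042614562148041326110390419390464)
    (by decide +kernel)

theorem kts_6 : KTS 6 :=
  KTS.of_chk 6 (cB 13
    327334682936864602215939399946328404236933944025228093552604388056701333881759315930199228936
    437603155196652500319132085234119693370624)
    (by decide +kernel)

theorem kts_7 : KTS 7 :=
  KTS.of_chk 7 (cB 15
    377715196350187201332932963788193553615994945577070659522524296581641290787589640972043908176950760099612430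
    2980093706404956810037439894099142408177795008000)
    (by decide +kernel)

theorem kts_8 : KTS 8 :=
  KTS.of_chk 8 (cA 25
    20804879139402251777878278232164792170969018529372166767078635682210688633273872911721272821255779734207009273086880025)
    (by decide +kernel)

theorem kts_9 : KTS 9 :=
  KTS.of_chk 9 (cB 19
    33443255233815176690555405200758173100664358942530647032481926507865385104357696626961357384532203177640955832581391719644898400882394131
    7017498832843028986512235684622493629155874926061278496144557056)
    (by decide +kernel)

theorem kts_10 : KTS 10 :=
  KTS.of_chk 10 (cB 21
    10263741124610959308921607493250544184386820359807305870438322232837120276625570703842565052983592151565078404019363552439048874701711482244887969924368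
    27903545211877174692128586196014829449414356765913003167030435594374912)
    (by decide +kernel)

theorem kts_11 : KTS 11 :=
  KTS.of_chk 11 (cB 23
    2026546493092188449499932890607788668401340608509452722182078085631220264317973248861741835824976588536857163570717605805301647267147951206904455076469044864679885581
    235655146327746030213465906363654931327213704573823084007469540002193666478848)
    (by decide +kernel)

theorem kts_12 : KTS 12 :=
  KTS.of_chk 12 (cA 37
    1773627628874836220890994476917709775258978792350270650688266076669948644938316579988682417124492078636658079075241760652293604256892571588033189125724548607063691079462805178405)
    (by decide +kernel)

theorem kts_13 : KTS 13 :=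
  KTS.of_chk 13 (cB 27
    32457058280223334574496537881700297941687071348317594108696592245569967598036318431330834292473687935148622255991449572052815196217609403684477342460179931055027761985177136837630438588346730010
    295752180377346961418092987398791685448897966017687786201490574703009150877877713923955359744)
    (by decide +kernel)

theorem kts_14 : KTS 14 :=
  KTS.of_chk 14 (cA 43
    190841900255161872563929523925846373522881218517615216853978294863562801966273915061793718249189684340649503794667329064046182442350942536919230606173918691188637335729105289164828345960655247373574772964651)
    (by decide +kernel)

theorem kts_15 : KTS 15 :=
  KTS.of_chk 15 (cB 31
    29039574118500201549171968298273189718766477773329690688496032106728385722212490980405046145977445788897492811936163064506156736640804494706628408056204045903149683512300509314189037296773318958535084921618236652156608584223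
    120050326432048325390447783445081434960536117654691471137996186565265525531771835777180875168491855653831680)
    (by decide +kernel)

theorem kts_26 : KTS 26 :=
  KTS.of_chk 26 (cA 79
    96002025912100334189046685315409086145956764523562617755502671709654441825450172006516115032679051512339451770626413131933558608983335421739041303441119074196156330983384358889470003914949232713585481605236031638077409824348763226278553585709917076362628791190342260565418191589886076259581453485017929659529607640937880296306276007787587720719903217266969998455245069104465645391)
    (by decide +kernel)

theorem kts_27 : KTS 27 :=
  KTS.of_chk 27 (cB 55
    7261412219575482082176467556780983521718373434667455676142855824332597202207298944914209759687889079073606965423127917756410044367470747025683667526314453592475197164463003236621580913916080904284017662328076113476281959964339277279675259950074540229327373985592529125136133642131451274125265021636720188341318395950406875066865277722215369513799606099541715734383518540797942339222848399213804895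
    160113162411401638519882660269820019525487361147197887035692914097177462301225971762955956619214515390860499757769959746177588674927103071092383584131881243734901686792670724940029601220123822080)
    (by decide +kernel)

theorem kts_0 : KTS 0 :=
  ⟨fun _ p => p + 1, by decide, by decide⟩

def KOn {X : Type} (S : Set X) : Prop :=
  ∃ C : X → X × Bool → X × Bool,
    (∀ x ∈ S, ∀ p : X × Bool, p.1 ∈ S → p.1 ≠ x →
      (C x p).1 ∈ S ∧ (C x p).1 ≠ x ∧ C x (C x (C x p)) = p) ∧
    ∀ p q : X × Bool, p.1 ∈ S → q.1 ∈ S → p.1 ≠ q.1 →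
      ∃ x ∈ S, x ≠ p.1 ∧ x ≠ q.1 ∧ (C x p = q ∨ C x q = p)

theorem KOn.empty {X : Type} : KOn (∅ : Set X) :=
  ⟨fun _ p => p, by simp, by simp⟩

theorem KOn.toKTS {X : Type} {S : Set X} (u : ℕ) [Fintype S] (hc : Fintype.card S = 3 * u + 1)
    (h : KOn S) : KTS u := by
  classical
  obtain ⟨C, h1, h2⟩ := h
  let c : S → Option (S × Bool) → Option (S × Bool) := fun x p =>
    match p with
    | none => some (x, false)
    | some (y, b) => if hy : y = x then (if b = true then none else some (x, true))
        else some (⟨(C x (y, b)).1, (h1 x x.2 (y, b) y.2 (fun h => hy (Subtype.ext h))).1⟩,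
          (C x (y, b)).2)
  have hcv : ∀ (x y : S) (b : Bool) (hy : y ≠ x), c x (some (y, b)) =
      some (⟨(C x (y, b)).1, (h1 x x.2 (y, b) y.2 (fun h => hy (Subtype.ext h))).1⟩,
          (C x (y, b)).2) := by
    intro x y b hy
    simp only [c, dif_neg hy]
  have hcn : ∀ (x y : S) (b : Bool) (p : X × Bool), y ≠ x → ∀ hp : p.1 ∈ S, C x (y, b) = p →
      c x (some (y, b)) = some (⟨p.1, hp⟩, p.2) := by
    intro x y b p hy hp h
    rw [hcv x y b hy]
    subst h; rfl
  refine KTS.of (ι := S) (V := Option (S × Bool)) u hc (by simp [hc]; ring) c ?_ ?_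
  · intro x p
    rcases p with _ | ⟨y, b⟩
    · simp [c]
    · by_cases hy : y = x
      · subst hy
        cases b <;> simp [c]
      · have hy' : (y : X) ≠ x := fun h => hy (Subtype.ext h)
        obtain ⟨k1, k2, k3⟩ := h1 x x.2 (y, b) y.2 hy'
        obtain ⟨l1, l2, l3⟩ := h1 x x.2 _ k1 k2
        rw [hcn x y b _ hy k1 rfl]
        rw [hcn x ⟨_, k1⟩ _ _ (fun h => k2 (congrArg Subtype.val h)) l1 rfl]
        exact hcn x ⟨_, l1⟩ _ (y, b) (fun h => l2 (congrArg Subtype.val h)) y.2 k3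
  · intro p q hpq
    rcases p with _ | ⟨y, b⟩ <;> rcases q with _ | ⟨z, b'⟩
    · exact absurd rfl hpq
    · refine ⟨z, ?_⟩
      cases b' <;> simp [c]
    · refine ⟨y, ?_⟩
      cases b <;> simp [c]
    · by_cases hy : y = z
      · subst hy
        refine ⟨y, ?_⟩
        cases b <;> cases b' <;> simp [c] at hpq ⊢
      · obtain ⟨x, hx, n1, n2, hC⟩ := h2 (y, b) (z, b') y.2 z.2 (fun h => hy (Subtype.ext h))
        refine ⟨⟨x, hx⟩, ?_⟩
        rcases hC with hC | hC
        · left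
          exact hcn ⟨x, hx⟩ y b (z, b') (fun h => n1 (congrArg Subtype.val h).symm) z.2 hC
        · right
          exact hcn ⟨x, hx⟩ z b' (y, b) (fun h => n2 (congrArg Subtype.val h).symm) y.2 hC

theorem KTS.toKOnUniv {u : ℕ} (h : KTS u) :
    KOn (Set.univ : Set (Fin (3 * u + 1))) := by
  classical
  obtain ⟨c, h1, h2⟩ := h
  have hinj : ∀ a p q, c a p = c a q → p = q := by
    intro a p q h
    rw [← h1 a p, h, h1]
  let o : Fin (6 * u + 3) := 0
  let f : Option (Fin (3 * u + 1) × Bool) → Fin (6 * u + 3) := fun p =>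
    match p with
    | none => o
    | some (a, false) => c a o
    | some (a, true) => c a (c a o)
  have hs : Function.Surjective f := by
    intro v
    by_cases hv : o = v
    · exact ⟨none, hv⟩
    · obtain ⟨a, ha | ha⟩ := h2 o v hv
      · exact ⟨some (a, false), ha⟩
      · refine ⟨some (a, true), ?_⟩
        change c a (c a o) = v
        rw [← ha, h1]
  have hb : Function.Bijective f := by
    rw [Fintype.bijective_iff_surjective_and_card]
    refine ⟨hs, ?_⟩
    simp; ring
  have f0 : f none = o := rfl
  have f1 : ∀ a, f (some (a, false)) = c a o := fun a => rfl
  have f2 : ∀ a, f (some (a, true)) = c a (c a o) := fun a => rfl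
  have hI : ∀ a b, f a = f b → a = b := fun a b h => hb.1 h
  clear_value f
  have key : ∀ a (p : Fin (3 * u + 1) × Bool), p.1 ≠ a →
      ∃ q : Fin (3 * u + 1) × Bool, q.1 ≠ a ∧ f (some q) = c a (f (some p)) := by
    intro a p hp
    obtain ⟨q, hq⟩ := hs (c a (f (some p)))
    rcases q with _ | ⟨b, β⟩
    · exfalso
      have : f (some p) = f (some (a, true)) := by
        rw [f2, ← f0, hq, h1]
      have := hI _ _ this
      simp only [Option.some.injEq] at this
      exact hp (by rw [this])
    · refine ⟨(b, β), ?_, hq⟩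
      rintro rfl
      cases β
      · rw [f1] at hq
        have := hinj _ _ _ hq
        rw [← f0] at this
        have := hI _ _ this
        simp at this
      · rw [f2] at hq
        have := hinj _ _ _ hq
        rw [← f1] at this
        have := hI _ _ this
        simp only [Option.some.injEq] at this
        exact hp (by rw [← this])
  choose! C hC1 hC2 using key
  have hCu : ∀ a p q, p.1 ≠ a → f (some q) = c a (f (some p)) → C a p = q := by
    intro a p q hp hq
    have := hI _ _ ((hC2 a p hp).trans hq.symm)
    simpa using this
  have cov : ∀ a (p q : Fin (3 * u + 1) × Bool), p.1 ≠ q.1 → c a (f (some p)) = f (some q) →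
      a ≠ p.1 ∧ a ≠ q.1 := by
    rintro a ⟨b, β⟩ ⟨d, δ⟩ hne hpq
    simp only at hne ⊢
    refine ⟨?_, ?_⟩
    · rintro rfl
      cases β
      · rw [f1, ← f2] at hpq
        have := hI _ _ hpq
        simp at this
        exact hne this.1
      · rw [f2, h1, ← f0] at hpq
        have := hI _ _ hpq
        simp at this
    · rintro rfl
      cases δ
      · rw [f1] at hpq
        have := hinj _ _ _ hpq
        rw [← f0] at this
        have := hI _ _ this
        simp at this
      · rw [f2] at hpq
        have := hinj _ _ _ hpq
        rw [← f1] at this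
        have := hI _ _ this
        simp at this
        exact hne this.1
  refine ⟨C, ?_, ?_⟩
  · intro a _ p _ hp
    refine ⟨Set.mem_univ _, hC1 a p hp, ?_⟩
    have k1 := hC1 a p hp
    have k2 := hC1 a _ k1
    apply hCu _ _ _ k2
    rw [hC2 a _ k1, hC2 a _ hp, h1]
  · intro p q _ _ hpq
    have hne : f (some p) ≠ f (some q) := by
      intro h
      have := hI _ _ h
      simp only [Option.some.injEq] at this
      exact hpq (by rw [this])
    obtain ⟨a, ha⟩ := h2 _ _ hne
    refine ⟨a, Set.mem_univ _, ?_⟩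
    rcases ha with ha | ha
    · obtain ⟨n1, n2⟩ := cov a p q hpq ha
      exact ⟨n1, n2, Or.inl (hCu _ _ _ n1.symm ha.symm)⟩
    · obtain ⟨n1, n2⟩ := cov a q p hpq.symm ha
      exact ⟨n2, n1, Or.inr (hCu _ _ _ n1.symm ha.symm)⟩

theorem KOn.of_univ {X Y : Type} (e : Y → X) (he : Function.Injective e)
    (h : KOn (Set.univ : Set Y)) : KOn (Set.range e) := by
  classical
  obtain ⟨C, h1, h2⟩ := h
  by_cases hY : Nonempty Y
  swap
  · have : Set.range e = ∅ := by
      rw [Set.range_eq_empty_iff]; exact not_nonempty_iff.1 hY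
    rw [this]; exact KOn.empty
  let g := Function.invFun e
  have hg : ∀ y, g (e y) = y := Function.leftInverse_invFun he
  let D : X → X × Bool → X × Bool := fun x p =>
    (e (C (g x) (g p.1, p.2)).1, (C (g x) (g p.1, p.2)).2)
  have hD : ∀ a (p : Y × Bool), D (e a) (e p.1, p.2) = (e (C a p).1, (C a p).2) := by
    intro a p
    simp only [D, hg]
  clear_value D
  refine ⟨D, ?_, ?_⟩
  · rintro _ ⟨a, rfl⟩ ⟨_, β⟩ ⟨b, rfl⟩ hne
    simp only at hne
    obtain ⟨k1, k2, k3⟩ := h1 a trivial (b, β) trivial (fun h => hne (congrArg e h))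
    have := hD a (b, β)
    simp only at this
    rw [this, hD, hD, k3]
    exact ⟨⟨_, rfl⟩, fun h => k2 (he h), rfl⟩
  · rintro ⟨_, β⟩ ⟨_, δ⟩ ⟨b, rfl⟩ ⟨d, rfl⟩ hne
    simp only at hne
    obtain ⟨a, -, n1, n2, hC⟩ := h2 (b, β) (d, δ) trivial trivial (fun h => hne (congrArg e h))
    refine ⟨e a, ⟨a, rfl⟩, fun h => n1 (he h), fun h => n2 (he h), ?_⟩
    rcases hC with hC | hC
    · left
      have := hD a (b, β)
      rw [hC] at this; exact this
    · right
      have := hD a (d, δ)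
      rw [hC] at this; exact this

theorem KTS.toKOn {X : Type} {u : ℕ} (h : KTS u) (S : Set X) [Fintype S]
    (hc : Fintype.card S = 3 * u + 1) : KOn S := by
  let e := (Fintype.equivFinOfCardEq hc).symm
  have := KOn.of_univ (fun i => (e i : X)) (fun a b h => e.injective (Subtype.ext h)) h.toKOnUniv
  convert this
  ext x
  constructor
  · intro hx; exact ⟨e.symm ⟨x, hx⟩, by simp⟩
  · rintro ⟨y, rfl⟩; exact (e y).2

theorem KOn.pbd {X : Type} {β : Type*} (S : Set X) (B : β → Set X) (hsub : ∀ b, B b ⊆ S)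
    (hex : ∀ x ∈ S, ∀ y ∈ S, x ≠ y → ∃ b, x ∈ B b ∧ y ∈ B b)
    (huniq : ∀ x y, x ≠ y → ∀ b b', x ∈ B b → y ∈ B b → x ∈ B b' → y ∈ B b' → b = b')
    (hB : ∀ b, KOn (B b)) : KOn S := by
  classical
  by_cases hβ : Nonempty β
  swap
  · refine ⟨fun _ p => p, ?_, ?_⟩
    · intro x hx p hp hne
      exact ⟨hp, hne, rfl⟩
    · intro p q hp hq hne
      obtain ⟨b, -⟩ := hex _ hp _ hq hne
      exact absurd ⟨b⟩ hβ
  choose C h1 h2 using hB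
  have hex' : ∀ x y, ∃ b, x ∈ S → y ∈ S → x ≠ y → x ∈ B b ∧ y ∈ B b := by
    intro x y
    by_cases h : x ∈ S ∧ y ∈ S ∧ x ≠ y
    · obtain ⟨b, hb⟩ := hex x h.1 y h.2.1 h.2.2
      exact ⟨b, fun _ _ _ => hb⟩
    · exact ⟨hβ.some, fun a b c => absurd ⟨a, b, c⟩ h⟩
  choose bl hbl using hex'
  refine ⟨fun x p => C (bl x p.1) x p, ?_, ?_⟩
  · intro x hx p hp hne
    obtain ⟨m1, m2⟩ := hbl x p.1 hx hp hne.symm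
    set b := bl x p.1 with hb
    obtain ⟨k1, k2, k3⟩ := h1 b x m1 p m2 hne
    obtain ⟨l1, l2, l3⟩ := h1 b x m1 _ k1 k2
    have e : ∀ y, y ∈ B b → y ≠ x → bl x y = b := by
      intro y hy hyx
      obtain ⟨m3, m4⟩ := hbl x y hx (hsub _ hy) hyx.symm
      exact huniq x y hyx.symm _ _ m3 m4 m1 hy
    refine ⟨hsub _ k1, k2, ?_⟩
    simp only
    rw [← hb, e _ k1 k2, e _ l1 l2, k3]
  · intro p q hp hq hne
    obtain ⟨m1, m2⟩ := hbl p.1 q.1 hp hq hne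
    set b := bl p.1 q.1 with hb
    obtain ⟨x, hx, n1, n2, hC⟩ := h2 b p q m1 m2 hne
    have e : ∀ y, y ∈ B b → x ≠ y → bl x y = b := by
      intro y hy hyx
      obtain ⟨m3, m4⟩ := hbl x y (hsub _ hx) (hsub _ hy) hyx
      exact huniq x y hyx _ _ m3 m4 hx hy
    refine ⟨x, hsub _ hx, n1, n2, ?_⟩
    simp only
    rw [e _ m1 n1, e _ m2 n2]
    exact hC

def pat (t : Bool) (s : Fin 15) (p : Fin 5 × Fin 3) : Bool :=
  match t with
  | false =>
    let z := (6 * p.1.val + 10 * p.2.val + 15 - s.val) % 15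
    z == 0 || z == 1 || z == 3 || z == 7
  | true => decide (s.val < 9) && (decide (p.1.val < 4) &&
      (p.2.val == (match p.1.val with
        | 0 => s.val / 3
        | 1 => s.val % 3
        | 2 => (s.val / 3 + s.val % 3) % 3
        | _ => (s.val / 3 + 2 * (s.val % 3)) % 3)))

theorem pat_grp : ∀ t s g w w', pat t s (g, w) = true → pat t s (g, w') = true → w = w' := by
  decide +kernel
theorem pat_ex : ∀ g w g' w', g ≠ g' → ∃ s, pat false s (g, w) = true ∧ pat false s (g', w') = true := by
  decide +kernel
theorem pat_ex' : ∀ g w g' w', g ≠ g' → g ≠ 4 → g' ≠ 4 →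
    ∃ s, pat true s (g, w) = true ∧ pat true s (g', w') = true := by
  decide +kernel
theorem pat_un0 : ∀ t g w, ∀ s, pat t s (g, w) = true → ∀ g' w', pat t s (g', w') = true →
    g ≠ g' → ∀ s', pat t s' (g, w) = true → pat t s' (g', w') = true → s = s' := by
  decide +kernel
theorem pat_un : ∀ t s s' g w g' w', g ≠ g' → pat t s (g, w) = true → pat t s (g', w') = true →
    pat t s' (g, w) = true → pat t s' (g', w') = true → s = s' :=
  fun t s s' g w g' w' h a b c d => pat_un0 t g w s a g' w' b h s' c d
theorem pat_4 : ∀ s g w, pat true s (g, w) = true → g ≠ 4 := by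
  decide +kernel
theorem pat_card : ∀ t s, Fintype.card {p // pat t s p = true} = 0 ∨
    Fintype.card {p // pat t s p = true} = 4 := by
  decide +kernel

theorem KTS.rec5 {R : Type} [CommRing R] [Fintype R] (n t : ℕ) (hR : Fintype.card R = n)
    (ht : t ≤ n) (al be : Fin 5 → R)
    (hu : ∀ g g', g ≠ g' → IsUnit (al g * be g' - al g' * be g))
    (k1 : KTS 1) (kn : KTS n) (kt : KTS t) : KTS (4 * n + t) := by
  classical
  obtain ⟨T, -, hT⟩ := Finset.exists_subset_card_eq (s := (Finset.univ : Finset R)) (n := t)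
    (by rw [Finset.card_univ, hR]; exact ht)
  let ok : Fin 5 → R → Prop := fun g v => g = 4 → v ∈ T
  have hcard : ∀ g, Fintype.card {v // ok g v} = if g = 4 then t else n := by
    intro g
    by_cases hg : g = 4
    · simp [ok, hg, hT]
    · simp [ok, hg, hR]
  let f : Fin 5 → R × R → R := fun g y => al g * y.1 + be g * y.2
  have f_inj : ∀ g g', g ≠ g' → ∀ y y', f g y = f g y' → f g' y = f g' y' → y = y' := by
    intro g g' hg y y' h h'
    simp only [f] at h h'
    have hU := hu g g' hg
    ext
    · apply hU.mul_left_cancel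
      linear_combination be g' * h - be g * h'
    · apply hU.mul_left_cancel
      linear_combination al g * h' - al g' * h
  have f_sur : ∀ g g', g ≠ g' → ∀ v v', ∃ y, f g y = v ∧ f g' y = v' := by
    intro g g' hg v v'
    obtain ⟨i, hi⟩ := (hu g g' hg).exists_right_inv
    refine ⟨(i * (be g' * v - be g * v'), i * (al g * v' - al g' * v)), ?_, ?_⟩
    · simp only [f]; linear_combination v * hi
    · simp only [f]; linear_combination v' * hi
  let S : Set (Option ((Fin 5 × R) × Fin 3)) := {x | ∀ p, x = some p → ok p.1.1 p.1.2}
  let B : Fin 5 ⊕ ((R × R) × (Bool × Fin 15)) → Set (Option ((Fin 5 × R) × Fin 3)) := fun b =>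
    match b with
    | .inl g => {x | ∀ p, x = some p → p.1.1 = g ∧ ok g p.1.2}
    | .inr (y, (t, s)) => {x | (t = true ↔ f 4 y ∉ T) ∧
        ∃ p : Fin 5 × Fin 3, pat t s p = true ∧ x = some ((p.1, f p.1 y), p.2)}
  have hK : KOn S := by
    refine KOn.pbd S B ?_ ?_ ?_ ?_
    · rintro (g | ⟨y, t, s⟩) x hx
      · intro p hp
        obtain ⟨h1, h2⟩ := hx p hp
        rw [h1]; exact h2
      · obtain ⟨h1, p, h2, rfl⟩ := hx
        intro q hq
        simp only [Option.some.injEq] at hq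
        subst hq
        simp only
        intro h4
        cases t
        · simp at h1
          rw [h4]; exact h1
        · exact absurd h4 (pat_4 s p.1 p.2 h2)
    · intro x hx y hy hne
      rcases x with _ | ⟨⟨g, v⟩, w⟩ <;> rcases y with _ | ⟨⟨g', v'⟩, w'⟩
      · exact absurd rfl hne
      · refine ⟨.inl g', by simp [B], ?_⟩
        intro p hp
        simp only [Option.some.injEq] at hp
        subst hp
        exact ⟨rfl, hy _ rfl⟩
      · refine ⟨.inl g, ?_, by simp [B]⟩
        intro p hp
        simp only [Option.some.injEq] at hp
        subst hp
        exact ⟨rfl, hx _ rfl⟩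
      · by_cases hg : g = g'
        · subst hg
          refine ⟨.inl g, ?_, ?_⟩ <;>
          · intro p hp
            simp only [Option.some.injEq] at hp
            subst hp
            first | exact ⟨rfl, hx _ rfl⟩ | exact ⟨rfl, hy _ rfl⟩
        · obtain ⟨y, rfl, rfl⟩ := f_sur g g' hg v v'
          by_cases h4 : f 4 y ∈ T
          · obtain ⟨s, h1, h2⟩ := pat_ex g w g' w' hg
            exact ⟨.inr (y, false, s), ⟨by simp [h4], (g, w), h1, rfl⟩,
              ⟨by simp [h4], (g', w'), h2, rfl⟩⟩
          · obtain ⟨s, h1, h2⟩ := pat_ex' g w g' w' hg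
              (by rintro rfl; exact h4 (hx _ rfl rfl)) (by rintro rfl; exact h4 (hy _ rfl rfl))
            exact ⟨.inr (y, true, s), ⟨by simp [h4], (g, w), h1, rfl⟩,
              ⟨by simp [h4], (g', w'), h2, rfl⟩⟩
    · have aux : ∀ x y : Option ((Fin 5 × R) × Fin 3), x ≠ y → ∀ g b, x ∈ B (.inl g) → y ∈ B (.inl g) → x ∈ B (.inr b) →
          y ∈ B (.inr b) → False := by
        rintro x y hne g ⟨z, t, s⟩ hx hy ⟨h1, p, h2, rfl⟩ ⟨h3, q, h4, rfl⟩
        obtain ⟨e1, -⟩ := hx _ rfl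
        obtain ⟨e2, -⟩ := hy _ rfl
        simp only at e1 e2
        obtain ⟨p1, p2⟩ := p
        obtain ⟨q1, q2⟩ := q
        simp only at e1 e2
        subst e1 e2
        have := pat_grp _ _ _ _ _ h2 h4
        subst this
        exact hne rfl
      rintro x y hne (g | ⟨z, t, s⟩) (g' | ⟨z', t', s'⟩) h1 h2 h3 h4
      · rcases x with _ | p
        · rcases y with _ | q
          · exact absurd rfl hne
          · rw [← (h2 _ rfl).1, ← (h4 _ rfl).1]
        · rw [← (h1 _ rfl).1, ← (h3 _ rfl).1]
      · exact (aux x y hne _ (z', t', s') h1 h2 h3 h4).elim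
      · exact (aux x y hne _ (z, t, s) h3 h4 h1 h2).elim
      · obtain ⟨a1, ⟨p1, p2⟩, b1, rfl⟩ := h1
        obtain ⟨-, ⟨q1, q2⟩, b2, rfl⟩ := h2
        obtain ⟨a3, ⟨r1, r2⟩, b3, c3⟩ := h3
        obtain ⟨-, ⟨s1, s2⟩, b4, c4⟩ := h4
        simp only [Option.some.injEq, Prod.mk.injEq] at c3 c4
        obtain ⟨⟨rfl, c3⟩, rfl⟩ := c3
        obtain ⟨⟨rfl, c4⟩, rfl⟩ := c4
        have hg : p1 ≠ q1 := by
          rintro rfl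
          have := pat_grp _ _ _ _ _ b1 b2
          subst this
          exact hne rfl
        have := f_inj _ _ hg _ _ c3 c4
        subst this
        have : t = t' := by
          rw [Bool.eq_iff_iff]; exact a1.trans a3.symm
        subst this
        have := pat_un _ _ _ _ _ _ _ hg b1 b2 b3 b4
        subst this
        rfl
    · rintro (g | ⟨y, t', s⟩)
      · let e : Option ({v // ok g v} × Fin 3) → Option ((Fin 5 × R) × Fin 3) := fun o => o.map fun q => ((g, q.1.1), q.2)
        have he : Function.Injective e := by
          apply Option.map_injective
          rintro ⟨⟨v, hv⟩, w⟩ ⟨⟨v', hv'⟩, w'⟩ h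
          simp only [Prod.mk.injEq] at h
          obtain ⟨⟨-, rfl⟩, rfl⟩ := h
          rfl
        have hr : Set.range e = B (.inl g) := by
          ext x
          constructor
          · rintro ⟨o, rfl⟩
            rcases o with _ | ⟨⟨v, hv⟩, w⟩
            · simp [e, B]
            · intro p hp
              simp only [e, Option.map_some, Option.some.injEq] at hp
              subst hp
              exact ⟨rfl, hv⟩
          · intro hx
            rcases x with _ | ⟨⟨g', v⟩, w⟩
            · exact ⟨none, rfl⟩
            · obtain ⟨h1, h2⟩ := hx _ rfl
              simp only at h1 h2
              subst h1
              exact ⟨some (⟨v, h2⟩, w), rfl⟩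
        rw [← hr]
        apply KOn.of_univ e he
        by_cases hg : g = 4
        · refine kt.toKOn _ ?_
          rw [Fintype.card_setUniv, Fintype.card_option, Fintype.card_prod, hcard, if_pos hg]
          simp [mul_comm]
        · refine kn.toKOn _ ?_
          rw [Fintype.card_setUniv, Fintype.card_option, Fintype.card_prod, hcard, if_neg hg]
          simp [mul_comm]
      · by_cases ht' : (t' = true ↔ f 4 y ∉ T)
        swap
        · have : B (.inr (y, t', s)) = ∅ := by
            ext x
            simp only [B, Set.mem_ofPred_eq, Set.mem_empty_iff_false, iff_false]
            exact fun h => ht' h.1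
          rw [this]; exact KOn.empty
        let e : {p // pat t' s p = true} → Option ((Fin 5 × R) × Fin 3) := fun p => some ((p.1.1, f p.1.1 y), p.1.2)
        have he : Function.Injective e := by
          rintro ⟨⟨v, hv⟩, w⟩ ⟨⟨v', hv'⟩, w'⟩ h
          simp only [e, Option.some.injEq, Prod.mk.injEq] at h
          obtain ⟨⟨rfl, -⟩, rfl⟩ := h
          rfl
        have hr : Set.range e = B (.inr (y, t', s)) := by
          ext x
          constructor
          · rintro ⟨o, rfl⟩
            exact ⟨ht', o.1, o.2, rfl⟩
          · rintro ⟨-, p, hp, rfl⟩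
            exact ⟨⟨p, hp⟩, rfl⟩
        rw [← hr]
        apply KOn.of_univ e he
        rcases pat_card t' s with h0 | h4
        · have : IsEmpty {p // pat t' s p = true} := Fintype.card_eq_zero_iff.1 h0
          rw [Set.univ_eq_empty_iff.2 this]
          exact KOn.empty
        · refine k1.toKOn _ ?_
          rw [Fintype.card_setUniv, h4]
  let e : S ≃ Option ((Σ g, {v // ok g v}) × Fin 3) :=
    { toFun := fun x => match x with
        | ⟨none, _⟩ => none
        | ⟨some p, hp⟩ => some (⟨p.1.1, ⟨p.1.2, hp p rfl⟩⟩, p.2)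
      invFun := fun x => match x with
        | none => ⟨none, by simp [S]⟩
        | some (⟨g, ⟨v, hv⟩⟩, w) => ⟨some ((g, v), w), by
            intro p hp
            simp only [Option.some.injEq] at hp
            subst hp; exact hv⟩
      left_inv := by
        rintro ⟨_ | ⟨⟨g, v⟩, w⟩, hx⟩ <;> rfl
      right_inv := by
        rintro (_ | ⟨⟨g, ⟨v, hv⟩⟩, w⟩) <;> rfl }
  refine hK.toKTS _ ?_
  rw [Fintype.card_congr e, Fintype.card_option, Fintype.card_prod, Fintype.card_sigma]
  simp only [hcard, Fin.sum_univ_five, Fintype.card_fin]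
  simp only [show ¬ ((0 : Fin 5) = 4) by decide, show ¬ ((1 : Fin 5) = 4) by decide,
    show ¬ ((2 : Fin 5) = 4) by decide, show ¬ ((3 : Fin 5) = 4) by decide, if_false, if_true]
  ring

theorem KTS.rec_ab {R : Type} [CommRing R] [Fintype R] (n t : ℕ) (hR : Fintype.card R = n)
    (ht : t ≤ n) (a b : R) (ha : IsUnit a) (hb : IsUnit b) (ha1 : IsUnit (a - 1))
    (hb1 : IsUnit (b - 1)) (hab : IsUnit (a - b)) (kn : KTS n) (kt : KTS t) :
    KTS (4 * n + t) := by
  refine KTS.rec5 n t hR ht ![1, 0, 1, 1, 1] ![0, 1, 1, a, b] ?_ kts_1 kn kt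
  have ha1' : IsUnit (1 - a) := by rw [← neg_sub]; exact ha1.neg
  have hb1' : IsUnit (1 - b) := by rw [← neg_sub]; exact hb1.neg
  have hab' : IsUnit (b - a) := by rw [← neg_sub]; exact hab.neg
  intro g g' hg
  fin_cases g <;> fin_cases g' <;> simp_all

theorem KTS.rec_field {F : Type} [Field F] [Fintype F] (n t : ℕ) (hF : Fintype.card F = n)
    (h4 : 4 ≤ n) (ht : t ≤ n) (kn : KTS n) (kt : KTS t) : KTS (4 * n + t) := by
  classical
  obtain ⟨a, ha⟩ : ∃ a : F, a ∉ ({0, 1} : Finset F) := by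
    by_contra! h
    have := Finset.card_le_card (fun x _ => h x : Finset.univ ⊆ ({0, 1} : Finset F))
    rw [Finset.card_univ, hF] at this
    have := Finset.card_le_two (a := (0 : F)) (b := 1)
    omega
  obtain ⟨b, hb⟩ : ∃ b : F, b ∉ ({0, 1, a} : Finset F) := by
    by_contra! h
    have := Finset.card_le_card (fun x _ => h x : Finset.univ ⊆ ({0, 1, a} : Finset F))
    rw [Finset.card_univ, hF] at this
    have := Finset.card_le_three (a := (0 : F)) (b := 1) (c := a)
    omega
  simp only [Finset.mem_insert, Finset.mem_singleton, not_or] at ha hb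
  refine KTS.rec_ab n t hF ht a b ?_ ?_ ?_ ?_ ?_ kn kt
  · exact isUnit_iff_ne_zero.2 ha.1
  · exact isUnit_iff_ne_zero.2 hb.1
  · exact isUnit_iff_ne_zero.2 (sub_ne_zero.2 ha.2)
  · exact isUnit_iff_ne_zero.2 (sub_ne_zero.2 hb.2.1)
  · exact isUnit_iff_ne_zero.2 (sub_ne_zero.2 (Ne.symm hb.2.2))

theorem KTS.rec_zmod (n t : ℕ) (h : Nat.Coprime n 6) (hn : n ≠ 0) (ht : t ≤ n) (kn : KTS n)
    (kt : KTS t) : KTS (4 * n + t) := by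
  have : NeZero n := ⟨hn⟩
  have h2 : IsUnit (2 : ZMod n) := by
    have := (ZMod.isUnit_iff_coprime 2 n).2 (by
      exact (Nat.Coprime.coprime_dvd_right (by norm_num : 2 ∣ 6) h).symm)
    simpa using this
  have h3 : IsUnit (3 : ZMod n) := by
    have := (ZMod.isUnit_iff_coprime 3 n).2 (by
      exact (Nat.Coprime.coprime_dvd_right (by norm_num : 3 ∣ 6) h).symm)
    simpa using this
  refine KTS.rec_ab (R := ZMod n) n t (ZMod.card n) ht 2 3 h2 h3 ?_ ?_ ?_ kn kt
  · norm_num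
  · norm_num; exact h2
  · norm_num

theorem KTS.rec_gf (p k n t : ℕ) [Fact p.Prime] (hk : k ≠ 0) (hn : p ^ k = n) (h4 : 4 ≤ n)
    (ht : t ≤ n) (kn : KTS n) (kt : KTS t) : KTS (4 * n + t) := by
  have : Fintype (GaloisField p k) := Fintype.ofFinite _
  refine KTS.rec_field (F := GaloisField p k) n t ?_ h4 ht kn kt
  rw [← hn, ← GaloisField.card p k hk, Nat.card_eq_fintype_card]

theorem kts_all (u : ℕ) : KTS u := by
  induction u using Nat.strong_induction_on with
  | _ u ih =>
  have : Fact (Nat.Prime 2) := ⟨Nat.prime_two⟩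
  have : Fact (Nat.Prime 3) := ⟨Nat.prime_three⟩
  have gf : ∀ p k n : ℕ, ∀ [Fact p.Prime], k ≠ 0 → p ^ k = n → 4 ≤ n → 4 * n ≤ u → u ≤ 5 * n →
      KTS u := by
    intro p k n _ hk hn h4 h1 h2
    have := KTS.rec_gf p k n (u - 4 * n) hk hn h4 (by omega) (ih n (by omega))
      (ih _ (by omega))
    rwa [Nat.add_sub_cancel' h1] at this
  have zm : ∀ n : ℕ, Nat.Coprime n 6 → 0 < n → 4 * n ≤ u → u ≤ 5 * n → KTS u := by
    intro n hn h4 h1 h2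
    have := KTS.rec_zmod n (u - 4 * n) hn (by omega) (by omega) (ih n (by omega))
      (ih _ (by omega))
    rwa [Nat.add_sub_cancel' h1] at this
  by_cases h75 : 75 ≤ u
  · obtain ⟨n, hn, hn1, hn2⟩ : ∃ n, Nat.Coprime n 6 ∧ u / 4 ≤ n + 3 ∧ n ≤ u / 4 := by
      have key : ∀ n, n % 6 = 1 ∨ n % 6 = 5 → Nat.Coprime n 6 := by
        intro n hn
        rw [Nat.Coprime, Nat.gcd_comm, Nat.gcd_rec]
        rcases hn with hn | hn <;> rw [hn] <;> rfl
      have h : u / 4 % 6 < 6 := Nat.mod_lt _ (by norm_num)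
      by_cases c1 : u / 4 % 6 = 0
      · exact ⟨u / 4 - 1, key _ (by omega), by omega, by omega⟩
      by_cases c2 : u / 4 % 6 = 5
      · exact ⟨u / 4, key _ (by omega), by omega, by omega⟩
      exact ⟨u / 4 - (u / 4 % 6 - 1), key _ (by omega), by omega, by omega⟩
    exact zm n hn (by omega) (by omega) (by omega)
  by_cases a1 : 64 ≤ u
  · exact gf 2 4 16 (by norm_num) (by norm_num) (by norm_num) (by omega) (by omega)
  by_cases a2 : 52 ≤ u
  · exact zm 13 (by norm_num) (by omega) (by omega) (by omega)
  by_cases a3 : 44 ≤ u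
  · exact zm 11 (by norm_num) (by omega) (by omega) (by omega)
  by_cases a4 : 36 ≤ u
  · exact gf 3 2 9 (by norm_num) (by norm_num) (by norm_num) (by omega) (by omega)
  by_cases a5 : 32 ≤ u
  · exact gf 2 3 8 (by norm_num) (by norm_num) (by norm_num) (by omega) (by omega)
  by_cases a6 : 28 ≤ u
  · exact zm 7 (by norm_num) (by omega) (by omega) (by omega)
  by_cases a7 : 26 ≤ u
  · obtain rfl | rfl : u = 26 ∨ u = 27 := by omega
    · exact kts_26
    · exact kts_27
  by_cases a8 : 20 ≤ u
  · exact zm 5 (by norm_num) (by omega) (by omega) (by omega)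
  by_cases a9 : 16 ≤ u
  · exact gf 2 2 4 (by norm_num) (by norm_num) (by norm_num) (by omega) (by omega)
  interval_cases u
  exacts [kts_0, kts_1, kts_2, kts_3, kts_4, kts_5, kts_6, kts_7, kts_8, kts_9, kts_10, kts_11,
    kts_12, kts_13, kts_14, kts_15]

def AllP {V : Type} (f : Equiv.Perm V) (m : ℕ) : Prop :=
  ∀ (x : V) (j : ℕ), (f ^ j) x = x ↔ m ∣ j

theorem allP_iff {V : Type} (f : Equiv.Perm V) (m : ℕ) :
    AllP f m ↔ ∀ x, Function.minimalPeriod f x = m := by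
  have e : ∀ x j, (f ^ j) x = x ↔ Function.minimalPeriod f x ∣ j := by
    intro x j
    rw [← Function.isPeriodicPt_iff_minimalPeriod_dvd, Function.IsPeriodicPt,
      Function.IsFixedPt, ← Equiv.Perm.coe_pow]
  constructor
  · intro h x
    apply Nat.dvd_antisymm
    · rw [← e, h]
    · rw [← h x, e]
  · intro h x j
    rw [e, h]

theorem AllP.zpow {V : Type} {f : Equiv.Perm V} {m : ℕ} (h : AllP f m) (x : V) (j : ℤ) :
    (f ^ j) x = x ↔ (m : ℤ) ∣ j := by
  obtain ⟨n, rfl | rfl⟩ := j.eq_nat_or_neg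
  · rw [zpow_natCast, h, Int.natCast_dvd_natCast]
  · rw [zpow_neg, zpow_natCast, Equiv.Perm.inv_eq_iff_eq, eq_comm, h, dvd_neg,
      Int.natCast_dvd_natCast]

theorem AllP.inv {V : Type} {f : Equiv.Perm V} {m : ℕ} (h : AllP f m) : AllP f⁻¹ m := by
  intro x j
  rw [inv_pow, Equiv.Perm.inv_eq_iff_eq, eq_comm, h]

theorem AllP.conj {V U : Type} {f : Equiv.Perm V} {m : ℕ} (h : AllP f m) (e : V ≃ U) :
    AllP (e.permCongr f) m := by
  intro x j
  have : (e.permCongr f) ^ j = e.permCongr (f ^ j) := by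
    rw [← Equiv.permCongrHom_coe, map_pow]
  rw [this, Equiv.permCongr_apply, ← Equiv.eq_symm_apply, h]

theorem prodCongr_pow {V U : Type} (f : Equiv.Perm V) (j : ℕ) (w : U) (x : V) :
    ((Equiv.prodCongr (Equiv.refl U) f : Equiv.Perm (U × V)) ^ j) (w, x) = (w, (f ^ j) x) := by
  induction j generalizing x with
  | zero => rfl
  | succ j ih => rw [pow_succ, Equiv.Perm.mul_apply, pow_succ, Equiv.Perm.mul_apply]; exact ih _

theorem AllP.prod {V U : Type} {f : Equiv.Perm V} {m : ℕ} (h : AllP f m) :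
    AllP (Equiv.prodCongr (Equiv.refl U) f : Equiv.Perm (U × V)) m := by
  rintro ⟨w, x⟩ j
  rw [prodCongr_pow, Prod.mk.injEq, h]
  simp

theorem AllP.orbit {W : Type} {c : Equiv.Perm W} {l : ℕ} [NeZero l] (h : AllP c l) :
    ∃ (O : Type) (e : W ≃ O × ZMod l), ∀ w, e (c w) = ((e w).1, (e w).2 + 1) := by
  classical
  let O := Quotient (Equiv.Perm.SameCycle.setoid c)
  have hrep : ∀ w : W, ∃ i : ℤ, (c ^ i) (Quotient.mk (Equiv.Perm.SameCycle.setoid c) w).out = w := by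
    intro w
    exact Quotient.exact (Quotient.out_eq (Quotient.mk (Equiv.Perm.SameCycle.setoid c) w))
  choose i hi using hrep
  have hq : ∀ w (j : ℤ), Quotient.mk (Equiv.Perm.SameCycle.setoid c) ((c ^ j) w) =
      Quotient.mk (Equiv.Perm.SameCycle.setoid c) w := by
    intro w j
    apply Quotient.sound
    exact Equiv.Perm.SameCycle.symm ⟨j, rfl⟩
  have hi' : ∀ w (j : ℤ), ((i ((c ^ j) w) : ℤ) : ZMod l) = i w + j := by
    intro w j
    have h1 := hi ((c ^ j) w)
    rw [hq] at h1
    set r := (Quotient.mk (Equiv.Perm.SameCycle.setoid c) w).out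
    have h2 : (c ^ (i ((c ^ j) w) - (i w + j))) r = r := by
      rw [zpow_sub, (Commute.refl c).zpow_zpow _ _ |>.inv_right.eq, Equiv.Perm.mul_apply, h1,
        Equiv.Perm.inv_eq_iff_eq, add_comm, zpow_add, Equiv.Perm.mul_apply, hi w]
    rw [h.zpow, ← ZMod.intCast_zmod_eq_zero_iff_dvd] at h2
    push_cast at h2
    exact sub_eq_zero.1 h2
  let f : W → O × ZMod l := fun w => (Quotient.mk _ w, (i w : ZMod l))
  have hf : Function.Bijective f := by
    constructor
    · intro w w' hw
      simp only [f, Prod.mk.injEq] at hw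
      obtain ⟨h1, h2⟩ := hw
      obtain ⟨j, rfl⟩ := Quotient.exact h1
      rw [hi'] at h2
      have : ((j : ℤ) : ZMod l) = 0 := by simpa using h2
      rw [ZMod.intCast_zmod_eq_zero_iff_dvd] at this
      exact ((h.zpow _ _).2 this).symm
    · rintro ⟨o, y⟩
      obtain ⟨w, rfl⟩ := Quotient.exists_rep o
      refine ⟨(c ^ ((y - i w).val : ℤ)) w, ?_⟩
      simp only [f, Prod.mk.injEq]
      refine ⟨hq _ _, ?_⟩
      rw [hi']
      simp
  refine ⟨O, Equiv.ofBijective f hf, ?_⟩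
  intro w
  have h1 := hq w 1
  have h2 := hi' w 1
  simp only [zpow_one] at h1 h2
  simp only [Equiv.ofBijective_apply, f, h1, h2]
  simp

def va (q i : ℕ) : ZMod q := if i = 2 then -2 else if i < 2 then 1 else (-1) ^ i

theorem va_sum (q j : ℕ) : ∑ i ∈ Finset.range (3 + 2 * j), va q i = 0 := by
  induction j with
  | zero => simp [Finset.sum_range_succ, va]; norm_num
  | succ j ih =>
    rw [show 3 + 2 * (j + 1) = 3 + 2 * j + 1 + 1 by ring, Finset.sum_range_succ,
      Finset.sum_range_succ, ih]
    have h1 : va q (3 + 2 * j) = -1 := by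
      rw [va, if_neg (by omega), if_neg (by omega)]
      exact Odd.neg_one_pow ⟨j + 1, by ring⟩
    have h2 : va q (3 + 2 * j + 1) = 1 := by
      rw [va, if_neg (by omega), if_neg (by omega)]
      exact Even.neg_one_pow ⟨j + 2, by ring⟩
    rw [h1, h2]; ring

theorem va_unit (q i : ℕ) (hq : Odd q) : IsUnit (va q i) := by
  have h2 : IsUnit (2 : ZMod q) := by
    have := (ZMod.isUnit_iff_coprime 2 q).2 (by simpa using hq)
    simpa using this
  unfold va
  split_ifs
  · exact h2.neg
  · exact isUnit_one
  · exact (isUnit_one.neg).pow _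

theorem lift_lemma {T : Type} (τ : Equiv.Perm T) (l q g : ℕ) (hl : Odd l) (hl3 : 3 ≤ l)
    (hq : Odd q) (hg : g ∣ q) (hτ : AllP τ l) :
    ∃ σ : ZMod q → Equiv.Perm (T × ZMod q), (∀ d, AllP (σ d) (l * g)) ∧
      ∀ t y y', ∃ d, σ d (t, y) = (τ t, y') := by
  have : NeZero l := ⟨by omega⟩
  have hq0 : q ≠ 0 := by rintro rfl; simp at hq
  have : NeZero q := ⟨hq0⟩
  obtain ⟨O, e, he⟩ := hτ.orbit
  obtain ⟨j0, hj0⟩ : ∃ j, l = 3 + 2 * j := by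
    obtain ⟨k, hk⟩ := hl
    exact ⟨k - 1, by omega⟩
  obtain ⟨b, hb⟩ := hg
  let v : ZMod q → ZMod l → ZMod q := fun d i => va q i.val * d + if i = 0 then (b : ZMod q) else 0
  have hS : ∀ d, ∑ i, v d i = b := by
    intro d
    simp only [v]
    rw [Finset.sum_add_distrib, ← Finset.sum_mul]
    have : ∑ i : ZMod l, va q i.val = 0 := by
      rw [← va_sum q j0, ← hj0]
      refine Finset.sum_bij (fun i _ => i.val) ?_ ?_ ?_ ?_
      · intro i _; exact Finset.mem_range.2 (ZMod.val_lt i)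
      · intro i _ i' _ h; exact ZMod.val_injective _ h
      · intro i hi
        exact ⟨(i : ZMod l), Finset.mem_univ _, ZMod.val_cast_of_lt (Finset.mem_range.1 hi)⟩
      · intros; rfl
    rw [this]; simp
  let σ : ZMod q → Equiv.Perm (T × ZMod q) := fun d =>
    { toFun := fun x => (τ x.1, x.2 + v d (e x.1).2)
      invFun := fun x => (τ.symm x.1, x.2 - v d (e (τ.symm x.1)).2)
      left_inv := by rintro ⟨t, y⟩; simp
      right_inv := by rintro ⟨t, y⟩; simp }
  have hσ : ∀ d t y, σ d (t, y) = (τ t, y + v d (e t).2) := fun _ _ _ => rfl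
  have hpow : ∀ d t y (j : ℕ), ((σ d) ^ j) (t, y) =
      ((τ ^ j) t, y + ∑ i ∈ Finset.range j, v d ((e t).2 + i)) := by
    intro d t y j
    induction j with
    | zero => simp
    | succ j ih =>
      have hp : ∀ j : ℕ, (e ((τ ^ j) t)).2 = (e t).2 + j := by
        intro j
        induction j with
        | zero => simp
        | succ j ih => rw [pow_succ', Equiv.Perm.mul_apply, he, ih]; push_cast; ring
      rw [pow_succ', Equiv.Perm.mul_apply, ih, hσ, hp, pow_succ', Equiv.Perm.mul_apply,
        Finset.sum_range_succ, add_assoc]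
  have hper : ∀ d i0 (n : ℕ), ∑ i ∈ Finset.range (l * n), v d (i0 + i) = n * b := by
    intro d i0 n
    induction n with
    | zero => simp
    | succ n ih =>
      rw [Nat.mul_succ, Finset.sum_range_add, ih]
      have : ∑ x ∈ Finset.range l, v d (i0 + ((l * n + x : ℕ) : ZMod l)) = b := by
        rw [← hS d]
        refine Finset.sum_bij (fun i _ => i0 + ((l * n + i : ℕ) : ZMod l)) ?_ ?_ ?_ ?_
        · intros; exact Finset.mem_univ _
        · intro i hi i' hi' h
          simp only [Nat.cast_add, Nat.cast_mul, CharP.cast_eq_zero, zero_mul, zero_add,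
            add_right_inj] at h
          rw [ZMod.natCast_eq_natCast_iff'] at h
          rwa [Nat.mod_eq_of_lt (Finset.mem_range.1 hi),
            Nat.mod_eq_of_lt (Finset.mem_range.1 hi')] at h
        · intro i _
          exact ⟨(i - i0).val, Finset.mem_range.2 (ZMod.val_lt _), by simp⟩
        · intros; rfl
      rw [this]; push_cast; ring
  refine ⟨σ, ?_, ?_⟩
  · rintro d ⟨t, y⟩ j
    rw [hpow, Prod.mk.injEq, hτ]
    have hb0 : 0 < b := by
      rcases Nat.eq_zero_or_pos b with h | h
      · rw [h] at hb; simp at hb; exact absurd hb hq0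
      · exact h
    have key : ∀ n : ℕ, (n : ZMod q) * b = 0 ↔ g ∣ n := by
      intro n
      rw [← Nat.cast_mul, ZMod.natCast_eq_zero_iff]
      conv_lhs => rw [hb]
      exact Nat.mul_dvd_mul_iff_right hb0
    constructor
    · rintro ⟨⟨n, rfl⟩, h2⟩
      rw [hper] at h2
      have := (key n).1 (by simpa using h2)
      exact Nat.mul_dvd_mul_left _ this
    · intro h
      obtain ⟨n, rfl⟩ := (Dvd.intro _ rfl : l ∣ l * g).trans h
      refine ⟨⟨n, rfl⟩, ?_⟩
      rw [hper, (key n).2 (Nat.dvd_of_mul_dvd_mul_left (by omega) h), add_zero]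
  · intro t y y'
    obtain ⟨i, hi⟩ := (va_unit q (e t).2.val hq).exists_right_inv
    refine ⟨i * (y' - y - if (e t).2 = 0 then (b : ZMod q) else 0), ?_⟩
    rw [hσ, Prod.mk.injEq]
    refine ⟨rfl, ?_⟩
    simp only [v]
    linear_combination (y' - y - if (e t).2 = 0 then (b : ZMod q) else 0) * hi

/-- covering family for the complete tripartite piece -/
def B1 (p : ℕ) : Prop :=
  ∃ σ : Bool × ZMod p → Equiv.Perm (ZMod 3 × ZMod p), (∀ i, AllP (σ i) p) ∧
    ∀ l l' : ZMod 3, l ≠ l' → ∀ y y', ∃ i, σ i (l, y) = (l', y')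

theorem b1_of_tau (p : ℕ) (τ : Equiv.Perm (ZMod 3 × ZMod p)) (hτ : AllP τ p)
    (h2 : ∀ z, ∀ l : ZMod 3, l ≠ 2 → ∃ x, τ (l, x) = (2, z) ∨ τ (2, z) = (l, x))
    (h01 : ∀ d, ∃ x, τ (0, x) = (1, x + d) ∨ τ (1, x + d) = (0, x)) : B1 p := by
  let S : ZMod p → Equiv.Perm (ZMod 3 × ZMod p) := fun r =>
    { toFun := fun x => (x.1, if x.1 = 2 then x.2 else x.2 + r)
      invFun := fun x => (x.1, if x.1 = 2 then x.2 else x.2 - r)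
      left_inv := by
        rintro ⟨l, y⟩
        by_cases hl : l = 2 <;> simp [hl]
      right_inv := by
        rintro ⟨l, y⟩
        by_cases hl : l = 2 <;> simp [hl] }
  have hS2 : ∀ r y, S r (2, y) = (2, y) := by intro r y; simp [S]
  have hS : ∀ r l y, l ≠ 2 → S r (l, y) = (l, y + r) := by intro r l y hl; simp [S, hl]
  let σ : Bool × ZMod p → Equiv.Perm (ZMod 3 × ZMod p) := fun i =>
    (S i.2).permCongr (if i.1 = true then τ else τ⁻¹)
  have key : ∀ r a b, τ a = b ∨ τ b = a → ∃ i, σ i (S r a) = S r b := by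
    intro r a b h
    rcases h with h | h
    · exact ⟨(true, r), by simp [σ, h]⟩
    · exact ⟨(false, r), by simp [σ, ← h]⟩
  refine ⟨σ, ?_, ?_⟩
  · rintro ⟨b, r⟩
    cases b
    · exact hτ.inv.conj _
    · exact hτ.conj _
  · intro l l' hne y y'
    by_cases hl : l = 2
    · subst hl
      obtain ⟨x, hx⟩ := h2 y l' hne.symm
      have := key (y' - x) (2, y) (l', x) hx.symm
      rw [hS2, hS _ _ _ hne.symm] at this
      simpa using this
    by_cases hl' : l' = 2
    · subst hl'
      obtain ⟨x, hx⟩ := h2 y' l hne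
      have := key (y - x) (l, x) (2, y') hx
      rw [hS2, hS _ _ _ hne] at this
      simpa using this
    have hc : (l = 0 ∧ l' = 1) ∨ (l = 1 ∧ l' = 0) := by
      revert l l'; decide
    rcases hc with ⟨rfl, rfl⟩ | ⟨rfl, rfl⟩
    · obtain ⟨x, hx⟩ := h01 (y' - y)
      have := key (y - x) (0, x) (1, x + (y' - y)) hx
      rw [hS _ _ _ hl, hS _ _ _ hl'] at this
      convert this using 3
      · ring_nf
      · ring_nf
    · obtain ⟨x, hx⟩ := h01 (y - y')
      have := key (y' - x) (1, x + (y - y')) (0, x) hx.symm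
      rw [hS _ _ _ hl, hS _ _ _ hl'] at this
      convert this using 3
      · ring_nf
      · ring_nf

theorem allP_shift (p : ℕ) (J : Type) :
    AllP (Equiv.prodCongr (Equiv.refl J) (Equiv.addRight (1 : ZMod p)) :
      Equiv.Perm (J × ZMod p)) p := by
  apply AllP.prod
  intro x j
  have : ((Equiv.addRight (1 : ZMod p) : Equiv.Perm (ZMod p)) ^ j) x = x + j := by
    induction j with
    | zero => simp
    | succ j ih => rw [pow_succ', Equiv.Perm.mul_apply, ih]; simp [add_assoc]
  rw [this, ← ZMod.natCast_eq_zero_iff]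
  simp

theorem b1_core (p : ℕ) [NeZero p] (L : ZMod 3 × ZMod p → ZMod 3)
    (hcard : ∀ l, p ≤ Fintype.card {z // L z = l})
    (h2 : ∀ j i, L (j, i) = 2 → (L (j, i - 1) = 0 ∧ L (j, i + 1) = 1) ∨
      (L (j, i - 1) = 1 ∧ L (j, i + 1) = 0))
    (P : ZMod 3 × ZMod p → Prop) (κ : ZMod 3 × ZMod p → ZMod p)
    (hinj : ∀ z z', P z → P z' → L z = L z' → κ z = κ z' → z = z')
    (hd : ∀ d, ∃ j i, P (j, i) ∧ P (j, i + 1) ∧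
      ((L (j, i) = 0 ∧ L (j, i + 1) = 1 ∧ κ (j, i + 1) = κ (j, i) + d) ∨
        (L (j, i) = 1 ∧ L (j, i + 1) = 0 ∧ κ (j, i) = κ (j, i + 1) + d))) : B1 p := by
  classical
  have hcard' : ∀ l, Fintype.card {z // L z = l} = p := by
    have hsum : ∑ l, Fintype.card {z // L z = l} = ∑ _l : ZMod 3, p := by
      rw [← Fintype.card_sigma, Fintype.card_congr (Equiv.sigmaFiberEquiv L)]
      simp [ZMod.card]
    intro l
    have := (Finset.sum_eq_sum_iff_of_le (s := Finset.univ) (fun l _ => hcard l)).1 hsum.symm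
    exact (this l (Finset.mem_univ _)).symm
  have hext : ∀ l, ∃ g : {z // L z = l} ≃ ZMod p, ∀ z, P z.1 → g z = κ z.1 := by
    intro l
    obtain ⟨g, hg⟩ := Finset.exists_equiv_extend_of_card_eq
      (α := {z // L z = l}) (t := (Finset.univ : Finset (ZMod p)))
      (by rw [hcard', Finset.card_univ, ZMod.card]) (s := Finset.univ.filter fun z => P z.1)
      (f := fun z => κ z.1) (Finset.subset_univ _) (by
        intro z hz z' hz' h
        simp only [Finset.coe_filter, Finset.mem_univ, true_and, Set.mem_ofPred_eq] at hz hz'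
        exact Subtype.ext (hinj _ _ hz hz' (z.2.trans z'.2.symm) h))
    refine ⟨g.trans (Equiv.subtypeUnivEquiv (fun x => Finset.mem_univ x)), ?_⟩
    intro z hz
    exact hg z (by simpa using hz)
  choose G hG using hext
  let Φ : ZMod 3 × ZMod p ≃ ZMod 3 × ZMod p :=
    (Equiv.sigmaFiberEquiv L).symm.trans ((Equiv.sigmaCongrRight G).trans
      (Equiv.sigmaEquivProd _ _))
  have hΦ : ∀ z, Φ z = (L z, G (L z) ⟨z, rfl⟩) := fun z => rfl
  have hΦ1 : ∀ z l, L z = l → ∃ x, Φ z = (l, x) := by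
    rintro z _ rfl; exact ⟨_, hΦ z⟩
  have hΦP : ∀ z l, L z = l → P z → Φ z = (l, κ z) := by
    rintro z _ rfl hz
    rw [hΦ, hG _ _ hz]
  let τ := Φ.permCongr (Equiv.prodCongr (Equiv.refl _) (Equiv.addRight (1 : ZMod p)))
  have hτ : ∀ j i, τ (Φ (j, i)) = Φ (j, i + 1) := by
    intro j i
    simp [τ]
  refine b1_of_tau p τ ((allP_shift p _).conj Φ) ?_ ?_
  · intro z l hl
    obtain ⟨⟨j, i⟩, hji⟩ := Φ.surjective (2, z)
    have hL : L (j, i) = 2 := by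
      have := congrArg Prod.fst hji
      rwa [hΦ] at this
    have e1 := hτ j (i - 1)
    have e2 := hτ j i
    rw [sub_add_cancel] at e1
    rw [hji] at e1 e2
    have hc : l = 0 ∨ l = 1 := by revert l; decide
    have hd : L (j, i - 1) = l ∨ L (j, i + 1) = l := by
      rcases h2 j i hL with ⟨a, b⟩ | ⟨a, b⟩ <;> rcases hc with rfl | rfl <;> simp [a, b]
    rcases hd with hd | hd
    · obtain ⟨x, hx⟩ := hΦ1 _ _ hd
      exact ⟨x, Or.inl (by rw [← hx, e1])⟩
    · obtain ⟨x, hx⟩ := hΦ1 _ _ hd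
      exact ⟨x, Or.inr (by rw [← hx, e2])⟩
  · intro d
    obtain ⟨j, i, P1, P2, ⟨a, b, h⟩ | ⟨a, b, h⟩⟩ := hd d
    · refine ⟨κ (j, i), Or.inl ?_⟩
      rw [← h, ← hΦP _ _ a P1, ← hΦP _ _ b P2, hτ]
    · refine ⟨κ (j, i + 1), Or.inr ?_⟩
      rw [← h, ← hΦP _ _ a P1, ← hΦP _ _ b P2, hτ]

/-- level of time `i` in a cycle with initial zigzag of length `l` -/
def lev (l i : ℕ) : ZMod 3 :=
  if i ≤ l then (if i % 2 = 0 then 0 else 1)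
  else if (i - l) % 2 = 1 then 2 else if (i - l) % 4 = 2 then 0 else 1

theorem lev_zero (l i : ℕ) : lev l i = 0 ↔
    (i ≤ l ∧ i % 2 = 0) ∨ (l < i ∧ (i - l) % 4 = 2) := by
  have h1 : (1 : ZMod 3) ≠ 0 := by decide
  have h2 : (2 : ZMod 3) ≠ 0 := by decide
  unfold lev
  split_ifs <;> simp [h1, h2] <;> omega

theorem lev_one (l i : ℕ) : lev l i = 1 ↔
    (i ≤ l ∧ i % 2 = 1) ∨ (l < i ∧ (i - l) % 4 = 0) := by
  have h1 : (0 : ZMod 3) ≠ 1 := by decide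
  have h2 : (2 : ZMod 3) ≠ 1 := by decide
  unfold lev
  split_ifs <;> simp [h1, h2] <;> omega

theorem lev_two (l i : ℕ) : lev l i = 2 ↔ (l < i ∧ (i - l) % 2 = 1) := by
  have h1 : (0 : ZMod 3) ≠ 2 := by decide
  have h2 : (1 : ZMod 3) ≠ 2 := by decide
  unfold lev
  split_ifs <;> simp [h1, h2] <;> omega

theorem lev_card (p l t : ℕ) [NeZero p] (hp : p = l + 2 * t) (hl : l % 2 = 1) (ht : t % 2 = 1)
    (s : ZMod 3) :
    (if s = 2 then t else (p - t) / 2) ≤ Fintype.card {i : ZMod p // lev l i.val = s} := by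
  classical
  have gen : ∀ (N : ℕ) (f : ℕ → ℕ), (∀ v < N, f v < p ∧ lev l (f v) = s) →
      (∀ v < N, ∀ v' < N, f v = f v' → v = v') →
      N ≤ Fintype.card {i : ZMod p // lev l i.val = s} := by
    intro N f h1 h2
    have := Fintype.card_le_of_injective
      (fun v : Fin N => (⟨(f v : ZMod p), by
        rw [ZMod.val_cast_of_lt (h1 v v.2).1]; exact (h1 v v.2).2⟩ :
          {i : ZMod p // lev l i.val = s})) (by
        intro v v' h
        have h3 := congrArg (fun z => z.1.val) h
        simp only at h3
        rw [ZMod.val_cast_of_lt (h1 v v.2).1, ZMod.val_cast_of_lt (h1 v' v'.2).1] at h3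
        exact Fin.ext (h2 v v.2 v' v'.2 h3))
    simpa using this
  by_cases h2 : s = 2
  · rw [if_pos h2]
    refine gen t (fun v => l + 1 + 2 * v) ?_ ?_
    · intro v hv
      rw [h2, lev_two]; omega
    · intro v hv v' hv' h
      omega
  rw [if_neg h2]
  by_cases h0 : s = 0
  · refine gen _ (fun v => if v < (l + 1) / 2 then 2 * v
      else l + 4 * (v - (l + 1) / 2) + 2) ?_ ?_
    · intro v hv
      rw [h0, lev_zero]
      split_ifs <;> omega
    · intro v hv v' hv' h
      split_ifs at h <;> omega
  have h1 : s = 1 := by clear gen; revert s; decide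
  · refine gen _ (fun v => if v < (l + 1) / 2 then 2 * v + 1
      else l + 4 * (v - (l + 1) / 2) + 4) ?_ ?_
    · intro v hv
      rw [h1, lev_one]
      split_ifs <;> omega
    · intro v hv v' hv' h
      split_ifs at h <;> omega

def kap (p ρ n3 : ℕ) (j : ZMod 3) (i : ℕ) : ℕ :=
  if j = 2 then (if i = 0 then 0 else if i % 2 = 0 then p - i / 2 else i / 2)
  else if j = 0 then (if i % 2 = 0 then (ρ + 1) / 2 - i / 2
    else p + 2 - 3 * ((ρ + 1) / 2) + i / 2)
  else (if i % 2 = 0 then n3 + ρ - i / 2 else n3 + i / 2)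

theorem kap_2e (p ρ n3 a : ℕ) : kap p ρ n3 2 (2 * a) = if a = 0 then 0 else p - a := by
  simp only [kap, if_true]
  split_ifs <;> omega

theorem kap_2o (p ρ n3 a : ℕ) : kap p ρ n3 2 (2 * a + 1) = a := by
  rw [kap, if_pos rfl, if_neg (by omega), if_neg (by omega)]
  omega

theorem kap_0e (p ρ n3 a : ℕ) : kap p ρ n3 0 (2 * a) = (ρ + 1) / 2 - a := by
  have z02 : (0 : ZMod 3) ≠ 2 := by decide
  simp only [kap, if_true, if_false, z02]
  split_ifs <;> omega

theorem kap_0o (p ρ n3 a : ℕ) :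
    kap p ρ n3 0 (2 * a + 1) = p + 2 - 3 * ((ρ + 1) / 2) + a := by
  have z02 : (0 : ZMod 3) ≠ 2 := by decide
  simp only [kap, if_true, if_false, z02]
  split_ifs <;> omega

theorem kap_1e (p ρ n3 a : ℕ) : kap p ρ n3 1 (2 * a) = n3 + ρ - a := by
  have z12 : (1 : ZMod 3) ≠ 2 := by decide
  have z10 : (1 : ZMod 3) ≠ 0 := by decide
  simp only [kap, if_false, z12, z10]
  split_ifs <;> omega

theorem kap_1o (p ρ n3 a : ℕ) : kap p ρ n3 1 (2 * a + 1) = n3 + a := by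
  have z12 : (1 : ZMod 3) ≠ 2 := by decide
  have z10 : (1 : ZMod 3) ≠ 0 := by decide
  simp only [kap, if_false, z12, z10]
  split_ifs <;> omega

theorem lev_adj (p l s i a b : ℕ) (hp : p = l + 2 * s) (hl : l % 2 = 1) (hs : s % 2 = 1)
    (h1 : l < i) (h2 : (i - l) % 2 = 1) (ha : a + 1 = i)
    (hb : (i + 1 < p ∧ b = i + 1) ∨ (i + 1 = p ∧ b = 0)) :
    (lev l a = 0 ∧ lev l b = 1) ∨ (lev l a = 1 ∧ lev l b = 0) := by
  rw [lev_zero, lev_one, lev_one, lev_zero]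
  have h4 : (i - l) % 4 = 1 ∨ (i - l) % 4 = 3 := by omega
  rcases h4 with h4 | h4
  · right
    constructor
    · by_cases h : a ≤ l
      · left; omega
      · right; omega
    · rcases hb with hb | hb
      · right; omega
      · left; omega
  · left
    constructor
    · right; omega
    · rcases hb with hb | hb
      · right; omega
      · exfalso; omega

set_option maxHeartbeats 1000000 in
theorem b1_ge7 (p ρ t n3 : ℕ) (hρ : ρ = 1 ∨ ρ = 3) (ht : t % 2 = 1) (hpt : p = ρ + 2 * t)
    (hn3 : p = 2 * n3 + 2 * ρ - 1) (hn : 1 ≤ n3) : B1 p := by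
  have hp0 : p ≠ 0 := by omega
  have : NeZero p := ⟨hp0⟩
  have z3 : ∀ j : ZMod 3, j = 0 ∨ j = 1 ∨ j = 2 := by decide
  have z02 : (0 : ZMod 3) ≠ 2 := by decide
  have z12 : (1 : ZMod 3) ≠ 2 := by decide
  have z10 : (1 : ZMod 3) ≠ 0 := by decide
  let ℓ : ZMod 3 → ℕ := fun j => if j = 2 then p - 2 * ρ else ρ
  have ℓ0 : ℓ 0 = ρ := by simp [ℓ, z02]
  have ℓ1 : ℓ 1 = ρ := by simp [ℓ, z12]
  have ℓ2 : ℓ 2 = p - 2 * ρ := by simp [ℓ]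
  have hodd : ∀ j, ℓ j % 2 = 1 := by
    intro j
    rcases z3 j with rfl | rfl | rfl
    · rw [ℓ0]; omega
    · rw [ℓ1]; omega
    · rw [ℓ2]; omega
  have hlt : ∀ j, ∃ s, s % 2 = 1 ∧ p = ℓ j + 2 * s ∧ s = if j = 2 then ρ else t := by
    intro j
    rcases z3 j with rfl | rfl | rfl
    · exact ⟨t, by omega, by rw [ℓ0]; omega, by simp [z02]⟩
    · exact ⟨t, by omega, by rw [ℓ1]; omega, by simp [z12]⟩
    · exact ⟨ρ, by omega, by rw [ℓ2]; omega, by simp⟩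
  have hpodd : p % 2 = 1 := by omega
  have vsucc : ∀ i : ZMod p, (i.val + 1 < p ∧ (i + 1).val = i.val + 1) ∨
      (i.val + 1 = p ∧ (i + 1).val = 0) := by
    intro i
    have h1 : ((i.val + 1 : ℕ) : ZMod p) = i + 1 := by simp
    have h2 := ZMod.val_lt i
    by_cases h : i.val + 1 < p
    · left
      refine ⟨h, ?_⟩
      rw [← h1, ZMod.val_cast_of_lt h]
    · right
      have h3 : i.val + 1 = p := by omega
      refine ⟨h3, ?_⟩
      rw [← h1, h3]; simp
  refine b1_core p (fun z => lev (ℓ z.1) z.2.val) ?_ ?_ (fun z => z.2.val ≤ ℓ z.1)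
    (fun z => (kap p ρ n3 z.1 z.2.val : ZMod p)) ?_ ?_
  · intro l
    classical
    have e : {z : ZMod 3 × ZMod p // lev (ℓ z.1) z.2.val = l} ≃
        Σ j : ZMod 3, {i : ZMod p // lev (ℓ j) i.val = l} :=
      { toFun := fun z => ⟨z.1.1, z.1.2, z.2⟩
        invFun := fun z => ⟨(z.1, z.2.1), z.2.2⟩
        left_inv := fun z => rfl
        right_inv := fun z => rfl }
    rw [Fintype.card_congr e, Fintype.card_sigma]
    have hb : ∀ j : ZMod 3, (if l = 2 then (if j = 2 then ρ else t) else
        (p - (if j = 2 then ρ else t)) / 2) ≤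
        Fintype.card {i : ZMod p // lev (ℓ j) i.val = l} := by
      intro j
      obtain ⟨s, hs1, hs2, hs3⟩ := hlt j
      rw [← hs3]
      exact lev_card p (ℓ j) s hs2 (hodd j) hs1 l
    refine le_trans ?_ (Finset.sum_le_sum (fun j _ => hb j))
    have hsum : ∀ f : ZMod 3 → ℕ, ∑ j, f j = f 0 + f 1 + f 2 := fun f => Fin.sum_univ_three f
    rw [hsum]
    simp only [z02, z12, if_false, if_true]
    split_ifs <;> omega
  · intro j i h
    simp only at h ⊢
    rw [lev_two] at h
    obtain ⟨s, hs1, hs2, -⟩ := hlt j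
    have h0 := hodd j
    have a1 := vsucc i
    have a2 := vsucc (i - 1)
    rw [sub_add_cancel] at a2
    refine lev_adj p (ℓ j) s _ _ _ hs2 h0 hs1 h.1 h.2 ?_ a1
    rcases a2 with a2 | a2
    · exact a2.2.symm
    · omega
  · rintro ⟨j, i⟩ ⟨j', i'⟩ h1 h2 h3 h4
    simp only at h1 h2 h3 h4
    have b1 := ZMod.val_lt i
    have b2 := ZMod.val_lt i'
    have hlp : (i.val % 2 = i'.val % 2) := by
      have c0 := lev_zero (ℓ j) i.val
      have c1 := lev_one (ℓ j) i.val
      have d0 := lev_zero (ℓ j') i'.val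
      have d1 := lev_one (ℓ j') i'.val
      rw [h3] at c0 c1
      rw [c0] at d0
      rw [c1] at d1
      omega
    have hk : ∀ (j : ZMod 3) (i : ℕ), i ≤ ℓ j → kap p ρ n3 j i < p := by
      intro j i hi
      rcases z3 j with rfl | rfl | rfl
      · rw [ℓ0] at hi
        simp only [kap, z02, if_false, if_true]
        split_ifs <;> omega
      · rw [ℓ1] at hi
        simp only [kap, z12, z10, if_false]
        split_ifs <;> omega
      · rw [ℓ2] at hi
        simp only [kap, if_true]
        split_ifs <;> omega
    rw [ZMod.natCast_eq_natCast_iff', Nat.mod_eq_of_lt (hk _ _ h1),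
      Nat.mod_eq_of_lt (hk _ _ h2)] at h4
    suffices h : j = j' ∧ i.val = i'.val by
      rw [h.1, ZMod.val_injective p h.2]
    clear h3 hk
    generalize i.val = a at *
    generalize i'.val = b at *
    obtain ⟨a, ha⟩ : ∃ e, a = 2 * e ∨ a = 2 * e + 1 := ⟨a / 2, by omega⟩
    obtain ⟨b, hb⟩ : ∃ e, b = 2 * e ∨ b = 2 * e + 1 := ⟨b / 2, by omega⟩
    rcases ha with rfl | rfl <;> rcases hb with rfl | rfl <;> (try omega) <;>
    rcases z3 j with rfl | rfl | rfl <;> rcases z3 j' with rfl | rfl | rfl <;>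
      simp only [kap_0e, kap_0o, kap_1e, kap_1o, kap_2e, kap_2o, ℓ0, ℓ1, ℓ2, true_and]
        at h1 h2 h4 ⊢ <;> (try split_ifs at h4) <;> omega
  · have fin : ∀ (d : ℕ) (j : ZMod 3) (a : ℕ), a + 1 ≤ ℓ j →
        ((a % 2 = 0 ∧ (kap p ρ n3 j (a + 1) = kap p ρ n3 j a + d ∨
            kap p ρ n3 j (a + 1) + p = kap p ρ n3 j a + d)) ∨
          (a % 2 = 1 ∧ (kap p ρ n3 j a = kap p ρ n3 j (a + 1) + d ∨
            kap p ρ n3 j a + p = kap p ρ n3 j (a + 1) + d))) →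
        ∃ j i, (fun z : ZMod 3 × ZMod p => z.2.val ≤ ℓ z.1) (j, i) ∧
          (fun z : ZMod 3 × ZMod p => z.2.val ≤ ℓ z.1) (j, i + 1) ∧
          ((lev (ℓ j) i.val = 0 ∧ lev (ℓ j) (i + 1).val = 1 ∧
            (kap p ρ n3 j (i + 1).val : ZMod p) = kap p ρ n3 j i.val + (d : ZMod p)) ∨
          (lev (ℓ j) i.val = 1 ∧ lev (ℓ j) (i + 1).val = 0 ∧
            (kap p ρ n3 j i.val : ZMod p) = kap p ρ n3 j (i + 1).val + (d : ZMod p))) := by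
      intro d j a ha h
      obtain ⟨s, hs1, hs2, -⟩ := hlt j
      have v1 : (a : ZMod p).val = a := ZMod.val_cast_of_lt (by omega)
      have v2 : ((a : ZMod p) + 1).val = a + 1 := by
        have := ZMod.val_cast_of_lt (show a + 1 < p by omega)
        push_cast at this
        exact this
      have cc : ∀ x y : ℕ, (x = y + d ∨ x + p = y + d) → (x : ZMod p) = y + (d : ZMod p) := by
        rintro x y (h | h)
        · rw [h]; push_cast; rfl
        · have := congrArg (Nat.cast : ℕ → ZMod p) h
          push_cast at this
          simpa using this
      refine ⟨j, (a : ZMod p), ?_, ?_, ?_⟩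
      · simp only [v1]; omega
      · simp only [v2]; omega
      · rw [v1, v2, lev_zero, lev_one, lev_one, lev_zero]
        rcases h with ⟨h, h'⟩ | ⟨h, h'⟩
        · exact Or.inl ⟨by omega, by omega, cc _ _ h'⟩
        · exact Or.inr ⟨by omega, by omega, cc _ _ h'⟩
    intro d
    obtain ⟨d, hd, rfl⟩ : ∃ e : ℕ, e < p ∧ (e : ZMod p) = d := ⟨d.val, ZMod.val_lt d, by simp⟩
    by_cases c1 : d + 1 ≤ p - 2 * ρ
    · refine fin d 2 d (by rw [ℓ2]; exact c1) ?_
      obtain ⟨e, rfl | rfl⟩ : ∃ e, d = 2 * e ∨ d = 2 * e + 1 := ⟨d / 2, by omega⟩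
      · left
        rw [kap_2e, kap_2o]
        split_ifs <;> omega
      · right
        rw [show 2 * e + 1 + 1 = 2 * (e + 1) by ring, kap_2e, kap_2o, if_neg (by omega)]
        omega
    by_cases c2 : d < p - ρ
    · obtain ⟨x, rfl⟩ : ∃ x, d = x + (p - 2 * ρ) := ⟨d - (p - 2 * ρ), by omega⟩
      refine fin _ 0 x (by rw [ℓ0]; omega) ?_
      obtain ⟨e, rfl | rfl⟩ : ∃ e, x = 2 * e ∨ x = 2 * e + 1 := ⟨x / 2, by omega⟩
      · left
        rw [kap_0e, kap_0o]
        omega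
      · right
        rw [show 2 * e + 1 + 1 = 2 * (e + 1) by ring, kap_0e, kap_0o]
        omega
    · obtain ⟨x, rfl⟩ : ∃ x, d = x + (p - ρ) := ⟨d - (p - ρ), by omega⟩
      refine fin _ 1 x (by rw [ℓ1]; omega) ?_
      obtain ⟨e, rfl | rfl⟩ : ∃ e, x = 2 * e ∨ x = 2 * e + 1 := ⟨x / 2, by omega⟩
      · left
        rw [kap_1e, kap_1o]
        omega
      · right
        rw [show 2 * e + 1 + 1 = 2 * (e + 1) by ring, kap_1e, kap_1o]
        omega

theorem allP_prime {V : Type} (f : Equiv.Perm V) (p : ℕ) [Fact p.Prime]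
    (h1 : ∀ x, (f ^ p) x = x) (h2 : ∀ x, f x ≠ x) : AllP f p := by
  rw [allP_iff]
  intro x
  apply Function.minimalPeriod_eq_prime
  · rw [Function.IsPeriodicPt, Function.IsFixedPt, ← Equiv.Perm.coe_pow]
    exact h1 x
  · exact h2 x

def t5 : Fin 5 → Fin 15 → Fin 15 :=
  ![![6, 11, 9, 8, 10, 12, 1, 0, 14, 13, 3, 7, 2, 5, 4],
    ![8, 12, 6, 9, 7, 10, 11, 14, 13, 4, 2, 5, 0, 1, 3],
    ![11, 9, 5, 7, 6, 3, 14, 13, 10, 12, 1, 4, 8, 2, 0],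
    ![5, 7, 8, 6, 13, 1, 12, 10, 11, 14, 0, 9, 4, 3, 2],
    ![9, 8, 7, 11, 5, 14, 13, 12, 4, 10, 6, 2, 3, 0, 1]]

theorem t5_per : ∀ i x, t5 i (t5 i (t5 i (t5 i (t5 i x)))) = x := by decide +kernel
theorem t5_ne : ∀ i x, t5 i x ≠ x := by decide +kernel
theorem t5_cov : ∀ x y : Fin 15, x.val / 5 ≠ y.val / 5 → ∃ i, t5 i x = y ∨ t5 i y = x := by
  decide +kernel

theorem b1_five : B1 5 := by
  have : Fact (Nat.Prime 5) := ⟨Nat.prime_five⟩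
  let f : Fin 5 → Equiv.Perm (Fin 15) := fun i =>
    { toFun := t5 i
      invFun := fun x => t5 i (t5 i (t5 i (t5 i x)))
      left_inv := t5_per i
      right_inv := t5_per i }
  have hf : ∀ i, AllP (f i) 5 := by
    intro i
    apply allP_prime
    · intro x; exact t5_per i x
    · intro x; exact t5_ne i x
  let e : Fin 15 ≃ Fin 3 × Fin 5 := (finProdFinEquiv (m := 3) (n := 5)).symm
  let σ : Bool × Fin 5 → Equiv.Perm (Fin 3 × Fin 5) := fun i =>
    e.permCongr (if i.1 = true then f i.2 else (f i.2)⁻¹)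
  have hAll : ∀ i, AllP (σ i) 5 := by
    rintro ⟨b, i⟩
    cases b
    · exact (hf i).inv.conj e
    · exact (hf i).conj e
  have cov : ∀ l l' : Fin 3, l ≠ l' → ∀ y y' : Fin 5, ∃ i, σ i (l, y) = (l', y') := by
    intro l l' hne y y'
    have hx : ∀ (l : Fin 3) (y : Fin 5), (e.symm (l, y)).val / 5 = l.val := by decide
    obtain ⟨i, hi⟩ := t5_cov (e.symm (l, y)) (e.symm (l', y')) (by
      rw [hx, hx]; exact fun h => hne (Fin.ext h))
    rcases hi with hi | hi
    · refine ⟨(true, i), ?_⟩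
      change e (t5 i (e.symm (l, y))) = _
      rw [hi, Equiv.apply_symm_apply]
    · refine ⟨(false, i), ?_⟩
      change e ((f i)⁻¹ (e.symm (l, y))) = _
      have : (f i)⁻¹ (e.symm (l, y)) = e.symm (l', y') := by
        rw [Equiv.Perm.inv_eq_iff_eq]; exact hi.symm
      rw [this, Equiv.apply_symm_apply]
  exact ⟨σ, hAll, cov⟩

theorem b1_all (p : ℕ) (hp : Odd p) (h5 : 5 ≤ p) : B1 p := by
  have h2 : p % 4 = 1 ∨ p % 4 = 3 := by
    obtain ⟨k, hk⟩ := hp; omega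
  by_cases h : p = 5
  · subst h; exact b1_five
  rcases h2 with h2 | h2
  · exact b1_ge7 p 3 ((p - 3) / 2) ((p - 5) / 2) (Or.inr rfl) (by omega) (by omega) (by omega)
      (by omega)
  · exact b1_ge7 p 1 ((p - 1) / 2) ((p - 1) / 2) (Or.inl rfl) (by omega) (by omega) (by omega)
      (by omega)

theorem partB {W : Type} (c : Equiv.Perm W) (hc : AllP c 3) (k m : ℕ) (hk : Odd k) (hm : Odd m)
    (hm3 : 3 ≤ m) (hmk : m ∣ 3 * k) :
    ∃ σ : Bool × ZMod k → Equiv.Perm (W × ZMod k), (∀ i, AllP (σ i) m) ∧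
      ∀ w w', (c w = w' ∨ c w' = w) → ∀ y y', ∃ i, σ i (w, y) = (w', y') := by
  have : NeZero k := ⟨by rintro rfl; simp at hk⟩
  by_cases h3 : 3 ∣ m
  · obtain ⟨g, rfl⟩ := h3
    have hg : g ∣ k := Nat.dvd_of_mul_dvd_mul_left (by norm_num) hmk
    obtain ⟨σ1, a1, b1⟩ := lift_lemma c 3 k g (by decide) le_rfl hk hg hc
    obtain ⟨σ2, a2, b2⟩ := lift_lemma c⁻¹ 3 k g (by decide) le_rfl hk hg hc.inv
    refine ⟨fun i => if i.1 = true then σ1 i.2 else σ2 i.2, ?_, ?_⟩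
    · rintro ⟨b, i⟩
      cases b
      · exact a2 i
      · exact a1 i
    · rintro w w' (h | h) y y'
      · obtain ⟨d, hd⟩ := b1 w y y'
        exact ⟨(true, d), by rw [← h]; exact hd⟩
      · obtain ⟨d, hd⟩ := b2 w y y'
        refine ⟨(false, d), ?_⟩
        have : w' = c⁻¹ w := by rw [← h]; simp
        rw [this]; exact hd
  · have hmk' : m ∣ k := by
      refine Nat.Coprime.dvd_of_dvd_mul_left ?_ hmk
      exact ((Nat.Prime.coprime_iff_not_dvd Nat.prime_three).2 h3).symm
    obtain ⟨q, rfl⟩ := hmk'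
    have hq : Odd q := (Nat.odd_mul.1 hk).2
    have : NeZero q := ⟨by rintro rfl; simp at hq⟩
    have : NeZero m := ⟨by omega⟩
    have h5 : 5 ≤ m := by
      obtain ⟨j, hj⟩ := hm; omega
    obtain ⟨σ, h1, h2⟩ := b1_all m hm h5
    obtain ⟨O, e, he⟩ := hc.orbit
    -- perms on W × ZMod m
    let E : O × (ZMod 3 × ZMod m) ≃ W × ZMod m :=
      (Equiv.prodAssoc _ _ _).symm.trans (Equiv.prodCongr e.symm (Equiv.refl _))
    let τ : Bool × ZMod m → Equiv.Perm (W × ZMod m) := fun i =>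
      E.permCongr (Equiv.prodCongr (Equiv.refl O) (σ i))
    have hτ : ∀ i, AllP (τ i) m := fun i => ((h1 i).prod).conj E
    have hτc : ∀ w w', (c w = w' ∨ c w' = w) → ∀ y y', ∃ i, τ i (w, y) = (w', y') := by
      intro w w' h y y'
      have hh : (e w).1 = (e w').1 ∧ (e w).2 ≠ (e w').2 := by
        rcases h with rfl | rfl
        · rw [he]; exact ⟨rfl, by simp⟩
        · rw [he]; exact ⟨rfl, by simp⟩
      obtain ⟨i, hi⟩ := h2 _ _ hh.2 y y'
      refine ⟨i, ?_⟩
      simp only [τ, Equiv.permCongr_apply]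
      rw [← Equiv.eq_symm_apply]
      have e1 : ∀ w y, E.symm (w, y) = ((e w).1, ((e w).2, y)) := fun w y => rfl
      rw [e1, e1, ← hh.1, ← hi]
      rfl
    have hl : ∀ i, _ := fun i => lift_lemma (τ i) m q 1 hm hm3 hq (one_dvd q) (hτ i)
    choose s hs1 hs2 using hl
    let D : ZMod m × ZMod q ≃ ZMod (m * q) := Fintype.equivOfCardEq (by simp [ZMod.card])
    let G : (W × ZMod m) × ZMod q ≃ W × ZMod (m * q) :=
      (Equiv.prodAssoc _ _ _).trans (Equiv.prodCongr (Equiv.refl _) D)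
    let I : Bool × ZMod (m * q) ≃ (Bool × ZMod m) × ZMod q :=
      (Equiv.prodCongr (Equiv.refl _) D.symm).trans (Equiv.prodAssoc _ _ _).symm
    refine ⟨fun i => G.permCongr (s (I i).1 (I i).2), ?_, ?_⟩
    · intro i
      have := (hs1 (I i).1 (I i).2).conj G
      rwa [mul_one] at this
    · intro w w' h y y'
      obtain ⟨i, hi⟩ := hτc w w' h (D.symm y).1 (D.symm y').1
      obtain ⟨d, hd⟩ := hs2 i (w, (D.symm y).1) (D.symm y).2 (D.symm y').2
      refine ⟨I.symm (i, d), ?_⟩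
      simp only [Equiv.apply_symm_apply, Equiv.permCongr_apply]
      have e1 : ∀ w y, G.symm (w, y) = ((w, (D.symm y).1), (D.symm y).2) := fun w y => rfl
      rw [← Equiv.eq_symm_apply, e1, e1, hd, hi]

theorem hwp_finish {V I : Type} [Fintype V] [Fintype I] (v m n r s : ℕ) (hm : 2 ≤ m) (hn : 2 ≤ n)
    (hV : Fintype.card V = v) (hrs : r + s = v - 1) (typ : I → Prop) [DecidablePred typ]
    (hI : Fintype.card I = r + s) (hr : Fintype.card {i // typ i} = r)
    (σ : I → Equiv.Perm V) (h1 : ∀ i, typ i → AllP (σ i) m) (h2 : ∀ i, ¬ typ i → AllP (σ i) n)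
    (cov : ∀ x y, x ≠ y → ∃ i, σ i x = y) : HWPStarSolution v m n r s := by
  classical
  have hs : Fintype.card {i // ¬ typ i} = s := by
    rw [Fintype.card_subtype_compl, hI, hr]; omega
  let E : Fin (r + s) ≃ I :=
    finSumFinEquiv.symm.trans ((Equiv.sumCongr (Fintype.equivFinOfCardEq hr).symm
      (Fintype.equivFinOfCardEq hs).symm).trans (Equiv.sumCompl typ))
  have hE1 : ∀ i : Fin (r + s), (i : ℕ) < r → typ (E i) := by
    intro i hi
    obtain ⟨i, rfl⟩ := finSumFinEquiv.surjective i
    rcases i with i | i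
    · simp [E]
      exact (_ : {i // typ i}).2
    · simp at hi
  have hE2 : ∀ i : Fin (r + s), r ≤ (i : ℕ) → ¬ typ (E i) := by
    intro i hi
    obtain ⟨i, rfl⟩ := finSumFinEquiv.surjective i
    rcases i with i | i
    · simp at hi; omega
    · simp [E]
      exact (_ : {i // ¬ typ i}).2
  have hfix : ∀ i x, σ i x ≠ x := by
    intro i x hx
    by_cases ht : typ i
    · have := (h1 i ht x 1).1 (by simpa using hx)
      have := Nat.le_of_dvd one_pos this
      omega
    · have := (h2 i ht x 1).1 (by simpa using hx)
      have := Nat.le_of_dvd one_pos this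
      omega
  have huniq : ∀ x i j, σ i x = σ j x → i = j := by
    intro x
    let g : I → {y // y ≠ x} := fun i => ⟨σ i x, hfix i x⟩
    have hg : Function.Bijective g := by
      rw [Fintype.bijective_iff_surjective_and_card]
      constructor
      · rintro ⟨y, hy⟩
        obtain ⟨i, hi⟩ := cov x y hy.symm
        exact ⟨i, Subtype.ext hi⟩
      · rw [hI, hrs, ← hV, Fintype.card_subtype_compl]; simp
    intro i j hij
    exact hg.1 (Subtype.ext hij)
  let F := Fintype.equivFinOfCardEq hV
  refine ⟨fun i => F.permCongr (σ (E i)), ?_, ?_, ?_⟩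
  · intro i hi
    exact (allP_iff _ _).1 ((h1 _ (hE1 i hi)).conj F)
  · intro i hi
    exact (allP_iff _ _).1 ((h2 _ (hE2 i hi)).conj F)
  · intro x y hxy
    obtain ⟨i, hi⟩ := cov (F.symm x) (F.symm y) (by simpa using hxy)
    refine ⟨E.symm i, by simp [hi], ?_⟩
    intro j hj
    rw [Equiv.eq_symm_apply]
    apply huniq (F.symm x)
    simp only [Equiv.permCongr_apply] at hj
    rw [hi, ← hj, Equiv.symm_apply_apply]

theorem kts_perm (u : ℕ) : ∃ C : Fin (3 * u + 1) → Equiv.Perm (Fin (6 * u + 3)),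
    (∀ a, AllP (C a) 3) ∧ ∀ p q, p ≠ q → ∃ a, C a p = q ∨ C a q = p := by
  classical
  obtain ⟨c, h1, h2⟩ := kts_all u
  have hne : ∀ a p, c a p ≠ p := by
    intro a p
    let g : Option (Fin (3 * u + 1) × Bool) → Fin (6 * u + 3) := fun o =>
      match o with
      | none => p
      | some (a, false) => c a p
      | some (a, true) => c a (c a p)
    have hg : Function.Bijective g := by
      rw [Fintype.bijective_iff_surjective_and_card]
      constructor
      · intro q
        by_cases hq : p = q
        · exact ⟨none, hq⟩
        · obtain ⟨a, ha | ha⟩ := h2 p q hq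
          · exact ⟨some (a, false), ha⟩
          · refine ⟨some (a, true), ?_⟩
            change c a (c a p) = q
            rw [← ha, h1]
      · simp; ring
    intro h
    have h3 : g (some (a, false)) = g none := h
    have hgi := hg.1
    have := @hgi (some (a, false)) none h3
    simp at this
  have : Fact (Nat.Prime 3) := ⟨Nat.prime_three⟩
  refine ⟨fun a => ⟨c a, fun p => c a (c a p), h1 a, h1 a⟩, ?_, h2⟩
  intro a
  apply allP_prime
  · intro x; exact h1 a x
  · intro x; exact hne a x

theorem hwpStar_odd_construction (m n : ℕ) (hm : 3 ≤ m) (hn : 3 ≤ n)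
    (hmo : Odd m) (hno : Odd n) (h3 : 3 ∣ Nat.lcm m n)
    (h : ∀ r' s' : ℕ, r' + s' = Nat.lcm m n - 1 →
      HWPStarSolution (Nat.lcm m n) m n r' s') :
    ∀ x r s : ℕ, 0 < x → Odd x → r + s = Nat.lcm m n * x - 1 →
      HWPStarSolution (Nat.lcm m n * x) m n r s := by
  classical
  intro x r s hx hxo hrs
  have hodd : Odd (Nat.lcm m n) :=
    Odd.of_dvd_nat (hmo.mul hno) (Nat.lcm_dvd_mul m n)
  have hmd := Nat.dvd_lcm_left m n
  have hnd := Nat.dvd_lcm_right m n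
  generalize Nat.lcm m n = H at *
  obtain ⟨k, rfl⟩ := h3
  obtain ⟨u, rfl⟩ := hxo
  have hk : Odd k := (Nat.odd_mul.1 hodd).2
  have hk0 : 0 < k := hk.pos
  have : NeZero k := ⟨hk0.ne'⟩
  have hrs' : r + s = 2 * k * (3 * u) + (3 * k - 1) := by
    rw [hrs]
    have : 3 * k * (2 * u + 1) = 2 * k * (3 * u) + 3 * k := by ring
    omega
  obtain ⟨A, r', s', hA, hr, hrs1⟩ : ∃ A r' s', A ≤ 3 * u ∧ r = 2 * k * A + r' ∧
      r' + s' = 3 * k - 1 := by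
    by_cases hc : r / (2 * k) ≤ 3 * u
    · refine ⟨r / (2 * k), r % (2 * k), 3 * k - 1 - r % (2 * k), hc, (Nat.div_add_mod _ _).symm, ?_⟩
      have := Nat.mod_lt r (show 0 < 2 * k by omega)
      omega
    · have h1 : 2 * k * (3 * u) ≤ r :=
        (Nat.mul_le_mul_left _ (not_le.1 hc).le).trans (Nat.mul_div_le _ _)
      exact ⟨3 * u, r - 2 * k * (3 * u), s, le_rfl, by omega, by omega⟩
  obtain ⟨C, hC1, hC2⟩ := kts_perm u
  obtain ⟨τ, t1, t2, t3⟩ := h r' s' hrs1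
  have hB1 := fun a : Fin (3 * u) => partB (C a.succ) (hC1 _) k m hk hmo hm hmd
  have hB2 := fun a : Fin (3 * u) => partB (C a.succ) (hC1 _) k n hk hno hn hnd
  choose σ1 p1 q1 using hB1
  choose σ2 p2 q2 using hB2
  obtain ⟨O, e, he⟩ := (hC1 0).orbit
  let D : ZMod 3 × ZMod k ≃ Fin (3 * k) := Fintype.equivOfCardEq (by simp [ZMod.card])
  let E : O × Fin (3 * k) ≃ Fin (6 * u + 3) × ZMod k :=
    (Equiv.prodCongr (Equiv.refl O) D.symm).trans
      ((Equiv.prodAssoc _ _ _).symm.trans (Equiv.prodCongr e.symm (Equiv.refl _)))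
  have hE : ∀ w y, E.symm (w, y) = ((e w).1, D ((e w).2, y)) := fun w y => rfl
  let g : Fin (r' + s') → Equiv.Perm (Fin (6 * u + 3) × ZMod k) := fun i =>
    E.permCongr (Equiv.prodCongr (Equiv.refl O) (τ i))
  have hg : ∀ w w' y y', (e w).1 = (e w').1 → (w, y) ≠ (w', y') → ∃ i, g i (w, y) = (w', y') := by
    intro w w' y y' hw hne
    have hne' : D ((e w).2, y) ≠ D ((e w').2, y') := by
      intro hD
      have := D.injective hD
      simp only [Prod.mk.injEq] at this
      apply hne
      rw [e.injective (Prod.ext hw this.1), this.2]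
    obtain ⟨i, hi, -⟩ := t3 _ _ hne'
    refine ⟨i, ?_⟩
    simp only [g, Equiv.permCongr_apply]
    rw [← Equiv.eq_symm_apply, hE, hE, ← hw, ← hi]
    rfl
  let typ : (Fin (3 * u) × (Bool × ZMod k)) ⊕ Fin (r' + s') → Prop := fun i =>
    match i with
    | .inl a => (a.1 : ℕ) < A
    | .inr j => (j : ℕ) < r'
  let σ : (Fin (3 * u) × (Bool × ZMod k)) ⊕ Fin (r' + s') →
      Equiv.Perm (Fin (6 * u + 3) × ZMod k) := fun i =>
    match i with
    | .inl a => if (a.1 : ℕ) < A then σ1 a.1 a.2 else σ2 a.1 a.2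
    | .inr j => g j
  refine hwp_finish (V := Fin (6 * u + 3) × ZMod k)
    (I := (Fin (3 * u) × (Bool × ZMod k)) ⊕ Fin (r' + s'))
    (3 * k * (2 * u + 1)) m n r s (by omega) (by omega) ?_ hrs typ ?_ ?_ σ ?_ ?_ ?_
  · simp [ZMod.card]; ring
  · rw [hrs', ← hrs1]
    simp [ZMod.card]; ring
  · rw [Fintype.card_congr (Equiv.subtypeSum (p := typ)), Fintype.card_sum, hr]
    congr 1
    · have e1 : {a : Fin (3 * u) × (Bool × ZMod k) // typ (Sum.inl a)} ≃
          {a : Fin (3 * u) // (a : ℕ) < A} × (Bool × ZMod k) :=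
        Equiv.prodSubtypeFstEquivSubtypeProd (p := fun a : Fin (3 * u) => (a : ℕ) < A)
      rw [Fintype.card_congr e1, Fintype.card_prod, Fintype.card_fin_lt_of_le hA]
      simp [ZMod.card]; ring
    · exact Fintype.card_fin_lt_of_le (by omega)
  · rintro (a | j) ht
    · have : σ (.inl a) = σ1 a.1 a.2 := if_pos ht
      rw [this]; exact p1 _ _
    · exact (((allP_iff _ _).2 (t1 j ht)).prod).conj E
  · rintro (a | j) ht
    · have : σ (.inl a) = σ2 a.1 a.2 := if_neg ht
      rw [this]; exact p2 _ _
    · exact (((allP_iff _ _).2 (t2 j (not_lt.1 ht))).prod).conj E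
  · rintro ⟨w, y⟩ ⟨w', y'⟩ hne
    by_cases hw : (e w).1 = (e w').1
    · obtain ⟨i, hi⟩ := hg w w' y y' hw hne
      exact ⟨.inr i, hi⟩
    · obtain ⟨a, ha⟩ := hC2 w w' (by rintro rfl; exact hw rfl)
      rcases Fin.eq_zero_or_eq_succ a with rfl | ⟨a, rfl⟩
      · exfalso
        apply hw
        rcases ha with rfl | rfl <;> rw [he]
      · by_cases hlt : (a : ℕ) < A
        · obtain ⟨i, hi⟩ := q1 a w w' ha y y'
          refine ⟨.inl (a, i), ?_⟩
          have : σ (.inl (a, i)) = σ1 a i := if_pos hlt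
          rw [this, hi]
        · obtain ⟨i, hi⟩ := q2 a w w' ha y y'
          refine ⟨.inl (a, i), ?_⟩
          have : σ (.inl (a, i)) = σ2 a i := if_neg hlt
          rw [this, hi]
end

section
/- (Intermediate claim in the odd construction.) For every odd integer x ≥ 1 there exists a family of permutations σ_1, …, σ_{3(x−1)/2} of Fin x × Fin 3 such that each σ_k is fixed-point-free with all cycles of length 3 and satisfies (σ_k(p)).1 ≠ p.1 for every p, and for every ordered pair (p, q) of elements of Fin x × Fin 3 with p.1 ≠ q.1 there is exactly one index k with σ_k(p) = q or σ_k(q) = p. (That is, the digraph K_x^* ≀ K̄_3 has a K_3^*-factorization into (3x − 3)/2 factors.) -/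
/-- A Kirkman frame of type `2^S`. -/
structure IsFrame {R : Type*} (F : R → R × Bool → R × Bool) (S : Set R) : Prop where
  mem : ∀ p ∈ S, ∀ u : R × Bool, u.1 ∈ S → (F p u).1 ∈ S
  fix : ∀ p ∈ S, ∀ l, F p (p, l) = (p, l)
  cube : ∀ p ∈ S, ∀ u : R × Bool, u.1 ∈ S → F p (F p (F p u)) = u
  hole : ∀ p ∈ S, ∀ u : R × Bool, u.1 ∈ S → u.1 ≠ p → (F p u).1 ≠ u.1
  cover : ∀ u v : R × Bool, u.1 ∈ S → v.1 ∈ S → u.1 ≠ v.1 →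
    ∃! p, p ∈ S ∧ (F p u = v ∨ F p v = u)

def FrameOn {R : Type*} (S : Set R) : Prop := ∃ F, IsFrame F S

def Good (r : ℕ) : Prop := FrameOn {a : ℕ | a < r}

theorem IsFrame.ne {R : Type*} {F : R → R × Bool → R × Bool} {S : Set R} (h : IsFrame F S)
    {p : R} (hp : p ∈ S) {u : R × Bool} (hu : u.1 ∈ S) (hne : u.1 ≠ p) : (F p u).1 ≠ p := by
  intro he
  have h1 : F p u = (p, (F p u).2) := Prod.ext he rfl
  have h2 := h.cube p hp u hu
  rw [h1, h.fix p hp, h.fix p hp] at h2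
  exact hne (by rw [← h2])

theorem FrameOn.transport {A B : Type*} {S : Set A} {T : Set B} (h : FrameOn S)
    (f : A → B) (g : B → A) (hf : ∀ a ∈ S, f a ∈ T) (hg : ∀ b ∈ T, g b ∈ S)
    (hgf : ∀ a ∈ S, g (f a) = a) (hfg : ∀ b ∈ T, f (g b) = b) : FrameOn T := by
  obtain ⟨F, hF⟩ := h
  refine ⟨fun p u => (f (F (g p) (g u.1, u.2)).1, (F (g p) (g u.1, u.2)).2), ?_, ?_, ?_, ?_, ?_⟩
  · intro p hp u hu
    exact hf _ (hF.mem _ (hg _ hp) _ (hg _ hu))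
  · intro p hp l
    simp only [hF.fix _ (hg _ hp), hfg p hp]
  · intro p hp u hu
    have m1 := hF.mem _ (hg _ hp) (g u.1, u.2) (hg _ hu)
    have m2 := hF.mem _ (hg _ hp) _ m1
    simp only [hgf _ m1, Prod.mk.eta, hgf _ m2, hF.cube _ (hg _ hp) (g u.1, u.2) (hg _ hu), hfg _ hu]
  · intro p hp u hu hne he
    have m1 := hF.mem _ (hg _ hp) (g u.1, u.2) (hg _ hu)
    refine hF.hole _ (hg _ hp) (g u.1, u.2) (hg _ hu) ?_ ?_
    · intro h; apply hne; rw [← hfg _ hu, ← hfg _ hp]; exact congrArg f h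
    · simp only at he ⊢
      rw [← hgf _ m1, he]
  · intro u v hu hv hne
    have key : ∀ p ∈ T, ∀ u v : B × Bool, u.1 ∈ T → v.1 ∈ T →
        (((f (F (g p) (g u.1, u.2)).1, (F (g p) (g u.1, u.2)).2) = v) ↔
          F (g p) (g u.1, u.2) = (g v.1, v.2)) := by
      intro p hp u v hu hv
      have m1 := hF.mem _ (hg _ hp) (g u.1, u.2) (hg _ hu)
      constructor
      · intro h
        rw [← h]; simp only [hgf _ m1]
      · intro h
        rw [h]; simp only [hfg _ hv]
    obtain ⟨p, ⟨hp, hp2⟩, huq⟩ := hF.cover (g u.1, u.2) (g v.1, v.2) (hg _ hu) (hg _ hv)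
      (fun h => hne (by rw [← hfg _ hu, ← hfg _ hv]; exact congrArg f h))
    refine ⟨f p, ⟨hf _ hp, ?_⟩, ?_⟩
    · rw [key _ (hf _ hp) u v hu hv, key _ (hf _ hp) v u hv hu, hgf _ hp]
      exact hp2
    · rintro q ⟨hq, hq2⟩
      rw [key _ hq u v hu hv, key _ hq v u hv hu] at hq2
      have := huq (g q) ⟨hg _ hq, hq2⟩
      rw [← this, hfg _ hq]

theorem FrameOn.of_ncard {A B : Type*} {S : Set A} {T : Set B} (h : FrameOn S)
    (hS : S.Finite) (hT : T.Finite) (hc : S.ncard = T.ncard) : FrameOn T := by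
  classical
  have := hS.to_subtype
  have := hT.to_subtype
  obtain ⟨e⟩ : Nonempty (S ≃ T) := Finite.card_eq.1 hc
  rcases S.eq_empty_or_nonempty with rfl | ⟨a0, ha0⟩
  · have hT0 : T = ∅ := by
      rw [Set.ncard_empty] at hc
      exact (Set.ncard_eq_zero hT).1 hc.symm
    subst hT0
    exact ⟨fun _ u => u, by constructor <;> simp⟩
  · refine h.transport (fun a => if ha : a ∈ S then (e ⟨a, ha⟩ : B) else e ⟨a0, ha0⟩)
      (fun b => if hb : b ∈ T then (e.symm ⟨b, hb⟩ : A) else a0) ?_ ?_ ?_ ?_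
    · intro a ha; simp [ha]
    · intro a ha; simp [ha]
    · intro a ha; simp [ha]
    · intro a ha; simp [ha]

theorem ncard_lt (r : ℕ) : ({a : ℕ | a < r} : Set ℕ).ncard = r := by
  have : ({a : ℕ | a < r} : Set ℕ) = (Finset.range r : Set ℕ) := by ext; simp
  rw [this, Set.ncard_coe_finset, Finset.card_range]

theorem Good.on {B : Type*} {T : Set B} {r : ℕ} (h : Good r) (hT : T.Finite)
    (hc : T.ncard = r) : FrameOn T :=
  FrameOn.of_ncard h (Set.finite_lt_nat r) hT (by rw [ncard_lt, hc])

theorem FrameOn.good {B : Type*} {T : Set B} {r : ℕ} (h : FrameOn T) (hT : T.Finite)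
    (hc : T.ncard = r) : Good r :=
  FrameOn.of_ncard h hT (Set.finite_lt_nat r) (by rw [ncard_lt, hc])

theorem good_zero : Good 0 := ⟨fun _ u => u, by constructor <;> simp⟩

theorem good_one : Good 1 := by
  refine ⟨fun _ u => u, ?_, ?_, ?_, ?_, ?_⟩
  · intro p _ u hu; exact hu
  · intro p _ l; rfl
  · intro p _ u _; rfl
  · intro p hp u hu h
    simp only [Set.mem_ofPred_eq] at hp hu
    omega
  · intro u v hu hv h
    simp only [Set.mem_ofPred_eq] at hu hv
    omega

theorem frame_glue {R ι : Type*} (U : Set R) (S : ι → Set R) (hSU : ∀ i, S i ⊆ U)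
    (hF : ∀ i, FrameOn (S i))
    (hu : ∀ p ∈ U, ∀ q ∈ U, p ≠ q → ∃! i, p ∈ S i ∧ q ∈ S i) : FrameOn U := by
  classical
  choose F hF using hF
  have hb : ∃ blk : R → R → Option ι, ∀ p ∈ U, ∀ q ∈ U, p ≠ q →
      ∃ i, blk p q = some i ∧ p ∈ S i ∧ q ∈ S i ∧ ∀ j, p ∈ S j → q ∈ S j → j = i := by
    refine ⟨fun p q => if h : p ∈ U ∧ q ∈ U ∧ p ≠ q then some (hu p h.1 q h.2.1 h.2.2).choose
      else none, ?_⟩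
    intro p hp q hq hne
    have h := (hu p hp q hq hne).choose_spec
    refine ⟨_, by simp only [hp, hq, hne, ne_eq, not_false_eq_true, and_self, dite_true], h.1.1,
      h.1.2, fun j h1 h2 => h.2 j ⟨h1, h2⟩⟩
  obtain ⟨blk, hblk⟩ := hb
  let G : R → R × Bool → R × Bool := fun p u => if u.1 = p then u else
    match blk p u.1 with
    | some i => F i p u
    | none => u
  -- evaluation of G inside a block
  have G0 : ∀ p l, G p (p, l) = (p, l) := by intro p l; simp [G]
  have G1 : ∀ i p u, p ∈ S i → u.1 ∈ S i → G p u = F i p u := by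
    intro i p u hp hu'
    by_cases h : u.1 = p
    · subst h
      rw [show u = (u.1, u.2) from rfl, G0]
      exact ((hF i).fix _ hp _).symm
    · obtain ⟨j, hj, h1, h2, h3⟩ := hblk p (hSU i hp) u.1 (hSU i hu') (fun e => h e.symm)
      have : i = j := h3 i hp hu'
      subst this
      simp only [G, if_neg h, hj]
  have G2 : ∀ p ∈ U, ∀ u : R × Bool, u.1 ∈ U → u.1 ≠ p →
      ∃ i, p ∈ S i ∧ u.1 ∈ S i := by
    intro p hp u hu' hne
    obtain ⟨j, hj, h1, h2, h3⟩ := hblk p hp u.1 hu' (fun e => hne e.symm)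
    exact ⟨j, h1, h2⟩
  refine ⟨G, ?_, ?_, ?_, ?_, ?_⟩
  · intro p hp u hu'
    by_cases h : u.1 = p
    · simp only [G, if_pos h]; exact hu'
    · obtain ⟨i, h1, h2⟩ := G2 p hp u hu' h
      rw [G1 i p u h1 h2]
      exact hSU i ((hF i).mem _ h1 _ h2)
  · intro p _ l; exact G0 p l
  · intro p hp u hu'
    by_cases h : u.1 = p
    · subst h
      rw [show u = (u.1, u.2) from rfl]
      simp only [G0]
    · obtain ⟨i, h1, h2⟩ := G2 p hp u hu' h
      have m1 := (hF i).mem _ h1 _ h2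
      rw [G1 i p u h1 h2, G1 i p _ h1 m1, G1 i p _ h1 ((hF i).mem _ h1 _ m1)]
      exact (hF i).cube _ h1 _ h2
  · intro p hp u hu' h
    obtain ⟨i, h1, h2⟩ := G2 p hp u hu' h
    rw [G1 i p u h1 h2]
    exact (hF i).hole _ h1 _ h2 h
  · intro u v hu' hv hne
    obtain ⟨i, ⟨hi1, hi2⟩, hi3⟩ := hu u.1 hu' v.1 hv hne
    have aux : ∀ p ∈ U, ∀ u v : R × Bool, u.1 ∈ S i → v.1 ∈ S i → u.1 ≠ v.1 →
        (∀ j, u.1 ∈ S j ∧ v.1 ∈ S j → j = i) → G p u = v → p ∈ S i := by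
      intro p hp u v h1 h2 hne hj he
      by_cases h : u.1 = p
      · rw [← h]; exact h1
      · obtain ⟨j, k1, k2⟩ := G2 p hp u (hSU i h1) h
        rw [G1 j p u k1 k2] at he
        have := (hF j).mem _ k1 _ k2
        rw [he] at this
        rw [← hj j ⟨k2, this⟩]; exact k1
    obtain ⟨p, ⟨hp, hp2⟩, hpu⟩ := (hF i).cover u v hi1 hi2 hne
    refine ⟨p, ⟨hSU i hp, ?_⟩, ?_⟩
    · rw [G1 i p u hp hi1, G1 i p v hp hi2]; exact hp2
    · rintro q ⟨hq, hq2⟩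
      have hqS : q ∈ S i := by
        rcases hq2 with h | h
        · exact aux q hq u v hi1 hi2 hne hi3 h
        · exact aux q hq v u hi2 hi1 hne.symm (fun j hj => hi3 j ⟨hj.2, hj.1⟩) h
      refine hpu q ⟨hqS, ?_⟩
      rw [G1 i q u hqS hi1, G1 i q v hqS hi2] at hq2; exact hq2
def allN (n : ℕ) (P : ℕ → Bool) : Bool :=
  Nat.rec true (fun k ih => cond (P k) ih false) n

def cntN (n : ℕ) (P : ℕ → Bool) : ℕ :=
  Nat.rec 0 (fun k ih => cond (P k) (ih + 1) ih) n

theorem allN_spec {n : ℕ} {P : ℕ → Bool} (h : allN n P = true) : ∀ k < n, P k = true := by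
  induction n with
  | zero => intro k hk; omega
  | succ n ih =>
    have h' : cond (P n) (allN n P) false = true := h
    cases hP : P n with
    | false => rw [hP] at h'; simp at h'
    | true =>
      rw [hP] at h'
      intro k hk
      rcases Nat.lt_succ_iff_lt_or_eq.1 hk with h1 | h1
      · exact ih h' k h1
      · rw [h1]; exact hP

theorem cntN_zero {n : ℕ} {P : ℕ → Bool} (h : cntN n P = 0) : ∀ k < n, P k = false := by
  induction n with
  | zero => intro k hk; omega
  | succ n ih =>
    have h' : cond (P n) (cntN n P + 1) (cntN n P) = 0 := h
    cases hP : P n with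
    | true => rw [hP] at h'; simp at h'
    | false =>
      rw [hP] at h'
      intro k hk
      rcases Nat.lt_succ_iff_lt_or_eq.1 hk with h1 | h1
      · exact ih h' k h1
      · rw [h1]; exact hP

theorem cntN_one {n : ℕ} {P : ℕ → Bool} (h : cntN n P = 1) : ∃! k, k < n ∧ P k = true := by
  induction n with
  | zero => exact absurd h (by simp [cntN])
  | succ n ih =>
    have h' : cond (P n) (cntN n P + 1) (cntN n P) = 1 := h
    cases hP : P n with
    | true =>
      rw [hP] at h'
      have h0 : cntN n P = 0 := by simpa using h'
      refine ⟨n, ⟨by omega, hP⟩, ?_⟩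
      rintro k ⟨hk, hk2⟩
      rcases Nat.lt_succ_iff_lt_or_eq.1 hk with h1 | h1
      · rw [cntN_zero h0 k h1] at hk2; simp at hk2
      · exact h1
    | false =>
      rw [hP] at h'
      obtain ⟨k, ⟨hk, hk2⟩, hk3⟩ := ih h'
      refine ⟨k, ⟨by omega, hk2⟩, ?_⟩
      rintro j ⟨hj, hj2⟩
      rcases Nat.lt_succ_iff_lt_or_eq.1 hj with h1 | h1
      · exact hk3 j ⟨h1, hj2⟩
      · subst h1; rw [hP] at hj2; simp at hj2

def chk (r z : ℕ) (Fn : ℕ → ℕ → ℕ) (t : ℕ → ℕ) : Bool :=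
  (allN r fun p => allN (2 * r) fun u =>
    Nat.blt (Fn p u) (2 * r) && Nat.beq (Fn p (Fn p (Fn p u))) u &&
    cond (Nat.beq (u / 2) p) (Nat.beq (Fn p u) u) (! Nat.beq (Fn p u / 2) (u / 2)) &&
    Nat.beq (Fn (t p) (2 * t (u / 2) + u % 2)) (2 * t (Fn p u / 2) + Fn p u % 2)) &&
  (allN r fun a => Nat.blt (t a) r && allN r fun b => ! Nat.beq (t a) (t b) || Nat.beq a b) &&
  (allN (r - 1) fun a => Nat.blt a z || (Nat.blt 0 a && Nat.beq (t (a - 1)) a)) &&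
  (allN (2 * z) fun u => allN (2 * r) fun v => Nat.beq (v / 2) (u / 2) ||
    Nat.beq (cntN r fun p => Nat.beq (Fn p u) v || Nat.beq (Fn p v) u) 1)

theorem good_of_chk (r z : ℕ) (Fn : ℕ → ℕ → ℕ) (t : ℕ → ℕ) (h : chk r z Fn t = true) : Good r := by
  simp only [chk, Bool.and_eq_true] at h
  obtain ⟨⟨⟨h1, h2⟩, h3⟩, h4⟩ := h
  have h1' := fun p hp u hu => allN_spec (allN_spec h1 p hp) u hu
  have h2' := allN_spec h2
  have h3' := allN_spec h3
  have h4' := fun u hu v hv => allN_spec (allN_spec h4 u hu) v hv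
  clear h1 h2 h3 h4
  simp only [Bool.and_eq_true, Bool.or_eq_true, Nat.blt_eq, Nat.beq_eq] at h1' h2' h3' h4'
  have e1 : ∀ p < r, ∀ u < 2 * r, Fn p u < 2 * r := fun p hp u hu => (h1' p hp u hu).1.1.1
  have e2 : ∀ p < r, ∀ u < 2 * r, Fn p (Fn p (Fn p u)) = u := fun p hp u hu => (h1' p hp u hu).1.1.2
  have e3 : ∀ p < r, ∀ u < 2 * r, u / 2 = p → Fn p u = u := by
    intro p hp u hu he
    have := (h1' p hp u hu).1.2
    rw [show Nat.beq (u / 2) p = true from by simp [he]] at this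
    simpa using this
  have e4 : ∀ p < r, ∀ u < 2 * r, u / 2 ≠ p → Fn p u / 2 ≠ u / 2 := by
    intro p hp u hu he
    have := (h1' p hp u hu).1.2
    rw [show Nat.beq (u / 2) p = false from by
      rw [Bool.eq_false_iff]; intro hh; exact he (Nat.eq_of_beq_eq_true hh)] at this
    intro hh
    rw [hh] at this
    simp at this
  have e5 : ∀ p < r, ∀ u < 2 * r,
      Fn (t p) (2 * t (u / 2) + u % 2) = 2 * t (Fn p u / 2) + Fn p u % 2 :=
    fun p hp u hu => (h1' p hp u hu).2
  have t1 : ∀ a < r, t a < r := fun a ha => (h2' a ha).1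
  have t2 : ∀ a < r, ∀ b < r, t a = t b → a = b := by
    intro a ha b hb he
    have := allN_spec (h2' a ha).2 b hb
    simpa [he] using this
  have t3 : ∀ b < r, ∃ a < r, t a = b := by
    intro b hb
    have hs : Finset.image t (Finset.range r) = Finset.range r := by
      apply Finset.eq_of_subset_of_card_le
      · intro y hy
        simp only [Finset.mem_image, Finset.mem_range] at hy ⊢
        obtain ⟨a, ha, rfl⟩ := hy
        exact t1 a ha
      · rw [Finset.card_image_of_injOn]
        intro a ha b hb he
        simp only [Finset.coe_range, Set.mem_Iio] at ha hb
        exact t2 a ha b hb he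
    have : b ∈ Finset.image t (Finset.range r) := by rw [hs]; simpa using hb
    simpa using this
  -- the covering property at a point
  have cov : ∀ a, a + 1 < r ∨ a < z ∧ a < r → ∀ u < 2 * r, u / 2 = a → ∀ v < 2 * r, v / 2 ≠ a →
      ∃! p, p < r ∧ (Fn p u = v ∨ Fn p v = u) := by
    intro a
    induction a using Nat.strong_induction_on with
    | _ a ih =>
    intro ha u hu hua v hv hva
    by_cases haz : a < z
    · have := h4' u (by omega) v hv
      rcases this with h | h
      · omega
      · have := cntN_one h
        simpa only [Bool.or_eq_true, Nat.beq_eq] using this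
    · have h3 := h3' a (by omega)
      have ⟨h31, h32⟩ := h3.resolve_left haz
      obtain ⟨w, hw, hwv⟩ := t3 (v / 2) (by omega)
      have hr : r - 1 + 1 = r := by omega
      have hwa : w ≠ a - 1 := by intro h; rw [h] at hwv; omega
      have := ih (a - 1) (by omega) (by omega) (2 * (a - 1) + u % 2) (by omega) (by omega)
        (2 * w + v % 2) (by omega) (by omega)
      obtain ⟨p, ⟨hp, hp2⟩, hp3⟩ := this
      have key : ∀ q < r, ∀ x < r, ∀ y < r, ∀ u < 2 * r, ∀ v < 2 * r, t x = u / 2 → t y = v / 2 →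
          (Fn q (2 * x + u % 2) = 2 * y + v % 2 ↔ Fn (t q) u = v) := by
        intro q hq x hx y hy u hu v hv hxu hyv
        have := e5 q hq (2 * x + u % 2) (by omega)
        rw [show (2 * x + u % 2) / 2 = x by omega, show (2 * x + u % 2) % 2 = u % 2 by omega, hxu,
          show 2 * (u / 2) + u % 2 = u by omega] at this
        have hlt := e1 q hq (2 * x + u % 2) (by omega)
        constructor
        · intro h
          rw [h, show (2 * y + v % 2) / 2 = y by omega, hyv] at this
          omega
        · intro h
          rw [h] at this
          have hh := t2 (Fn q (2 * x + u % 2) / 2) (by omega) y hy (by omega)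
          omega
      refine ⟨t p, ⟨t1 p hp, ?_⟩, ?_⟩
      · rw [← key p hp (a - 1) (by omega) w hw u hu v hv (by omega) hwv,
          ← key p hp w hw (a - 1) (by omega) v hv u hu hwv (by omega)]
        exact hp2
      · rintro q ⟨hq, hq2⟩
        obtain ⟨q', hq', rfl⟩ := t3 q hq
        rw [← key q' hq' (a - 1) (by omega) w hw u hu v hv (by omega) hwv,
          ← key q' hq' w hw (a - 1) (by omega) v hv u hu hwv (by omega)] at hq2
        rw [hp3 q' ⟨hq', hq2⟩]
  have cov2 : ∀ u < 2 * r, ∀ v < 2 * r, u / 2 ≠ v / 2 →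
      ∃! p, p < r ∧ (Fn p u = v ∨ Fn p v = u) := by
    intro u hu v hv hne
    by_cases h : u / 2 + 1 < r
    · exact cov (u / 2) (Or.inl h) u hu rfl v hv hne.symm
    · have := cov (v / 2) (Or.inl (by omega)) v hv rfl u hu hne
      simpa only [or_comm] using this
  let en : ℕ × Bool → ℕ := fun u => 2 * u.1 + u.2.toNat
  let de : ℕ → ℕ × Bool := fun j => (j / 2, Nat.beq (j % 2) 1)
  have de1 : ∀ j, (de j).1 = j / 2 := fun _ => rfl
  have en1 : ∀ u, en u / 2 = u.1 := by
    rintro ⟨a, l⟩; cases l <;> simp [en]; omega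
  have ende : ∀ j, en (de j) = j := by
    intro j
    rcases Nat.mod_two_eq_zero_or_one j with h | h
    · simp only [en, de, h, show Nat.beq 0 1 = false from rfl, Bool.toNat_false]; omega
    · simp only [en, de, h, show Nat.beq 1 1 = true from rfl, Bool.toNat_true]; omega
  have deen : ∀ u, de (en u) = u := by
    rintro ⟨a, l⟩; cases l
    · simp only [en, de, Bool.toNat_false, Prod.mk.injEq]
      refine ⟨by omega, ?_⟩
      rw [show (2 * a + 0) % 2 = 0 by omega]; rfl
    · simp only [en, de, Bool.toNat_true, Prod.mk.injEq]
      refine ⟨by omega, ?_⟩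
      rw [show (2 * a + 1) % 2 = 1 by omega]; rfl
  have enlt : ∀ u, u.1 < r → en u < 2 * r := by
    intro u hu; have := en1 u; omega
  refine ⟨fun p u => de (Fn p (en u)), ?_, ?_, ?_, ?_, ?_⟩
  · intro p hp u hu
    simp only [Set.mem_ofPred_eq] at *
    have := e1 p hp _ (enlt u hu)
    rw [de1]; omega
  · intro p hp l
    simp only [Set.mem_ofPred_eq] at *
    rw [e3 p hp _ (enlt (p, l) hp) (en1 _), deen]
  · intro p hp u hu
    simp only [Set.mem_ofPred_eq] at *
    rw [ende, ende, e2 p hp _ (enlt u hu), deen]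
  · intro p hp u hu hne
    simp only [Set.mem_ofPred_eq] at *
    have := e4 p hp _ (enlt u hu) (by rw [en1]; exact hne)
    rw [en1] at this
    exact this
  · intro u v hu hv hne
    simp only [Set.mem_ofPred_eq] at *
    have := cov2 _ (enlt u hu) _ (enlt v hv) (by rw [en1, en1]; exact hne)
    have key : ∀ p u v, (de (Fn p (en u)) = v ↔ Fn p (en u) = en v) := by
      intro p u v
      constructor
      · intro h; rw [← h, ende]
      · intro h; rw [h, deen]
    simpa only [key] using this

def tbl (C i : ℕ) : ℕ := C / 2 ^ (8 * i) % 256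

/-- Development of a starter modulo `n`. -/
def stG (n C p u : ℕ) : ℕ := (tbl C ((u + 2 * (n - p)) % (2 * n)) + 2 * p) % (2 * n)

/-- Development of a starter modulo `n` with an infinite point `n`. -/
def stF (n C p u : ℕ) : ℕ :=
  cond (Nat.blt p n)
    ((fun j => cond (Nat.blt j (2 * n)) ((j + 2 * p) % (2 * n)) j)
      (tbl C (cond (Nat.blt u (2 * n)) ((u + 2 * (n - p)) % (2 * n)) u)))
    (cond (Nat.blt u (2 * n)) ((u + 2 * (n / 3)) % (2 * n)) u)

def stT (n a : ℕ) : ℕ := cond (Nat.blt a n) ((a + 1) % n) a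

theorem good_4 : Good 4 :=
  good_of_chk 4 1 (stF 3
    0x402060307050100) (stT 3) (by decide +kernel)

theorem good_7 : Good 7 :=
  good_of_chk 7 1 (stG 7
    0xa0506090d020c0307080b040100) (stT 7) (by decide +kernel)

theorem good_19 : Good 19 :=
  good_of_chk 19 1 (stG 19
    0x2100e09250d1c1404071d1e2324030b061a0a22161817190813110c12201f05151b0f210100) (stT 19) (by decide +kernel)

theorem good_22 : Good 22 :=
  good_of_chk 22 1 (stF 21
    0x1a040214050d061e0a0b22242a2008280c1529250e262b1c171d23031b13160f211110122718071f09190100) (stT 21) (by decide +kernel)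

theorem good_25 : Good 25 :=
  good_of_chk 25 1 (stG 25
    0x1f03021714190930181b0a07281631242c0523042e29250b211c1d222b132d272f26061e0f200812151a100d0c0e2a110100) (stT 25) (by decide +kernel)

theorem good_28 : Good 28 :=
  good_of_chk 28 1 (stF 27
    0x34222e113509082d213310070c0b020a2f0536282c2527160620322b26151a042a1e1903311837301f29141c17241d13230f1b120d0e0100) (stT 27) (by decide +kernel)

theorem good_31 : Good 31 :=
  good_of_chk 31 1 (stG 31
    0x38293d03213b1727200f180e37151c3c1034350b2e0a1a32390d1209252b2d302a072336241131051e283a1b331f2c2619221d140c022f16060813040100) (stT 31) (by decide +kernel)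

theorem good_34 : Good 34 :=
  good_of_chk 34 1 (stF 33
    0x402207050f3d2412020310171a3804201c0b42213b3c41340c08330d1e30323e2731262c0e23282906131b2a363a3f39372e1f1415111d0925352b182d19430a162f0100) (stT 33) (by decide +kernel)

theorem good_37 : Good 37 :=
  good_of_chk 37 1 (stG 37
    0x46103a25181f2015221138232a1e32394707410c443c1c092c0d240a33173e1d4206453649132b37401b35343d2d43483027312e29282f0b211a120319260f163b023f140e0805040100) (stT 37) (by decide +kernel)

theorem good_40 : Good 40 :=
  good_of_chk 40 1 (stF 39
    0x1a3416220f2d1c3b38194b210a052a31414802473e3d303c07434f1b0d4a120b0c4c3249043f152f421d2923102e0846094d182c4e352026331e250337401f244514172839361144132b27060e3a0100) (stT 39) (by decide +kernel)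

theorem good_43 : Good 43 :=
  good_of_chk 43 1 (stG 43
    0x38143e1d260d272b441f4e22101e280b3413532336171c434c502e484f3352153f215549460c472d3b4a4b03422f390f1654292c45063d3a3735400925301b1941244d051a3251203c18312a1102120e07080a040100) (stT 43) (by decide +kernel)

theorem good_46 : Good 46 :=
  good_of_chk 46 1 (stF 45
    0x62e424b241b0d070c49281944154f0b485104582f2b0e4d303108032a10472017230f3c5b5045543b4359323d1f4c571c293f4a553a052c260956385a530246214e361d333e1a22394125161335271e2d401412343711520a180100) (stT 45) (by decide +kernel)

theorem good_79 : Good 79 :=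
  good_of_chk 79 1 (stG 79
    0x8e8b963346406a610e4b425a9c1a1e2f783b91135e455626972d4a124408892b38921c41943d4e1b8a177a09603987863a2588859a2e8382521481809b316d7f76907d7c842c956f7e2a181f2210700d999879676c168c4d6b63361d734c43588d15475f4f5b743f8f54696871119d32593e55343c647b6e494872193050653593275d5c510b37242928756621200c577707530223620f03060a05040100) (stT 79) (by decide +kernel)

theorem good_10 : Good 10 :=
  good_of_chk 10 10 (fun p u => tbl
    0x131205010311100f04020a00080b0e060c090d0703041110010913060e120b0c0f08000a0d050702010213060f0e05070d100c12090a0b00040811030500030713080d0c100e110a0b120f0109040206040f0212100300130b0a0d010e11080c07060509020d041300120e010c0f09081103060705100b0a000c1205021304110f01100d070609080a0b030e0701000306020f0e111312100a0d0504080c090b08050a0004011110130d0f0b120e07090302060c0603080411100205120c130f0d090a0e0b070100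
    (20 * p + u)) (fun a => a) (by decide +kernel)
/-- Blocks of 4-GDDs of type `3^4` (`t = 0`) and `3^5` (`t = 1`). -/
def Bk (t : Bool) (k : Fin 15) (i : Fin 3) (c : Fin 5) : Bool :=
  Nat.beq (0x990285089108a1203205143018510845142124215240521090910492000000000000000000000002a408a824304310312091414844488249 / 2 ^ (((t.toNat * 15 + k.val) * 5 + c.val) * 3 + i.val) % 2) 1

theorem Bk_cov : ∀ (t : Bool) (i j : Fin 3) (c d : Fin 5), c ≠ d → (t = false → c ≠ 4 ∧ d ≠ 4) →
    ∃ k, (Bk t k i c = true ∧ Bk t k j d = true) ∧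
      ∀ k', Bk t k' i c = true ∧ Bk t k' j d = true → k' = k := by
  decide +kernel

theorem Bk_tr : ∀ (t : Bool) (k : Fin 15) (i j : Fin 3) (c : Fin 5),
    Bk t k i c = true → Bk t k j c = true → i = j := by
  decide +kernel

theorem Bk_four : ∀ (k : Fin 15) (i : Fin 3), Bk false k i 4 = false := by
  decide +kernel

theorem Bk_card : ∀ (t : Bool) (k : Fin 15),
    (Finset.univ.filter fun ic : Fin 3 × Fin 5 => Bk t k ic.1 ic.2 = true).card = 0 ∨
    (Finset.univ.filter fun ic : Fin 3 × Fin 5 => Bk t k ic.1 ic.2 = true).card = 4 := by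
  decide +kernel

def IsTD {A : Type} (f : Fin 5 → A × A → A) : Prop :=
  ∀ c d, c ≠ d → ∀ a b, ∃! x, f c x = a ∧ f d x = b

theorem td_step {A : Type} [Fintype A] (f : Fin 5 → A × A → A) (hf : IsTD f) (t : ℕ)
    (ht : t ≤ Fintype.card A) (h4 : Good 4) (hm : Good (3 * Fintype.card A + 1))
    (htg : Good (3 * t + 1)) : Good (3 * (4 * Fintype.card A + t) + 1) := by
  classical
  obtain ⟨T, -, hT⟩ := Finset.exists_subset_card_eq (s := (Finset.univ : Finset A)) (n := t)
    (by simpa using ht)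
  let V : Fin 5 → Finset A := fun c => if c = 4 then T else Finset.univ
  let U : Set (Option (Fin 3 × Fin 5 × A)) := {p | ∀ i c a, p = some (i, c, a) → a ∈ V c}
  let S : Fin 5 ⊕ (A × A) × Fin 15 → Set (Option (Fin 3 × Fin 5 × A)) := fun s =>
    match s with
    | Sum.inl c => {p | ∀ i c' a, p = some (i, c', a) → c' = c ∧ a ∈ V c}
    | Sum.inr (x, k) => {p | ∃ i c, p = some (i, c, f c x) ∧ Bk (decide (f 4 x ∈ T)) k i c = true}
  have hnU : none ∈ U := by simp [U]
  have hsU : ∀ i c a, some (i, c, a) ∈ U ↔ a ∈ V c := by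
    intro i c a
    constructor
    · intro h; exact h i c a rfl
    · intro h i' c' a' e
      cases e; exact h
  have hnl : ∀ c, none ∈ S (Sum.inl c) := by intro c i c' a h; cases h
  have hsl : ∀ i c' a c, some (i, c', a) ∈ S (Sum.inl c) ↔ c' = c ∧ a ∈ V c := by
    intro i c' a c
    constructor
    · intro h; exact h i c' a rfl
    · intro h i' c'' a' e
      cases e; exact h
  have hnr : ∀ x k, none ∉ S (Sum.inr (x, k)) := by
    rintro x k ⟨i, c, h, -⟩; cases h
  have hsr : ∀ i c a x k, some (i, c, a) ∈ S (Sum.inr (x, k)) ↔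
      a = f c x ∧ Bk (decide (f 4 x ∈ T)) k i c = true := by
    intro i c a x k
    constructor
    · rintro ⟨i', c', h, h2⟩
      cases h; exact ⟨rfl, h2⟩
    · rintro ⟨rfl, h⟩; exact ⟨i, c, rfl, h⟩
  have hVB : ∀ x k i c, Bk (decide (f 4 x ∈ T)) k i c = true → f c x ∈ V c := by
    intro x k i c h
    by_cases hc : c = 4
    · subst hc
      by_cases h4 : f 4 x ∈ T
      · simpa [V] using h4
      · simp only [h4, decide_false, Bk_four] at h
        cases h
    · simp [V, hc]
  have hVc : ∀ c, Good (3 * (V c).card + 1) := by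
    intro c
    by_cases hc : c = 4
    · simpa [V, hc, hT] using htg
    · simpa [V, hc] using hm
  have cardins : ∀ W : Finset (Fin 3 × Fin 5 × A),
      (insert none (W.map Function.Embedding.some)).card = W.card + 1 := by
    intro W
    rw [Finset.card_insert_of_notMem (by simp), Finset.card_map]
  have hUf : FrameOn U := by
    refine frame_glue U S ?_ ?_ ?_
    · rintro (c | ⟨x, k⟩)
      · rintro (_ | ⟨i, c', a⟩) h
        · exact hnU
        · rw [hsl] at h; rw [hsU, h.1]; exact h.2
      · rintro (_ | ⟨i, c', a⟩) h
        · exact hnU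
        · rw [hsr] at h; rw [hsU, h.1]; exact hVB _ _ _ _ h.2
    · rintro (c | ⟨x, k⟩)
      · refine (hVc c).on (Set.toFinite _) ?_
        have : S (Sum.inl c) = ((insert none (((Finset.univ : Finset (Fin 3)) ×ˢ ({c} ×ˢ V c)).map
            Function.Embedding.some) : Finset (Option (Fin 3 × Fin 5 × A))) : Set _) := by
          ext (_ | ⟨i, c', a⟩)
          · simp [hnl]
          · rw [hsl]; simp [and_comm, eq_comm]
        rw [this, Set.ncard_coe_finset, cardins]
        simp
      · have hS : S (Sum.inr (x, k)) = (((Finset.univ.filter fun ic : Fin 3 × Fin 5 =>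
            Bk (decide (f 4 x ∈ T)) k ic.1 ic.2 = true).image
            (fun ic => some (ic.1, ic.2, f ic.2 x)) : Finset (Option (Fin 3 × Fin 5 × A))) : Set _) := by
          ext (_ | ⟨i, c', a⟩)
          · simp [hnr]
          · rw [hsr]
            simp only [Finset.coe_image, Set.mem_image, Finset.coe_filter, Finset.mem_univ, true_and,
              Set.mem_ofPred_eq, Option.some.injEq, Prod.mk.injEq, Prod.exists]
            constructor
            · rintro ⟨rfl, h⟩; exact ⟨i, c', h, rfl, rfl, rfl⟩
            · rintro ⟨i, c', h, rfl, rfl, rfl⟩; exact ⟨rfl, h⟩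
        have hc : (S (Sum.inr (x, k))).ncard = (Finset.univ.filter fun ic : Fin 3 × Fin 5 =>
            Bk (decide (f 4 x ∈ T)) k ic.1 ic.2 = true).card := by
          rw [hS, Set.ncard_coe_finset, Finset.card_image_of_injective]
          rintro ⟨i, c⟩ ⟨j, d⟩ h
          simp only [Option.some.injEq, Prod.mk.injEq] at h
          ext <;> simp [h.1, h.2.1]
        rcases Bk_card (decide (f 4 x ∈ T)) k with h | h
        · exact good_zero.on (Set.toFinite _) (hc.trans h)
        · exact h4.on (Set.toFinite _) (hc.trans h)
    · rintro (_ | ⟨i, c, a⟩) hp (_ | ⟨j, d, b⟩) hq hne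
      · exact absurd rfl hne
      · rw [hsU] at hq
        refine ⟨Sum.inl d, ⟨hnl d, (hsl _ _ _ _).2 ⟨rfl, hq⟩⟩, ?_⟩
        rintro (e | ⟨x, k⟩) ⟨h1, h2⟩
        · rw [hsl] at h2; rw [h2.1]
        · exact absurd h1 (hnr _ _)
      · rw [hsU] at hp
        refine ⟨Sum.inl c, ⟨(hsl _ _ _ _).2 ⟨rfl, hp⟩, hnl c⟩, ?_⟩
        rintro (e | ⟨x, k⟩) ⟨h1, h2⟩
        · rw [hsl] at h1; rw [h1.1]
        · exact absurd h2 (hnr _ _)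
      · rw [hsU] at hp hq
        by_cases hcd : c = d
        · subst hcd
          refine ⟨Sum.inl c, ⟨(hsl _ _ _ _).2 ⟨rfl, hp⟩, (hsl _ _ _ _).2 ⟨rfl, hq⟩⟩, ?_⟩
          rintro (e | ⟨x, k⟩) ⟨h1, h2⟩
          · rw [hsl] at h1; rw [h1.1]
          · exfalso
            rw [hsr] at h1 h2
            apply hne
            rw [h1.1, h2.1, Bk_tr _ _ _ _ _ h1.2 h2.2]
        · obtain ⟨x, ⟨hx1, hx2⟩, hx3⟩ := hf c d hcd a b
          have hh : decide (f 4 x ∈ T) = false → c ≠ 4 ∧ d ≠ 4 := by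
            intro h
            have h' : f 4 x ∉ T := by simpa using h
            constructor
            · rintro rfl; apply h'; rw [hx1]; simpa [V] using hp
            · rintro rfl; apply h'; rw [hx2]; simpa [V] using hq
          obtain ⟨k, ⟨hk1, hk2⟩, hk3⟩ := Bk_cov (decide (f 4 x ∈ T)) i j c d hcd hh
          refine ⟨Sum.inr (x, k), ⟨(hsr _ _ _ _ _).2 ⟨hx1.symm, hk1⟩,
            (hsr _ _ _ _ _).2 ⟨hx2.symm, hk2⟩⟩, ?_⟩
          rintro (e | ⟨y, k'⟩) ⟨h1, h2⟩
          · rw [hsl] at h1 h2; exact absurd (h1.1.trans h2.1.symm) hcd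
          · rw [hsr] at h1 h2
            have : y = x := hx3 y ⟨h1.1.symm, h2.1.symm⟩
            subst this
            rw [hk3 k' ⟨h1.2, h2.2⟩]
  refine hUf.good (Set.toFinite _) ?_
  have : U = ((insert none (((Finset.univ : Finset (Fin 3)) ×ˢ
      (Finset.univ.sigma V).map (Equiv.sigmaEquivProd (Fin 5) A).toEmbedding).map
      Function.Embedding.some) : Finset (Option (Fin 3 × Fin 5 × A))) : Set _) := by
    ext (_ | ⟨i, c', a⟩)
    · simp [hnU]
    · rw [hsU]; simp
  rw [this, Set.ncard_coe_finset, cardins, Finset.card_product, Finset.card_map, Finset.card_sigma,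
    Fin.sum_univ_five]
  simp [V, hT]
  ring

theorem td_ring {A : Type} [CommRing A] (α β : A) (h1 : IsUnit α) (h2 : IsUnit β)
    (h3 : IsUnit (α - 1)) (h4 : IsUnit (β - 1)) (h5 : IsUnit (α - β)) :
    ∃ f : Fin 5 → A × A → A, IsTD f := by
  let v : Fin 5 → A := ![1, 0, 1, 1, 1]
  let w : Fin 5 → A := ![0, 1, 1, α, β]
  refine ⟨fun c x => v c * x.1 + w c * x.2, ?_⟩
  have key : ∀ c d, IsUnit (v c * w d - v d * w c) → ∀ a b, ∃! x : A × A,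
      v c * x.1 + w c * x.2 = a ∧ v d * x.1 + w d * x.2 = b := by
    intro c d hu a b
    obtain ⟨e, he⟩ := hu.exists_left_inv
    refine ⟨(e * (a * w d - b * w c), e * (v c * b - v d * a)), ⟨?_, ?_⟩, ?_⟩
    · linear_combination a * he
    · linear_combination b * he
    · rintro ⟨x, y⟩ ⟨hx, hy⟩
      simp only at hx hy
      ext
      · simp only; linear_combination (-x) * he + e * w d * hx - e * w c * hy
      · simp only; linear_combination (-y) * he + e * v c * hy - e * v d * hx
  have h3' : IsUnit (1 - α) := by rw [← neg_sub]; exact h3.neg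
  have h4' : IsUnit (1 - β) := by rw [← neg_sub]; exact h4.neg
  have h5' : IsUnit (β - α) := by rw [← neg_sub]; exact h5.neg
  intro c d hcd
  apply key
  fin_cases c <;> fin_cases d <;>
    first
    | exact absurd rfl hcd
    | simp [v, w, h1, h2, h3, h4, h5, h3', h4', h5']

theorem td_zmod (m : ℕ) (h2 : m % 2 = 1) (h3 : m % 3 ≠ 0) :
    ∃ f : Fin 5 → ZMod m × ZMod m → ZMod m, IsTD f := by
  have u2 : IsUnit (2 : ZMod m) := by
    have : IsUnit ((2 : ℕ) : ZMod m) := by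
      rw [ZMod.isUnit_iff_coprime, Nat.Prime.coprime_iff_not_dvd Nat.prime_two]
      omega
    exact_mod_cast this
  have u3 : IsUnit (3 : ZMod m) := by
    have : IsUnit ((3 : ℕ) : ZMod m) := by
      rw [ZMod.isUnit_iff_coprime, Nat.Prime.coprime_iff_not_dvd Nat.prime_three]
      omega
    exact_mod_cast this
  refine td_ring 2 (-1) u2 isUnit_one.neg ?_ ?_ ?_
  · norm_num
  · rw [show (-1 - 1 : ZMod m) = -2 by norm_num]; exact u2.neg
  · rw [show (2 - -1 : ZMod m) = 3 by norm_num]; exact u3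

theorem td_field {A : Type} [Field A] [Fintype A] (h : 4 ≤ Fintype.card A) :
    ∃ f : Fin 5 → A × A → A, IsTD f := by
  classical
  obtain ⟨a, ha⟩ := Finset.exists_mem_notMem_of_card_lt_card (s := ({0, 1} : Finset A))
    (t := Finset.univ) (lt_of_le_of_lt Finset.card_le_two (by rw [Finset.card_univ]; omega))
  obtain ⟨b, hb⟩ := Finset.exists_mem_notMem_of_card_lt_card (s := ({0, 1, a} : Finset A))
    (t := Finset.univ) (lt_of_le_of_lt Finset.card_le_three (by rw [Finset.card_univ]; omega))
  simp only [Finset.mem_univ, Finset.mem_insert, Finset.mem_singleton, not_or, true_and] at ha hb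
  refine td_ring a b ?_ ?_ ?_ ?_ ?_
  · exact isUnit_iff_ne_zero.2 ha.1
  · exact isUnit_iff_ne_zero.2 hb.1
  · exact (sub_ne_zero.2 ha.2).isUnit
  · exact (sub_ne_zero.2 hb.2.1).isUnit
  · exact (sub_ne_zero.2 (Ne.symm hb.2.2)).isUnit
def rdB (j : Fin 6) (k : Fin 4) : ZMod 81 :=
  (![![0, 1, 3, 7], ![0, 5, 13, 30], ![0, 10, 31, 47], ![0, 11, 33, 52], ![0, 12, 32, 58],
    ![0, 14, 38, 53]] : Fin 6 → Fin 4 → ZMod 81) j k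

theorem rd_ex : ∀ d : ZMod 81, 9 * d ≠ 0 → ∃ j k k', rdB j k - rdB j k' = d := by
  decide +kernel

theorem rd_inj : ∀ j k k' i l l', rdB j k - rdB j k' = rdB i l - rdB i l' → k ≠ k' →
    j = i ∧ k = l ∧ k' = l' := by
  decide +kernel

theorem rd_nine : ∀ j k k', k ≠ k' → 9 * (rdB j k - rdB j k') ≠ 0 := by
  decide +kernel

theorem good_82 (h4 : Good 4) (h10 : Good 10) : Good 82 := by
  classical
  let S : ZMod 81 ⊕ Fin 6 × ZMod 81 → Set (Option (ZMod 81)) := fun s =>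
    match s with
    | Sum.inl c => {p | ∀ a, p = some a → 9 * a = c}
    | Sum.inr (j, s) => {p | ∃ k, p = some (s + rdB j k)}
  have hnl : ∀ c, none ∈ S (Sum.inl c) := by intro c a h; cases h
  have hsl : ∀ a c, some a ∈ S (Sum.inl c) ↔ 9 * a = c := by
    intro a c
    constructor
    · intro h; exact h a rfl
    · intro h a' e; cases e; exact h
  have hnr : ∀ j s, none ∉ S (Sum.inr (j, s)) := by
    rintro j s ⟨k, h⟩; cases h
  have hsr : ∀ a j s, some a ∈ S (Sum.inr (j, s)) ↔ ∃ k, a = s + rdB j k := by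
    intro a j s
    constructor
    · rintro ⟨k, h⟩; cases h; exact ⟨k, rfl⟩
    · rintro ⟨k, rfl⟩; exact ⟨k, rfl⟩
  have hcard : ∀ c : ZMod 81, (Finset.univ.filter fun a : ZMod 81 => 9 * a = c).card = 0 ∨
      (Finset.univ.filter fun a : ZMod 81 => 9 * a = c).card = 9 := by
    decide +kernel
  have hinj : ∀ j, Function.Injective (rdB j) := by
    intro j k k' h
    by_contra hne
    exact rd_nine j k k' hne (by rw [h]; ring)
  have hU : FrameOn (Set.univ : Set (Option (ZMod 81))) := by
    refine frame_glue _ S (fun _ => Set.subset_univ _) ?_ ?_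
    · rintro (c | ⟨j, s⟩)
      · have hS : S (Sum.inl c) = ((insert none ((Finset.univ.filter
            fun a : ZMod 81 => 9 * a = c).map Function.Embedding.some) :
            Finset (Option (ZMod 81))) : Set _) := by
          ext (_ | a)
          · simp [hnl]
          · rw [hsl]; simp
        have hc : (S (Sum.inl c)).ncard = (Finset.univ.filter fun a : ZMod 81 => 9 * a = c).card + 1 := by
          rw [hS, Set.ncard_coe_finset, Finset.card_insert_of_notMem (by simp), Finset.card_map]
        rcases hcard c with h | h
        · exact good_one.on (Set.toFinite _) (by rw [hc, h])
        · exact h10.on (Set.toFinite _) (by rw [hc, h])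
      · refine h4.on (Set.toFinite _) ?_
        have hS : S (Sum.inr (j, s)) = ((Finset.univ.image (fun k => some (s + rdB j k)) :
            Finset (Option (ZMod 81))) : Set _) := by
          ext (_ | a)
          · simp [hnr]
          · rw [hsr]; simp [eq_comm]
        rw [hS, Set.ncard_coe_finset, Finset.card_image_of_injective]
        · rfl
        · intro k k' h
          simp only [Option.some.injEq, add_right_inj] at h
          exact hinj j h
    · rintro (_ | a) - (_ | b) - hne
      · exact absurd rfl hne
      · refine ⟨Sum.inl (9 * b), ⟨hnl _, (hsl _ _).2 rfl⟩, ?_⟩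
        rintro (e | ⟨j, s⟩) ⟨h1, h2⟩
        · rw [hsl] at h2; rw [h2]
        · exact absurd h1 (hnr _ _)
      · refine ⟨Sum.inl (9 * a), ⟨(hsl _ _).2 rfl, hnl _⟩, ?_⟩
        rintro (e | ⟨j, s⟩) ⟨h1, h2⟩
        · rw [hsl] at h1; rw [h1]
        · exact absurd h2 (hnr _ _)
      · have hab : a ≠ b := fun h => hne (by rw [h])
        by_cases hd : 9 * a = 9 * b
        · refine ⟨Sum.inl (9 * a), ⟨(hsl _ _).2 rfl, (hsl _ _).2 hd.symm⟩, ?_⟩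
          rintro (e | ⟨j, s⟩) ⟨h1, h2⟩
          · rw [hsl] at h1; rw [h1]
          · exfalso
            rw [hsr] at h1 h2
            obtain ⟨k, rfl⟩ := h1
            obtain ⟨k', rfl⟩ := h2
            refine rd_nine j k k' (fun h => hab (by rw [h])) ?_
            linear_combination hd
        · obtain ⟨j, k, k', h⟩ := rd_ex (a - b) (fun h => hd (by linear_combination h))
          have hkk : k ≠ k' := by
            rintro rfl
            rw [sub_self] at h
            exact hab (sub_eq_zero.1 h.symm)
          refine ⟨Sum.inr (j, a - rdB j k), ⟨(hsr _ _ _).2 ⟨k, by ring⟩,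
            (hsr _ _ _).2 ⟨k', by linear_combination h⟩⟩, ?_⟩
          rintro (e | ⟨i, s⟩) ⟨h1, h2⟩
          · rw [hsl] at h1 h2; exact absurd (h1.trans h2.symm) hd
          · rw [hsr] at h1 h2
            obtain ⟨l, hl⟩ := h1
            obtain ⟨l', hl'⟩ := h2
            obtain ⟨rfl, rfl, rfl⟩ := rd_inj j k k' i l l' (by rw [h, hl, hl']; ring) hkk
            rw [hl, add_sub_cancel_right]
  refine hU.good (Set.toFinite _) ?_
  rw [Set.ncard_univ, Nat.card_eq_fintype_card, Fintype.card_option, ZMod.card]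

theorem td_use {A : Type} [Fintype A] (hA : ∃ f : Fin 5 → A × A → A, IsTD f) {m N : ℕ}
    (hm : Fintype.card A = m) (h1 : 4 * m ≤ N) (h2 : N ≤ 5 * m) (h4 : Good 4)
    (ih : ∀ k < N, Good (3 * k + 1)) (hpos : 0 < m) : Good (3 * N + 1) := by
  obtain ⟨f, hf⟩ := hA
  have := td_step f hf (N - 4 * m) (by omega) h4 (by rw [hm]; exact ih m (by omega))
    (ih _ (by omega))
  rw [hm] at this
  rwa [show 4 * m + (N - 4 * m) = N by omega] at this

theorem td_use_zmod {m N : ℕ} (h2 : m % 2 = 1) (h3 : m % 3 ≠ 0) (h1 : 4 * m ≤ N)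
    (h5 : N ≤ 5 * m) (h4 : Good 4)
    (ih : ∀ k < N, Good (3 * k + 1)) : Good (3 * N + 1) := by
  haveI : NeZero m := ⟨by omega⟩
  exact td_use (td_zmod m h2 h3) (ZMod.card m) h1 h5 h4 ih (by omega)

theorem td_use_gf {p k m N : ℕ} (hp : p.Prime) (hk : k ≠ 0) (hm : p ^ k = m) (hm4 : 4 ≤ m)
    (h1 : 4 * m ≤ N) (h5 : N ≤ 5 * m) (h4 : Good 4)
    (ih : ∀ k < N, Good (3 * k + 1)) : Good (3 * N + 1) := by
  haveI : Fact p.Prime := ⟨hp⟩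
  haveI : Fintype (GaloisField p k) := Fintype.ofFinite _
  have hc : Fintype.card (GaloisField p k) = m := by
    rw [← Nat.card_eq_fintype_card, GaloisField.card p k hk, hm]
  exact td_use (td_field (by omega)) hc h1 h5 h4 ih (by omega)

theorem good_all (N : ℕ) : Good (3 * N + 1) := by
  induction N using Nat.strong_induction_on with
  | _ N ih =>
  by_cases hN : N < 68
  · by_cases h1 : 52 ≤ N ∧ N ≤ 65
    · exact td_use_zmod (m := 13) (by norm_num) (by norm_num) (by omega) (by omega) good_4 ih
    by_cases h2 : 44 ≤ N ∧ N ≤ 55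
    · exact td_use_zmod (m := 11) (by norm_num) (by norm_num) (by omega) (by omega) good_4 ih
    by_cases h3 : 28 ≤ N ∧ N ≤ 35
    · exact td_use_zmod (m := 7) (by norm_num) (by norm_num) (by omega) (by omega) good_4 ih
    by_cases h4 : 20 ≤ N ∧ N ≤ 25
    · exact td_use_zmod (m := 5) (by norm_num) (by norm_num) (by omega) (by omega) good_4 ih
    by_cases h5 : 4 ≤ N ∧ N ≤ 5
    · exact td_use_zmod (m := 1) (by norm_num) (by norm_num) (by omega) (by omega) good_4 ih
    by_cases h6 : 16 ≤ N ∧ N ≤ 20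
    · exact td_use_gf (p := 2) (k := 2) (m := 4) Nat.prime_two (by norm_num) (by norm_num)
        (by norm_num) (by omega) (by omega) good_4 ih
    by_cases h7 : 36 ≤ N ∧ N ≤ 45
    · exact td_use_gf (p := 3) (k := 2) (m := 9) Nat.prime_three (by norm_num) (by norm_num)
        (by norm_num) (by omega) (by omega) good_4 ih
    by_cases h8 : 64 ≤ N ∧ N ≤ 80
    · exact td_use_gf (p := 2) (k := 4) (m := 16) Nat.prime_two (by norm_num) (by norm_num)
        (by norm_num) (by omega) (by omega) good_4 ih
    have : N = 0 ∨ N = 1 ∨ N = 2 ∨ N = 3 ∨ N = 6 ∨ N = 7 ∨ N = 8 ∨ N = 9 ∨ N = 10 ∨ N = 11 ∨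
      N = 12 ∨ N = 13 ∨ N = 14 ∨ N = 15 ∨ N = 26 ∨ N = 27 := by omega
    rcases this with rfl | rfl | rfl | rfl | rfl | rfl | rfl | rfl | rfl | rfl | rfl | rfl | rfl |
      rfl | rfl | rfl
    · exact good_one
    · exact good_4
    · exact good_7
    · exact good_10
    · exact good_19
    · exact good_22
    · exact good_25
    · exact good_28
    · exact good_31
    · exact good_34
    · exact good_37
    · exact good_40
    · exact good_43
    · exact good_46
    · exact good_79
    · exact good_82 good_4 good_10
  · obtain ⟨m, hm2, hm3, h1, h2⟩ : ∃ m, m % 2 = 1 ∧ m % 3 ≠ 0 ∧ 4 * m ≤ N ∧ N ≤ 5 * m := by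
      have h6 : N / 4 % 6 < 6 := Nat.mod_lt _ (by norm_num)
      by_cases e0 : N / 4 % 6 = 0
      · exact ⟨N / 4 - 1, by omega, by omega, by omega, by omega⟩
      by_cases e5 : N / 4 % 6 = 5
      · exact ⟨N / 4, by omega, by omega, by omega, by omega⟩
      · exact ⟨N / 4 / 6 * 6 + 1, by omega, by omega, by omega, by omega⟩
    exact td_use_zmod hm2 hm3 h1 h2 good_4 ih

theorem kts (r : ℕ) (h : Good r) :
    ∃ G : Fin r → Option (Fin r × Bool) → Option (Fin r × Bool),
      (∀ p u, G p (G p (G p u)) = u) ∧ (∀ p u, G p u ≠ u) ∧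
      (∀ u v, u ≠ v → ∃! p, G p u = v ∨ G p v = u) := by
  obtain ⟨F, hF⟩ : FrameOn (Set.univ : Set (Fin r)) :=
    h.on (Set.toFinite _) (by rw [Set.ncard_univ, Nat.card_fin])
  have hne : ∀ p u, u.1 ≠ p → (F p u).1 ≠ p := fun p u hu => hF.ne (Set.mem_univ _) (Set.mem_univ _) hu
  let G : Fin r → Option (Fin r × Bool) → Option (Fin r × Bool) := fun p u =>
    match u with
    | none => some (p, false)
    | some (a, l) => if a = p then (if l then none else some (p, true)) else some (F p (a, l))
  have g0 : ∀ p, G p none = some (p, false) := fun p => rfl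
  have g1 : ∀ p, G p (some (p, false)) = some (p, true) := fun p => by simp [G]
  have g2 : ∀ p, G p (some (p, true)) = none := fun p => by simp [G]
  have g3 : ∀ p u, u.1 ≠ p → G p (some u) = some (F p u) := fun p u hu => by
    simp only [G, if_neg hu]
  have hfix : ∀ p u, u.1 ≠ p → (F p u).1 ≠ u.1 := fun p u hu =>
    hF.hole p (Set.mem_univ _) u (Set.mem_univ _) hu
  refine ⟨G, ?_, ?_, ?_⟩
  · rintro p (_ | ⟨a, l⟩)
    · rw [g0, g1, g2]
    · by_cases ha : a = p
      · subst ha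
        cases l
        · rw [g1, g2, g0]
        · rw [g2, g0, g1]
      · rw [g3 p (a, l) ha, g3 p _ (hne p (a, l) ha), g3 p _ (hne p _ (hne p (a, l) ha)),
          hF.cube p (Set.mem_univ _) _ (Set.mem_univ _)]
  · rintro p (_ | ⟨a, l⟩) h
    · rw [g0] at h; cases h
    · by_cases ha : a = p
      · subst ha
        cases l
        · rw [g1] at h; simp at h
        · rw [g2] at h; cases h
      · rw [g3 p (a, l) ha] at h
        have := hfix p (a, l) ha
        rw [Option.some.inj h] at this
        exact this rfl
  · -- characterisation of the special arcs
    have hn : ∀ p a l, (G p none = some (a, l) ∨ G p (some (a, l)) = none) ↔ p = a := by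
      intro p a l
      by_cases ha : a = p
      · subst ha
        cases l
        · simp [g0]
        · simp [g2]
      · rw [g0, g3 p (a, l) ha]
        constructor
        · rintro (h | h)
          · exact congrArg Prod.fst (Option.some.inj h)
          · cases h
        · intro h; exact absurd h.symm ha
    have hs : ∀ p a l l', l ≠ l' → (G p (some (a, l)) = some (a, l') ↔ p = a ∧ l = false) := by
      intro p a l l' hl
      by_cases ha : a = p
      · subst ha
        cases l
        · cases l'
          · exact absurd rfl hl
          · simp [g1]
        · simp [g2]
      · rw [g3 p (a, l) ha]
        have := hfix p (a, l) ha
        constructor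
        · intro h
          rw [Option.some.inj h] at this
          exact absurd rfl this
        · rintro ⟨h, -⟩; exact absurd h.symm ha
    have hd : ∀ p u v, u.1 ≠ v.1 → (G p (some u) = some v ↔ F p u = v) := by
      intro p u v huv
      by_cases hu : u.1 = p
      · have e1 : F p u = u := by
          obtain ⟨a, l⟩ := u
          simp only at hu
          subst hu
          exact hF.fix a (Set.mem_univ _) l
        rw [e1]
        constructor
        · intro h
          obtain ⟨a, l⟩ := u
          simp only at hu huv
          subst hu
          cases l
          · rw [g1] at h; rw [← Option.some.inj h] at huv; exact absurd rfl huv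
          · rw [g2] at h; cases h
        · intro h; exact absurd (congrArg Prod.fst h) huv
      · rw [g3 p u hu, Option.some.injEq]
    rintro (_ | ⟨a, l⟩) (_ | ⟨b, l'⟩) huv
    · exact absurd rfl huv
    · simp only [hn]; exact existsUnique_eq
    · simp only [or_comm, hn]; exact existsUnique_eq
    · by_cases hab : a = b
      · subst hab
        have hl : l ≠ l' := fun h => huv (by rw [h])
        simp only [hs _ a l l' hl, hs _ a l' l hl.symm]
        refine ⟨a, ?_, ?_⟩
        · cases l <;> cases l' <;> simp at hl ⊢
        · rintro q (h | h) <;> exact h.1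
      · simp only [hd _ (a, l) (b, l') hab, hd _ (b, l') (a, l) (Ne.symm hab)]
        simpa using hF.cover (a, l) (b, l') (Set.mem_univ _) (Set.mem_univ _) hab

theorem orbit_equiv {V : Type} [Fintype V] (g : V → V) (h3 : ∀ u, g (g (g u)) = u)
    (hne : ∀ u, g u ≠ u) (x : ℕ) (hc : Fintype.card V = 3 * x) :
    ∃ e : V ≃ Fin x × Fin 3, ∀ u v, (e u).1 = (e v).1 ↔ (u = v ∨ g u = v ∨ g v = u) := by
  classical
  let s : Setoid V :=
    { r := fun u v => u = v ∨ g u = v ∨ g v = u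
      iseqv := by
        refine ⟨fun u => Or.inl rfl, ?_, ?_⟩
        · rintro u v (h | h | h)
          · exact Or.inl h.symm
          · exact Or.inr (Or.inr h)
          · exact Or.inr (Or.inl h)
        · rintro u v w (rfl | rfl | rfl) (h | h | h)
          · exact Or.inl h
          · exact Or.inr (Or.inl h)
          · exact Or.inr (Or.inr h)
          · exact Or.inr (Or.inl h)
          · right; right; rw [← h, h3]
          · left
            rw [← h3 u, ← h, h3]
          · subst h; exact Or.inr (Or.inr rfl)
          · exact Or.inl h
          · right; left; rw [← h, h3] }
  let φ : Quotient s × Fin 3 → V := fun q => g^[q.2.val] q.1.out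
  have hφ : ∀ q i, (Quotient.mk s (φ (q, i))) = q := by
    intro q i
    conv_rhs => rw [← Quotient.out_eq q]
    apply Quotient.sound
    change φ (q, i) = q.out ∨ g (φ (q, i)) = q.out ∨ g q.out = φ (q, i)
    fin_cases i
    · left; rfl
    · right; right; rfl
    · right; left; exact h3 _
  have hbij : Function.Bijective φ := by
    constructor
    · rintro ⟨q, i⟩ ⟨q', j⟩ h
      have hq : q = q' := by rw [← hφ q i, h, hφ]
      subst hq
      have n1 := hne q.out
      have n2 := hne (g q.out)
      have n3 : g (g q.out) ≠ q.out := by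
        intro h; have := h3 q.out; rw [h] at this; exact n1 this
      congr 1
      fin_cases i <;> fin_cases j <;> simp [φ] at h ⊢
      all_goals first
        | exact n1 h
        | exact n1 h.symm
        | exact n2 h
        | exact n2 h.symm
        | exact n3 h
        | exact n3 h.symm
    · intro v
      have : (Quotient.mk s v).out = v ∨ g (Quotient.mk s v).out = v ∨ g v = (Quotient.mk s v).out :=
        Quotient.exact (Quotient.out_eq (Quotient.mk s v))
      rcases this with h | h | h
      · exact ⟨(Quotient.mk s v, 0), h⟩
      · exact ⟨(Quotient.mk s v, 1), h⟩
      · refine ⟨(Quotient.mk s v, 2), ?_⟩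
        change g (g (Quotient.mk s v).out) = v
        rw [← h, h3]
  let E := Equiv.ofBijective φ hbij
  have hQ : Fintype.card (Quotient s) = x := by
    have := Fintype.card_congr E
    rw [Fintype.card_prod, Fintype.card_fin] at this
    omega
  let ψ : Quotient s ≃ Fin x := Fintype.equivFinOfCardEq hQ
  refine ⟨E.symm.trans (Equiv.prodCongr ψ (Equiv.refl _)), ?_⟩
  intro u v
  have hE : ∀ u, (E.symm u).1 = Quotient.mk s u := by
    intro u
    rw [← hφ (E.symm u).1 (E.symm u).2]
    congr 1
    exact E.apply_symm_apply u
  have : ((ψ (E.symm u).1 = ψ (E.symm v).1) ↔ (u = v ∨ g u = v ∨ g v = u)) := by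
    rw [ψ.injective.eq_iff, hE, hE, Quotient.eq]
    rfl
  exact this

theorem wreath_K3star_factorization (x : ℕ) (hx : 1 ≤ x) (hxo : Odd x) :
    ∃ σ : Fin (3 * (x - 1) / 2) → Equiv.Perm (Fin x × Fin 3),
      (∀ k p, Function.minimalPeriod ⇑(σ k) p = 3) ∧
      (∀ k p, (σ k p).1 ≠ p.1) ∧
      (∀ p q : Fin x × Fin 3, p.1 ≠ q.1 → ∃! k, σ k p = q ∨ σ k q = p) := by
  obtain ⟨N, rfl⟩ := hxo
  obtain ⟨G, h3, hne, hcov⟩ := kts (3 * N + 1) (good_all N)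
  obtain ⟨e, he⟩ := orbit_equiv (G 0) (h3 0) (hne 0) (2 * N + 1) (by
    rw [Fintype.card_option, Fintype.card_prod, Fintype.card_fin, Fintype.card_bool]; ring)
  have hidx : 3 * (2 * N + 1 - 1) / 2 = 3 * N := by omega
  let P : Fin (3 * N + 1) → Equiv.Perm (Option (Fin (3 * N + 1) × Bool)) := fun p =>
    ⟨G p, fun u => G p (G p u), fun u => h3 p u, fun u => h3 p u⟩
  let ix : Fin (3 * (2 * N + 1 - 1) / 2) → Fin (3 * N + 1) := fun k => (Fin.cast hidx k).succ
  have hix0 : ∀ k, ix k ≠ 0 := fun k => Fin.succ_ne_zero _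
  have hixi : Function.Injective ix := by
    intro a b h
    exact Fin.cast_injective hidx (Fin.succ_injective _ h)
  have hixs : ∀ p, p ≠ 0 → ∃ k, ix k = p := by
    intro p hp
    obtain ⟨j, rfl⟩ := Fin.exists_succ_eq.2 hp
    exact ⟨Fin.cast hidx.symm j, by simp [ix]⟩
  let σ : Fin (3 * (2 * N + 1 - 1) / 2) → Equiv.Perm (Fin (2 * N + 1) × Fin 3) := fun k =>
    (e.symm.trans (P (ix k))).trans e
  have hσ : ∀ k p, σ k p = e (G (ix k) (e.symm p)) := fun _ _ => rfl
  have hσ' : ∀ k p q, σ k p = q ↔ G (ix k) (e.symm p) = e.symm q := by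
    intro k p q
    rw [hσ, ← Equiv.eq_symm_apply]
  refine ⟨σ, ?_, ?_, ?_⟩
  · intro k p
    haveI : Fact (Nat.Prime 3) := ⟨Nat.prime_three⟩
    apply Function.minimalPeriod_eq_prime
    · change σ k (σ k (σ k p)) = p
      simp only [hσ, Equiv.symm_apply_apply, h3, Equiv.apply_symm_apply]
    · intro h
      have h' : σ k p = p := h
      rw [hσ'] at h'
      exact hne _ _ h'
  · intro k p h
    set u := e.symm p with hu
    have hp : p = e u := by rw [hu, Equiv.apply_symm_apply]
    rw [hσ, ← hu, hp, he] at h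
    have hcv := hcov u (G (ix k) u) (hne _ _).symm
    rcases h with h | h
    · exact hne _ _ h
    · exact hix0 k (hcv.unique (Or.inl rfl) h.symm)
  · intro p q hpq
    have hpq' : e.symm p ≠ e.symm q := fun h => hpq (by rw [e.symm.injective h])
    obtain ⟨j, hj, hju⟩ := hcov _ _ hpq'
    have hj0 : j ≠ 0 := by
      rintro rfl
      apply hpq
      have := (he (e.symm p) (e.symm q)).2 (Or.inr hj)
      simpa using this
    obtain ⟨k, rfl⟩ := hixs j hj0
    refine ⟨k, ?_, ?_⟩
    · simp only [hσ']; exact hj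
    · intro k' hk'
      simp only [hσ'] at hk'
      exact hixi (hju _ hk')
end
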